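/- Let k be a field of characteristic zero. Then the group Aut(k^2) of polynomial automorphisms of the affine plane, i.e. the group of k-algebra automorphisms of the polynomial ring k[x,y], satisfies the strong Tits alternative: every subgroup of Aut(k^2) either contains a nonabelian free subgroup or contains a solvable subgroup of finite index. -/

import Mathlib

/-- A group contains a nonabelian free subgroup if it has a subgroup isomorphic to the
free group on two generators. -/
def ContainsNonabelianFree (G : Type*) [Group G] : Prop :=
  ∃ K : Subgroup G, Nonempty (↥K ≃* FreeGroup (Fin 2))

/-- A group is virtually solvable if it contains a solvable subgroup of finite index. -/
def IsVirtuallySolvable (G : Type*) [Group G] : Prop :=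
  ∃ K : Subgroup G, K.FiniteIndex ∧ IsSolvable ↥K

/-- A group satisfies the strong Tits alternative if every subgroup contains a nonabelian
free subgroup or is virtually solvable. -/
def StrongTitsAlternative (G : Type*) [Group G] : Prop :=
  ∀ H : Subgroup G, ContainsNonabelianFree ↥H ∨ IsVirtuallySolvable ↥H

/-!
`Aut(k²)` acts without inversions on the tree whose vertices are the images `φ • ⟨1, x, y⟩` and
`φ • ⟨1, x⟩` of two spaces of polynomials, adjacent when one properly contains the other. It is a
tree because a height function, defined by degrees, has a unique smaller neighbour at every vertex
but the root: one of `deg φ(x)` and `deg φ(y)` divides the other, and the larger one drops when a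
multiple of a power of one coordinate is subtracted from the other, since the constancy of the
Jacobian makes their leading exponents proportional. For the divisibility, let `f = φ⁻¹(x)`. The
operators `f ↦ y ∂f/∂y - j f` kill the leading monomials of `f` one at a time, each raising
`deg φ(f)` by at most `deg φ(x) + deg φ(y) - 2`; if neither degree divides the other, too few
leading monomials are available for `φ(f) = x` to have degree one.

In a group acting on a tree with edge stabilizers of bounded derived length, a hyperbolic element
has north-south dynamics between the two ends of its axis. Ping-pong with a conjugate gives a free
group unless a subgroup of finite index fixes an end, and the stabilizer of an end is solvable, as
a commutator fixes all far points of a ray. Without hyperbolic elements, either a vertex is fixed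
or finitely many elements always fix an edge, so that the group is solvable. The stabilizer of
`⟨1, x⟩` is solvable and that of `⟨1, x, y⟩` is the affine group, which maps to `GL₂(k)` with
solvable kernel.

In `GL₂` over an algebraically closed field, suppose first that some eigenvalue ratio `r` has
infinite order. A countable field containing `r` embeds in a normed field with `‖r‖ ≠ 1`, and
ping-pong on the two eigenlines gives a free group unless every matrix has a zero entry in an
eigenbasis. Otherwise all eigenvalue ratios are roots of unity, so that suitably normalized traces
are `2 - 4 sin²`; norms of such numbers show that a ratio of order at least seven forces a zero
entry in every matrix, and if all orders are at most six then the traces take finitely many values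
and the group is finite modulo scalars.
-/

open scoped Pointwise commutatorElement Function

/-- The dichotomy of the Tits alternative for the group `G` itself, not for its subgroups. -/
def TitsAlternative (G : Type*) [Group G] : Prop :=
  ContainsNonabelianFree G ∨ IsVirtuallySolvable G

/-! ### Groups and ping-pong -/

section GroupTheory

variable {G H : Type*} [Group G] [Group H]

theorem ContainsNonabelianFree.of_injective (f : FreeGroup (Fin 2) →* G)
    (hf : Function.Injective f) : ContainsNonabelianFree G :=
  ⟨f.range, ⟨(MonoidHom.ofInjective hf).symm⟩⟩

theorem ContainsNonabelianFree.exists_injective (h : ContainsNonabelianFree G) :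
    ∃ f : FreeGroup (Fin 2) →* G, Function.Injective f := by
  obtain ⟨K, ⟨e⟩⟩ := h
  exact ⟨K.subtype.comp e.symm.toMonoidHom, K.subtype_injective.comp e.symm.injective⟩

theorem ContainsNonabelianFree.map (f : G →* H) (hf : Function.Injective f)
    (h : ContainsNonabelianFree G) : ContainsNonabelianFree H := by
  obtain ⟨i, hi⟩ := h.exists_injective
  exact .of_injective (f.comp i) (hf.comp hi)

theorem ContainsNonabelianFree.of_surjective (f : G →* H) (hf : Function.Surjective f)
    (h : ContainsNonabelianFree H) : ContainsNonabelianFree G := by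
  obtain ⟨i, hi⟩ := h.exists_injective
  choose s hs using hf
  let j : FreeGroup (Fin 2) →* G := FreeGroup.lift fun n ↦ s (i (FreeGroup.of n))
  have hj : f.comp j = i := by
    ext n
    simp [j, hs]
  refine .of_injective j (Function.Injective.of_comp (f := f) ?_)
  rwa [← MonoidHom.coe_comp, hj]

theorem IsVirtuallySolvable.of_isSolvable [Group.IsSolvable G] : IsVirtuallySolvable G :=
  ⟨⊤, inferInstance, (inferInstance : Group.IsSolvable (⊤ : Subgroup G))⟩

theorem IsVirtuallySolvable.of_surjective (f : G →* H) (hf : Function.Surjective f)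
    [Group.IsSolvable f.ker] (h : IsVirtuallySolvable H) : IsVirtuallySolvable G := by
  obtain ⟨K, hK, hs⟩ := h
  have : Group.IsSolvable K := hs
  have hker : f.ker ≤ K.comap f := Subgroup.comap_mono bot_le
  refine ⟨K.comap f, ⟨?_⟩, Group.isSolvable_of_ker_le_range (Subgroup.inclusion hker)
    (f.subgroupComap K) fun x hx ↦ ⟨⟨x, congrArg Subtype.val hx⟩, rfl⟩⟩
  rw [Subgroup.index_comap_of_surjective _ hf]
  exact hK.index_ne_zero

theorem TitsAlternative.of_range (f : G →* H) [hf : Group.IsSolvable f.ker]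
    (h : TitsAlternative f.range) : TitsAlternative G := by
  rw [← MonoidHom.ker_rangeRestrict] at hf
  exact h.imp (.of_surjective _ f.rangeRestrict_surjective)
    (.of_surjective _ f.rangeRestrict_surjective)

theorem exists_finset_of_mem_derivedSeries {n : ℕ} {g : G} (hg : g ∈ derivedSeries G n) :
    ∃ S : Finset G, ∀ B : Subgroup G, (S : Set G) ⊆ B →
      g ∈ (derivedSeries B n).map B.subtype := by
  classical
  induction n generalizing g with
  | zero => exact ⟨{g}, fun B hB ↦ by simpa using hB⟩
  | succ n ih =>
    rw [derivedSeries_succ, Subgroup.commutator_def] at hg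
    induction hg using Subgroup.closure_induction with
    | mem x hx =>
      obtain ⟨a, ha, b, hb, rfl⟩ := hx
      obtain ⟨S, hS⟩ := ih ha
      obtain ⟨T, hT⟩ := ih hb
      refine ⟨S ∪ T, fun B hB ↦ ?_⟩
      rw [Finset.coe_union, Set.union_subset_iff] at hB
      rw [derivedSeries_succ, Subgroup.map_commutator]
      exact Subgroup.commutator_mem_commutator (hS B hB.1) (hT B hB.2)
    | one => exact ⟨∅, fun B _ ↦ one_mem _⟩
    | mul x y _ _ hx hy =>
      obtain ⟨S, hS⟩ := hx
      obtain ⟨T, hT⟩ := hy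
      refine ⟨S ∪ T, fun B hB ↦ ?_⟩
      rw [Finset.coe_union, Set.union_subset_iff] at hB
      exact mul_mem (hS B hB.1) (hT B hB.2)
    | inv x _ hx =>
      obtain ⟨S, hS⟩ := hx
      exact ⟨S, fun B hB ↦ inv_mem (hS B hB)⟩

theorem derivedSeries_eq_bot_of_forall_finset {n : ℕ}
    (h : ∀ S : Finset G, ∃ B : Subgroup G, (S : Set G) ⊆ B ∧ derivedSeries B n = ⊥) :
    derivedSeries G n = ⊥ := by
  refine (Subgroup.eq_bot_iff_forall _).2 fun g hg ↦ ?_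
  obtain ⟨S, hS⟩ := exists_finset_of_mem_derivedSeries hg
  obtain ⟨B, hSB, hB⟩ := h S
  simpa [hB] using hS B hSB

theorem derivedSeries_eq_bot_of_injective (f : G →* H) (hf : Function.Injective f) {n : ℕ}
    (h : derivedSeries H n = ⊥) : derivedSeries G n = ⊥ := by
  have hle := map_derivedSeries_le_derivedSeries f n
  rwa [h, le_bot_iff, Subgroup.map_eq_bot_iff_of_injective _ hf] at hle

theorem derivedSeries_iSup_eq_bot {ι : Type*} [Nonempty ι] {K : ι → Subgroup G}
    (hK : Directed (· ≤ ·) K) {n : ℕ} (h : ∀ i, derivedSeries (K i) n = ⊥) :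
    derivedSeries ↥(⨆ i, K i) n = ⊥ := by
  refine derivedSeries_eq_bot_of_forall_finset fun S ↦ ?_
  choose i hi using fun x : ↥(⨆ i, K i) ↦ (Subgroup.mem_iSup_of_directed hK).1 x.2
  classical
  obtain ⟨j, hj⟩ := hK.finset_le (S.image i)
  refine ⟨(K j).comap (Subgroup.subtype _), fun x hx ↦ hj _ (Finset.mem_image_of_mem i hx) (hi x),
    derivedSeries_eq_bot_of_injective ((Subgroup.subtype _).subgroupComap (K j)) ?_ (h j)⟩
  exact fun x y hxy ↦ Subtype.ext (Subtype.ext (congrArg (fun z : K j ↦ (z : G)) hxy))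

theorem isSolvable_of_commutator_le {K : Subgroup G} [Group.IsSolvable K]
    (h : commutator G ≤ K) : Group.IsSolvable G := by
  refine Group.isSolvable_of_ker_le_range K.subtype (Abelianization.of (G := G)) ?_
  rwa [Abelianization.ker_of, Subgroup.range_subtype]

theorem isSolvable_of_isSolvable_ker {A : Type*} [CommMonoid A] (f : G →* A)
    [Group.IsSolvable f.ker] : Group.IsSolvable G := by
  refine isSolvable_of_commutator_le (K := f.ker) (Subgroup.commutator_le.2 fun g _ h _ ↦ ?_)
  rw [MonoidHom.mem_ker, commutatorElement_def, map_mul, map_mul, map_mul, mul_right_comm (f g),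
    ← map_mul, mul_inv_cancel, map_one, one_mul, ← map_mul, mul_inv_cancel, map_one]

theorem isSolvable_ker_comp {K : Type*} [Group K] {f : G →* H} (hf : Function.Injective f)
    (g : H →* K) [Group.IsSolvable g.ker] : Group.IsSolvable (g.comp f).ker :=
  Group.isSolvable_of_isSolvable_injective (f := f.subgroupComap g.ker)
    fun _ _ hxy ↦ Subtype.ext (hf (congrArg Subtype.val hxy))

theorem exists_finiteIndex_stabilizer_of_forall_exists_smul_eq {X : Type*} [MulAction G X]
    {s t : Finset X} (h : ∀ g : G, ∃ p ∈ s, ∃ q ∈ t, g • p = q) :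
    ∃ p ∈ s, (MulAction.stabilizer G p).FiniteIndex := by
  classical
  have hex : ∀ e : X × X, ∃ c : G, (∃ g : G, g • e.1 = e.2) → c • e.1 = e.2 := fun e ↦ by
    by_cases he : ∃ g : G, g • e.1 = e.2
    · exact he.imp fun _ hg _ ↦ hg
    · exact ⟨1, fun h ↦ absurd h he⟩
  choose c hc using hex
  have hcov : ⋃ e ∈ s ×ˢ t, c e • (MulAction.stabilizer G e.1 : Set G) = Set.univ := by
    refine Set.eq_univ_of_forall fun g ↦ ?_
    obtain ⟨p, hp, q, hq, hg⟩ := h g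
    refine Set.mem_biUnion (Finset.mem_coe.2 (Finset.mk_mem_product hp hq)) ?_
    rw [Set.mem_smul_set_iff_inv_smul_mem, SetLike.mem_coe, MulAction.mem_stabilizer_iff,
      smul_eq_mul, mul_smul, inv_smul_eq_iff, hg, hc (p, q) ⟨g, hg⟩]
  obtain ⟨e, he, hfin⟩ := Subgroup.exists_finiteIndex_of_leftCoset_cover hcov
  exact ⟨e.1, (Finset.mem_product.1 he).1, hfin⟩

end GroupTheory

section PingPong

variable {G X : Type*} [Group G] [MulAction G X]

/-- `g` has north-south dynamics with attracting filter `φ` and repelling filter `ψ`. The filters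
stand for the germs of neighbourhoods of the two poles, which need not be points of `X`. -/
def NorthSouth (g : G) (φ ψ : Filter X) : Prop :=
  ∀ U ∈ φ, ∀ V ∈ ψ, ∃ N : ℕ, ∀ n ≥ N, ∀ x ∉ V, g ^ n • x ∈ U

theorem NorthSouth.conj {g : G} {φ ψ : Filter X} (hg : NorthSouth g φ ψ) (h : G) :
    NorthSouth (h * g * h⁻¹) (h • φ) (h • ψ) := by
  intro U hU V hV
  refine (hg _ hU _ hV).imp fun N hN n hn x hx ↦ ?_
  rw [conj_pow, mul_smul, mul_smul]
  exact hN n hn _ fun hx' ↦ hx (by simpa using hx')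

theorem ContainsNonabelianFree.of_pairwise_northSouth {g : Fin 2 → G} {φ ψ : Fin 2 → Filter X}
    [∀ i, (φ i).NeBot] (hg : ∀ i, NorthSouth (g i) (φ i) (ψ i))
    (hdisj : Pairwise (Disjoint on Sum.elim φ ψ)) : ContainsNonabelianFree G := by
  obtain ⟨s, hs, hsd⟩ := hdisj.exists_mem_filter_of_disjoint
  have hpow : ∀ i, ∃ n : ℕ, ∀ x ∉ s (.inr i), g i ^ n • x ∈ s (.inl i) := fun i ↦
    (hg i _ (hs (.inl i)) _ (hs (.inr i))).imp fun n hn ↦ hn n le_rfl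
  choose n hn using hpow
  -- Mathlib's ping-pong lemma wants the index type in the universe of the group.
  let e : ULift (Fin 2) ≃ Fin 2 := Equiv.ulift
  have hinj := FreeGroup.injective_lift_of_ping_pong (fun i ↦ g (e i) ^ n (e i))
    (fun i ↦ s (.inl (e i))) (fun i ↦ s (.inr (e i)))
    (fun i ↦ (‹∀ i, (φ i).NeBot› (e i)).nonempty_of_mem (hs (.inl (e i))))
    (fun i j hij ↦ hsd (by simpa using hij)) (fun i j hij ↦ hsd (by simpa using hij))
    (fun i j ↦ hsd (by simp))
    (fun i ↦ Set.smul_set_subset_iff.2 fun x hx ↦ hn _ x hx)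
    (fun i ↦ Set.smul_set_subset_iff.2 fun x hx ↦ ?_)
  · exact .of_injective ((FreeGroup.lift fun i ↦ g (e i) ^ n (e i)).comp
      (FreeGroup.freeGroupCongr e.symm).toMonoidHom) (hinj.comp (MulEquiv.injective _))
  · by_contra hx'
    exact hx (by simpa using hn _ _ hx')

theorem ContainsNonabelianFree.of_northSouth {g h : G} {φ ψ : Filter X} [φ.NeBot]
    (hg : NorthSouth g φ ψ) (hd : Disjoint φ ψ) (hφφ : Disjoint (h • φ) φ)
    (hφψ : Disjoint (h • φ) ψ) (hψφ : Disjoint (h • ψ) φ) (hψψ : Disjoint (h • ψ) ψ) :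
    ContainsNonabelianFree G := by
  have hd' : Disjoint (h • φ) (h • ψ) := (Filter.disjoint_map (MulAction.injective h)).2 hd
  have : (h • φ).NeBot := Filter.map_neBot
  have : ∀ i, (![φ, h • φ] i).NeBot := by simpa [Fin.forall_fin_two]
  refine .of_pairwise_northSouth (g := ![g, h * g * h⁻¹]) (φ := ![φ, h • φ]) (ψ := ![ψ, h • ψ])
    (by simpa [Fin.forall_fin_two] using ⟨hg, hg.conj h⟩) ?_
  simp [Pairwise, Function.onFun, Fin.forall_fin_two, hd, hd', hφφ, hφψ, hψφ, hψψ, hd.symm,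
    hd'.symm, hφφ.symm, hφψ.symm, hψφ.symm, hψψ.symm]

theorem TitsAlternative.of_northSouth {g : G} {φ ψ : Filter X} [φ.NeBot]
    (hg : NorthSouth g φ ψ) (hd : Disjoint φ ψ)
    (hsep : ∀ h : G, ∀ χ ∈ ({φ, ψ} : Set (Filter X)), ∀ χ' ∈ ({φ, ψ} : Set (Filter X)),
      h • χ = χ' ∨ Disjoint (h • χ) χ')
    (hφ : Group.IsSolvable (MulAction.stabilizer G φ))
    (hψ : Group.IsSolvable (MulAction.stabilizer G ψ)) : TitsAlternative G := by
  classical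
  by_cases hmeet : ∀ h : G, ∃ p ∈ ({φ, ψ} : Finset (Filter X)),
      ∃ q ∈ ({φ, ψ} : Finset (Filter X)), h • p = q
  · obtain ⟨p, hp, hfin⟩ := exists_finiteIndex_stabilizer_of_forall_exists_smul_eq hmeet
    rcases Finset.mem_insert.1 hp with rfl | hp
    · exact .inr ⟨_, hfin, hφ⟩
    · obtain rfl := Finset.mem_singleton.1 hp
      exact .inr ⟨_, hfin, hψ⟩
  · push Not at hmeet
    obtain ⟨h, hh⟩ := hmeet
    have hdisj : ∀ p ∈ ({φ, ψ} : Set (Filter X)), ∀ q ∈ ({φ, ψ} : Set (Filter X)),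
        Disjoint (h • p) q := fun p hp q hq ↦
      (hsep h p hp q hq).resolve_left (hh p (by simpa using hp) q (by simpa using hq))
    exact .inl (.of_northSouth hg hd (hdisj φ (by simp) φ (by simp)) (hdisj φ (by simp) ψ (by simp))
      (hdisj ψ (by simp) φ (by simp)) (hdisj ψ (by simp) ψ (by simp)))

end PingPong

namespace TitsAlternative

section IterFilter

variable {G X : Type*} [Group G] [MulAction G X]

/-- The filter generated by the translates `gⁿ • S`. -/
def iterFilter (g : G) (S : Set X) : Filter X := ⨅ n : ℕ, Filter.principal (g ^ n • S)

theorem hasBasis_iterFilter {g : G} {S : Set X} (h : ∀ y ∈ S, g • y ∈ S) :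
    (iterFilter g S).HasBasis (fun _ : ℕ ↦ True) fun n ↦ g ^ n • S := by
  refine Filter.hasBasis_iInf_principal (directed_of_isDirected_le ?_)
  refine antitone_nat_of_succ_le fun n ↦ ?_
  rw [pow_succ, mul_smul]
  exact Set.smul_set_mono (Set.smul_set_subset_iff.2 h)

theorem northSouth_iterFilter {g : G} {A B : Set X} (hAB : Disjoint A B)
    (hg : ∀ y ∉ B, g • y ∈ A) : NorthSouth g (iterFilter g A) (iterFilter g⁻¹ B) := by
  have hg' : ∀ y ∉ A, g⁻¹ • y ∈ B := fun y hy ↦ by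
    by_contra hy'
    exact hy (by simpa using hg _ hy')
  intro U hU V hV
  obtain ⟨n, -, hn⟩ :=
    (hasBasis_iterFilter fun y hy ↦ hg y (Set.disjoint_left.1 hAB hy)).mem_iff.1 hU
  obtain ⟨m, -, hm⟩ :=
    (hasBasis_iterFilter fun y hy ↦ hg' y (Set.disjoint_right.1 hAB hy)).mem_iff.1 hV
  have hpow : ∀ j : ℕ, ∀ y ∉ V, g ^ (j + (1 + m)) • y ∈ A := by
    intro j y hy
    induction j with
    | zero =>
      rw [zero_add, pow_add, pow_one, mul_smul]
      refine hg _ fun hc ↦ hy (hm ?_)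
      rwa [Set.mem_smul_set_iff_inv_smul_mem, inv_pow, inv_inv]
    | succ j ih =>
      rw [add_right_comm, pow_succ', mul_smul]
      exact hg _ (Set.disjoint_left.1 hAB ih)
  refine ⟨n + (1 + m), fun l hl y hy ↦ hn ?_⟩
  obtain ⟨j, rfl⟩ := Nat.exists_eq_add_of_le hl
  rw [add_assoc, add_comm _ j, pow_add, mul_smul]
  exact Set.smul_mem_smul_set (hpow j y hy)

end IterFilter

/-! ### Groups acting on trees -/

section TreeGeometry

variable {X : Type*} {T : SimpleGraph X}

theorem exists_adj_dist_add_one (hT : T.Connected) {x y : X} (h : x ≠ y) :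
    ∃ a, T.Adj x a ∧ T.dist a y + 1 = T.dist x y := by
  obtain ⟨p, -, hp⟩ := hT.exists_path_of_dist x y
  cases p with
  | nil => exact absurd rfl h
  | @cons _ a _ hadj q =>
    rw [SimpleGraph.Walk.length_cons] at hp
    have hle : T.dist a y ≤ q.length := T.dist_le q
    have htri : T.dist x y ≤ T.dist x a + T.dist a y := hT.dist_triangle
    rw [SimpleGraph.dist_eq_one_iff_adj.2 hadj] at htri
    exact ⟨a, hadj, by lia⟩

theorem eq_of_adj_of_dist_lt (hT : T.IsTree) {x y a b : X} (ha : T.Adj x a) (hb : T.Adj x b)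
    (hay : T.dist a y < T.dist x y) (hby : T.dist b y < T.dist x y) : a = b := by
  have hpath : ∀ {c : X}, T.Adj x c → T.dist c y < T.dist x y →
      ∃ p : T.Path x y, p.1.snd = c := by
    intro c hc hcy
    obtain ⟨p, -, hp⟩ := hT.connected.exists_path_of_dist c y
    have hle := T.dist_le (SimpleGraph.Walk.cons hc p)
    rw [SimpleGraph.Walk.length_cons] at hle
    exact ⟨⟨.cons hc p, SimpleGraph.Walk.isPath_of_length_eq_dist _
      (by rw [SimpleGraph.Walk.length_cons]; lia)⟩, SimpleGraph.Walk.snd_cons _ _⟩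
  obtain ⟨p, rfl⟩ := hpath ha hay
  obtain ⟨q, rfl⟩ := hpath hb hby
  rw [(hT.isAcyclic.subsingleton_path x y).elim p q]

variable (T) in
open Classical in
/-- The neighbour of `x` on the way to `y`; it is `x` itself when `x = y`. -/
noncomputable def dir (x y : X) : X :=
  if h : ∃ a, T.Adj x a ∧ T.dist a y + 1 = T.dist x y then h.choose else x

@[simp] theorem dir_self (x : X) : dir T x x = x := by
  simp [dir]

theorem adj_dir (hT : T.Connected) {x y : X} (h : x ≠ y) : T.Adj x (dir T x y) := by
  rw [dir, dif_pos (exists_adj_dist_add_one hT h)]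
  exact (exists_adj_dist_add_one hT h).choose_spec.1

theorem dist_dir_add_one (hT : T.Connected) {x y : X} (h : x ≠ y) :
    T.dist (dir T x y) y + 1 = T.dist x y := by
  rw [dir, dif_pos (exists_adj_dist_add_one hT h)]
  exact (exists_adj_dist_add_one hT h).choose_spec.2

theorem dir_eq (hT : T.IsTree) {x y a : X} (ha : T.Adj x a) (h : T.dist a y < T.dist x y) :
    dir T x y = a := by
  have hne : x ≠ y := by
    rintro rfl
    simp at h
  have hdir := dist_dir_add_one hT.connected hne
  exact eq_of_adj_of_dist_lt hT (adj_dir hT.connected hne) ha (by lia) h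

theorem dist_eq_of_adj_or (hT : T.IsTree) {x a : X} (ha : T.Adj x a) (y : X) :
    T.dist a y = T.dist x y + 1 ∨ T.dist x y = T.dist a y + 1 := by
  rw [T.dist_comm (u := a), T.dist_comm (u := x)]
  exact hT.dist_eq_dist_add_one_of_adj y ha.symm

theorem dist_eq_of_dir_ne (hT : T.IsTree) {x y a : X} (ha : T.Adj x a) (h : dir T x y ≠ a) :
    T.dist a y = T.dist x y + 1 :=
  (dist_eq_of_adj_or hT ha y).resolve_right fun hd ↦ h (dir_eq hT ha (by lia))

theorem dist_eq_add_of_dir_ne (hT : T.IsTree) {x y z : X} (h : dir T x y ≠ dir T x z) :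
    T.dist y z = T.dist y x + T.dist x z := by
  induction hn : T.dist x y generalizing x with
  | zero =>
    obtain rfl := hT.connected.dist_eq_zero_iff.1 hn
    simp
  | succ n ih =>
    have hxy : x ≠ y := by
      rintro rfl
      simp at hn
    set a := dir T x y
    have hay : T.dist a y + 1 = T.dist x y := dist_dir_add_one hT.connected hxy
    have hxa : T.Adj x a := adj_dir hT.connected hxy
    have haz : T.dist a z = T.dist x z + 1 := dist_eq_of_dir_ne hT hxa h.symm
    have haz' : dir T a z = x := dir_eq hT hxa.symm (by lia)
    have hay' : dir T a y ≠ x := by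
      intro hax
      rcases eq_or_ne a y with hc | hc
      · rw [← hc, dir_self] at hax
        exact hxa.ne' hax
      · have hd := dist_dir_add_one hT.connected hc
        rw [hax] at hd
        lia
    have hyz : T.dist y z = T.dist y a + T.dist a z := ih (by rwa [haz']) (by lia)
    rw [T.dist_comm (u := y) (v := a)] at hyz
    rw [T.dist_comm (u := y) (v := x)]
    lia

theorem dir_eq_dir_of_dir_ne (hT : T.IsTree) {x y z : X} (hxy : y ≠ x)
    (h : dir T x y ≠ dir T x z) : dir T y z = dir T y x := by
  refine dir_eq hT (adj_dir hT.connected hxy) ?_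
  have hadd := dist_eq_add_of_dir_ne hT h
  have hdir := dist_dir_add_one hT.connected hxy
  have htri := hT.connected.dist_triangle (u := dir T y x) (v := x) (w := z)
  lia

variable (T) in
/-- The half-tree of the vertices on the side of `a`, for an edge from `v` to `a`. -/
def half (v a : X) : Set X := {y | T.dist a y < T.dist v y}

theorem mem_half {v a y : X} : y ∈ half T v a ↔ T.dist a y < T.dist v y := Iff.rfl

theorem mem_half_iff_dir_eq (hT : T.IsTree) {v a y : X} (h : T.Adj v a) :
    y ∈ half T v a ↔ dir T v y = a := by
  refine ⟨fun hy ↦ dir_eq hT h hy, fun hy ↦ ?_⟩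
  have hne : v ≠ y := by
    rintro rfl
    exact h.ne ((dir_self v).symm.trans hy)
  have hdir := dist_dir_add_one hT.connected hne
  rw [hy] at hdir
  exact mem_half.2 (by lia)

theorem disjoint_half_half (hT : T.IsTree) {v a b : X} (ha : T.Adj v a) (hb : T.Adj v b)
    (hab : a ≠ b) : Disjoint (half T v a) (half T v b) := by
  refine Set.disjoint_left.2 fun y hya hyb ↦ hab ?_
  rw [← (mem_half_iff_dir_eq hT ha).1 hya, (mem_half_iff_dir_eq hT hb).1 hyb]

theorem compl_half (hT : T.IsTree) {v a : X} (h : T.Adj v a) : (half T v a)ᶜ = half T a v := by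
  ext y
  rw [Set.mem_compl_iff, mem_half, mem_half]
  have hdist := dist_eq_of_adj_or hT h y
  lia

theorem half_subset_half_or (hT : T.IsTree) {v a w b : X} (h : T.Adj v a) (hw : T.Adj w b)
    (hv : v ∉ half T w b) (ha : a ∉ half T w b) :
    half T w b ⊆ half T v a ∨ half T w b ⊆ half T a v := by
  rw [mem_half_iff_dir_eq hT hw] at hv ha
  have hadd : ∀ y ∈ half T w b, T.dist v y = T.dist v w + T.dist w y ∧
      T.dist a y = T.dist a w + T.dist w y := by
    intro y hy
    rw [mem_half_iff_dir_eq hT hw] at hy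
    exact ⟨dist_eq_add_of_dir_ne hT (by rwa [hy]), dist_eq_add_of_dir_ne hT (by rwa [hy])⟩
  rcases dist_eq_of_adj_or hT h w with hd | hd
  · refine .inr fun y hy ↦ ?_
    have hy' := hadd y hy
    exact mem_half.2 (by lia)
  · refine .inl fun y hy ↦ ?_
    have hy' := hadd y hy
    exact mem_half.2 (by lia)

end TreeGeometry

section Ends

variable {X : Type*} {T : SimpleGraph X}

variable (T) in
/-- A filter on the vertices of a tree that converges to an end of the tree. -/
structure IsEnd (φ : Filter X) : Prop where
  neBot : φ.NeBot
  exists_half : ∀ U ∈ φ, ∃ v a, T.Adj v a ∧ half T v a ∈ φ ∧ half T v a ⊆ U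
  compl_singleton_mem : ∀ v, {v}ᶜ ∈ φ

theorem IsEnd.half_mem_or (hT : T.IsTree) {φ : Filter X} (hφ : IsEnd T φ) {v a : X}
    (h : T.Adj v a) : half T v a ∈ φ ∨ half T a v ∈ φ := by
  obtain ⟨w, b, hwb, hmem, hsub⟩ := hφ.exists_half _
    (Filter.inter_mem (hφ.compl_singleton_mem v) (hφ.compl_singleton_mem a))
  exact (half_subset_half_or hT h hwb (fun hv ↦ (hsub hv).1 rfl) fun ha ↦ (hsub ha).2 rfl).imp
    (Filter.mem_of_superset hmem) (Filter.mem_of_superset hmem)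

theorem IsEnd.le_of_not_disjoint (hT : T.IsTree) {φ χ : Filter X} (hφ : IsEnd T φ)
    (hχ : IsEnd T χ) (h : ¬ Disjoint φ χ) : φ ≤ χ := by
  intro U hU
  obtain ⟨v, a, hva, hmem, hsub⟩ := hχ.exists_half U hU
  rcases hφ.half_mem_or hT hva with hmem' | hmem'
  · exact Filter.mem_of_superset hmem' hsub
  · refine absurd (Filter.disjoint_iff.2 ⟨_, hmem', _, hmem, ?_⟩) h
    rw [← compl_half hT hva]
    exact disjoint_compl_left

theorem IsEnd.eq_or_disjoint (hT : T.IsTree) {φ χ : Filter X} (hφ : IsEnd T φ)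
    (hχ : IsEnd T χ) : φ = χ ∨ Disjoint φ χ :=
  or_iff_not_imp_right.2 fun h ↦ le_antisymm (hφ.le_of_not_disjoint hT hχ h)
    (hχ.le_of_not_disjoint hT hφ fun h' ↦ h h'.symm)

theorem IsEnd.exists_adj_half_mem (hT : T.IsTree) {φ : Filter X} (hφ : IsEnd T φ) (v : X) :
    ∃ a, T.Adj v a ∧ half T v a ∈ φ := by
  obtain ⟨w, b, hwb, hmem, hsub⟩ := hφ.exists_half _ (hφ.compl_singleton_mem v)
  rcases eq_or_ne v w with rfl | hne
  · exact ⟨b, hwb, hmem⟩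
  · refine ⟨dir T v w, adj_dir hT.connected hne, Filter.mem_of_superset hmem fun y hy ↦ ?_⟩
    have hv : v ∉ half T w b := fun hv ↦ hsub hv rfl
    rw [mem_half_iff_dir_eq hT hwb] at hy hv
    have hadd : T.dist v y = T.dist v w + T.dist w y := dist_eq_add_of_dir_ne hT (by rwa [hy])
    have hdir := dist_dir_add_one hT.connected hne
    have htri := hT.connected.dist_triangle (u := dir T v w) (v := w) (w := y)
    exact mem_half.2 (by lia)

theorem IsEnd.eq_of_half_mem (hT : T.IsTree) {φ : Filter X} (hφ : IsEnd T φ) {v a b : X}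
    (ha : T.Adj v a) (hb : T.Adj v b) (haφ : half T v a ∈ φ) (hbφ : half T v b ∈ φ) : a = b := by
  have := hφ.neBot
  by_contra hab
  obtain ⟨y, hy⟩ := φ.nonempty_of_mem (Filter.inter_mem haφ hbφ)
  exact Set.disjoint_left.1 (disjoint_half_half hT ha hb hab) hy.1 hy.2

/-- The neighbour of `v` on the way to the end `φ`. -/
noncomputable def IsEnd.next (hT : T.IsTree) {φ : Filter X} (hφ : IsEnd T φ) (v : X) : X :=
  (hφ.exists_adj_half_mem hT v).choose

theorem IsEnd.adj_next (hT : T.IsTree) {φ : Filter X} (hφ : IsEnd T φ) (v : X) :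
    T.Adj v (hφ.next hT v) :=
  (hφ.exists_adj_half_mem hT v).choose_spec.1

theorem IsEnd.half_next_mem (hT : T.IsTree) {φ : Filter X} (hφ : IsEnd T φ) (v : X) :
    half T v (hφ.next hT v) ∈ φ :=
  (hφ.exists_adj_half_mem hT v).choose_spec.2

theorem IsEnd.next_eq (hT : T.IsTree) {φ : Filter X} (hφ : IsEnd T φ) {v a : X}
    (ha : T.Adj v a) (haφ : half T v a ∈ φ) : hφ.next hT v = a :=
  hφ.eq_of_half_mem hT (hφ.adj_next hT v) ha (hφ.half_next_mem hT v) haφ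

theorem IsEnd.exists_iterate_next_eq (hT : T.IsTree) {φ : Filter X} (hφ : IsEnd T φ) (v w : X) :
    ∃ i j, (hφ.next hT)^[i] v = (hφ.next hT)^[j] w := by
  obtain ⟨p⟩ := hT.connected.preconnected v w
  induction p with
  | nil => exact ⟨0, 0, rfl⟩
  | @cons a b c hab _ ih =>
    obtain ⟨i, j, hij⟩ := ih
    rcases hφ.half_mem_or hT hab with hmem | hmem
    · refine ⟨i + 1, j, ?_⟩
      rw [Function.iterate_succ_apply, hφ.next_eq hT hab hmem, hij]
    · refine ⟨i, j + 1, ?_⟩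
      rw [← hφ.next_eq hT hab.symm hmem, ← Function.iterate_succ_apply (hφ.next hT),
        Function.iterate_succ_apply', hij, ← Function.iterate_succ_apply' (hφ.next hT)]

end Ends

section TreeActions

variable {X H : Type*} {T : SimpleGraph X} [Group H] [MulAction H X]

variable (H T) in
/-- The action of `H` on the vertices of `T` is an action by graph automorphisms. -/
class PreservesAdj : Prop where
  adj_smul (h : H) {x y : X} : T.Adj x y → T.Adj (h • x) (h • y)

variable [PreservesAdj H T]

theorem dist_smul_smul (h : H) (x y : X) : T.dist (h • x) (h • y) = T.dist x y := by
  have hsub : ∀ (h : H) {x y u v : X}, h • x = u → h • y = v →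
      Set.range (SimpleGraph.Walk.length : T.Walk x y → ℕ) ⊆
        Set.range (SimpleGraph.Walk.length : T.Walk u v → ℕ) := by
    rintro h x y _ _ rfl rfl _ ⟨p, rfl⟩
    exact ⟨p.map ⟨(h • ·), PreservesAdj.adj_smul h⟩, p.length_map _⟩
  rw [SimpleGraph.dist_eq_sInf, SimpleGraph.dist_eq_sInf]
  exact congrArg sInf (Set.Subset.antisymm
    (hsub h⁻¹ (inv_smul_smul h x) (inv_smul_smul h y)) (hsub h rfl rfl))

theorem dir_smul_smul (hT : T.IsTree) (h : H) (x y : X) :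
    dir T (h • x) (h • y) = h • dir T x y := by
  rcases eq_or_ne x y with rfl | hne
  · rw [dir_self, dir_self]
  · refine dir_eq hT (PreservesAdj.adj_smul h (adj_dir hT.connected hne)) ?_
    rw [dist_smul_smul, dist_smul_smul, ← dist_dir_add_one hT.connected hne]
    exact Nat.lt_succ_self _

theorem smul_half (h : H) (v a : X) : h • half T v a = half T (h • v) (h • a) := by
  ext y
  rw [Set.mem_smul_set_iff_inv_smul_mem, mem_half, mem_half, ← dist_smul_smul h a,
    ← dist_smul_smul h v, smul_inv_smul]

theorem half_mem_smul (h : H) {v a : X} {φ : Filter X} (hmem : half T v a ∈ φ) :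
    half T (h • v) (h • a) ∈ h • φ := by
  rw [← smul_half]
  exact Filter.smul_set_mem_smul_filter hmem

theorem IsEnd.smul (h : H) {φ : Filter X} (hφ : IsEnd T φ) : IsEnd T (h • φ) where
  neBot := by
    have := hφ.neBot
    exact Filter.map_neBot
  exists_half U hU := by
    obtain ⟨v, a, hva, hmem, hsub⟩ := hφ.exists_half _ hU
    refine ⟨h • v, h • a, PreservesAdj.adj_smul h hva, half_mem_smul h hmem, ?_⟩
    rw [← smul_half]
    exact Set.smul_set_subset_iff.2 hsub
  compl_singleton_mem v := by
    rw [← smul_inv_smul h v, ← Set.smul_set_singleton, ← Set.smul_set_compl]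
    exact Filter.smul_set_mem_smul_filter (hφ.compl_singleton_mem _)

theorem IsEnd.next_smul (hT : T.IsTree) {φ : Filter X} (hφ : IsEnd T φ) {h : H} (hh : h • φ = φ)
    (v : X) : hφ.next hT (h • v) = h • hφ.next hT v := by
  refine hφ.next_eq hT (PreservesAdj.adj_smul h (hφ.adj_next hT v)) ?_
  have hmem := half_mem_smul h (hφ.half_next_mem hT v)
  rwa [hh] at hmem

end TreeActions

section EndStabilizers

theorem exists_mul_smul_iterate_eq {X P : Type*} [Group P] [MulAction P X] {e : X → X}
    (hcomm : ∀ h : P, Function.Commute e (h • ·))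
    (hcoal : ∀ v w : X, ∃ i j, e^[i] v = e^[j] w) (v : X) (a b : P) :
    ∃ i, (a * b) • e^[i] v = (b * a) • e^[i] v := by
  have hshift : ∀ c : P, ∃ i j, ∀ m, c • e^[m + i] v = e^[m + j] v := by
    intro c
    obtain ⟨i, j, hij⟩ := hcoal (c • v) v
    refine ⟨i, j, fun m ↦ ?_⟩
    rw [← ((hcomm c).iterate_left (m + i)).eq, Function.iterate_add_apply, hij,
      Function.iterate_add_apply]
  obtain ⟨p, q, ha⟩ := hshift a
  obtain ⟨r, s, hb⟩ := hshift b
  refine ⟨p + r, ?_⟩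
  rw [mul_smul, mul_smul, hb, add_comm p s, ha, add_comm p r, ha, add_comm r q, hb, add_comm]

/-- Any two elements commute far enough along the ray `v, e v, e (e v), …`, so commutators lie in
the directed union of the stabilizers of its points. -/
theorem isSolvable_of_commute_of_coalescing {X P : Type*} [Group P] [MulAction P X] [Nonempty X]
    {e : X → X} (hcomm : ∀ h : P, Function.Commute e (h • ·))
    (hcoal : ∀ v w : X, ∃ i j, e^[i] v = e^[j] w) {n : ℕ}
    (hstab : ∀ v : X, derivedSeries (MulAction.stabilizer P v) n = ⊥) : Group.IsSolvable P := by
  obtain ⟨v⟩ := ‹Nonempty X›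
  let K : ℕ → Subgroup P := fun i ↦ MulAction.stabilizer P (e^[i] v)
  have hK : Monotone K := monotone_nat_of_le_succ fun i h hh ↦ by
    rw [MulAction.mem_stabilizer_iff] at hh ⊢
    rw [Function.iterate_succ_apply', ← (hcomm h).eq, hh]
  have hsolv : Group.IsSolvable ↥(⨆ i, K i) := (Group.isSolvable_def _).2
    ⟨n, derivedSeries_iSup_eq_bot hK.directed_le fun i ↦ hstab _⟩
  refine isSolvable_of_commutator_le (K := ⨆ i, K i) ?_
  rw [commutator_def, Subgroup.commutator_le]
  intro a _ b _
  obtain ⟨i, hi⟩ := exists_mul_smul_iterate_eq hcomm hcoal v a⁻¹ b⁻¹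
  refine Subgroup.mem_iSup_of_mem i ?_
  rw [MulAction.mem_stabilizer_iff,
    show ⁅a, b⁆ = (b⁻¹ * a⁻¹)⁻¹ * (a⁻¹ * b⁻¹) by simp [commutatorElement_def, mul_assoc],
    mul_smul, hi, inv_smul_smul]

variable {X H : Type*} {T : SimpleGraph X} [Group H] [MulAction H X] [PreservesAdj H T]

theorem IsEnd.isSolvable_stabilizer (hT : T.IsTree) {n : ℕ}
    (hedge : ∀ x y : X, T.Adj x y → derivedSeries
      ↥(MulAction.stabilizer H x ⊓ MulAction.stabilizer H y) n = ⊥)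
    {φ : Filter X} (hφ : IsEnd T φ) : Group.IsSolvable (MulAction.stabilizer H φ) := by
  have := hT.connected.nonempty
  have hcomm : ∀ h : MulAction.stabilizer H φ, Function.Commute (hφ.next hT) (h • ·) :=
    fun h v ↦ hφ.next_smul hT h.2 v
  refine isSolvable_of_commute_of_coalescing hcomm (hφ.exists_iterate_next_eq hT) (n := n)
    fun v ↦ ?_
  let f : MulAction.stabilizer (MulAction.stabilizer H φ) v →*
      ↥(MulAction.stabilizer H v ⊓ MulAction.stabilizer H (hφ.next hT v)) :=
    ((Subgroup.subtype _).comp (Subgroup.subtype _)).codRestrict _ fun b ↦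
      ⟨b.2, ((hcomm b).eq v).symm.trans (congrArg (hφ.next hT) b.2)⟩
  refine derivedSeries_eq_bot_of_injective f (fun a b hab ↦ ?_) (hedge _ _ (hφ.adj_next hT v))
  exact Subtype.ext (Subtype.ext (congrArg (fun z ↦ (z.1 : H)) hab))

end EndStabilizers

section EllipticActions

variable {X H : Type*} {T : SimpleGraph X} [Group H] [MulAction H X] [PreservesAdj H T]

theorem dist_dir_smul_dir_add_two (hT : T.IsTree) (hinv : ∀ (h : H) (x : X), ¬ T.Adj x (h • x))
    {g : H} {x : X} (hx : g • x ≠ x) (h : dir T x (g • x) = dir T x (g⁻¹ • x)) :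
    T.dist (dir T x (g • x)) (g • dir T x (g • x)) + 2 = T.dist x (g • x) := by
  have hd := dist_dir_add_one hT.connected hx.symm
  have hadj := adj_dir hT.connected hx.symm
  have hback : dir T (g • x) x = g • dir T x (g • x) := by
    rw [h, ← dir_smul_smul hT, smul_inv_smul]
  set a := dir T x (g • x)
  have hne : g • x ≠ a := by
    intro hc
    rw [← hc] at hadj
    exact hinv g x hadj
  have hback' : dir T (g • x) a = g • a := by
    by_contra hc
    rw [← hback] at hc
    have hadd := dist_eq_add_of_dir_ne hT hc
    have hpos := hT.connected.pos_dist_of_ne hx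
    have hpos' := hT.connected.pos_dist_of_ne hne
    rw [T.dist_comm, SimpleGraph.dist_eq_one_iff_adj.2 hadj, T.dist_comm (u := a)] at hadd
    lia
  have hd' := dist_dir_add_one hT.connected hne
  rw [hback', T.dist_comm (u := g • a), T.dist_comm (u := g • x)] at hd'
  lia

theorem smul_dir_eq_of_smul_eq (hT : T.IsTree)
    (hell : ∀ (g : H) (x : X), dir T x (g • x) = dir T x (g⁻¹ • x)) {g h : H} {x : X}
    (hx : h • x = x) : h • dir T x (g • x) = dir T x (g • x) := by
  have hdir := dir_smul_smul hT h⁻¹ x (g⁻¹ • x)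
  have hgh := hell (g * h) x
  rw [mul_smul, hx, mul_inv_rev, mul_smul] at hgh
  rw [inv_smul_eq_iff.2 hx.symm, ← hgh, ← hell, eq_inv_smul_iff] at hdir
  exact hdir

theorem dir_smul_eq_of_smul_ne (hT : T.IsTree)
    (hell : ∀ (g : H) (x : X), dir T x (g • x) = dir T x (g⁻¹ • x)) {g h : H} {x : X}
    (hg : g • x ≠ x) (hh : h • x ≠ x) : dir T x (h • x) = dir T x (g • x) := by
  by_contra hne
  -- Otherwise `x` lies strictly between `(g * h) • x` and `(g * h)⁻¹ • x`.
  have hprod : ∀ {a b : H}, a • x ≠ x → dir T x (b • x) ≠ dir T x (a • x) →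
      dir T x ((a * b) • x) = dir T x (a • x) := by
    intro a b ha hab
    rw [mul_smul]
    refine dir_eq_dir_of_dir_ne hT (x := a • x) ha.symm fun hc ↦ hab ?_
    have hax := dir_smul_smul hT a x (a⁻¹ • x)
    rw [smul_inv_smul, hc, dir_smul_smul hT, ← hell] at hax
    exact smul_left_cancel _ hax
  have hgh := hell (g * h) x
  have hh' : h⁻¹ • x ≠ x := fun hc ↦ hh (inv_smul_eq_iff.1 hc).symm
  rw [hprod hg hne, mul_inv_rev, hprod hh' (by rw [← hell, ← hell]; exact Ne.symm hne),
    ← hell] at hgh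
  exact hne hgh.symm

theorem exists_forall_mem_smul_eq (hT : T.IsTree) (hinv : ∀ (h : H) (x : X), ¬ T.Adj x (h • x))
    (hell : ∀ (g : H) (x : X), dir T x (g • x) = dir T x (g⁻¹ • x)) (S : Finset H) :
    ∃ x : X, ∀ g ∈ S, g • x = x := by
  have := hT.connected.nonempty
  -- A vertex with the smallest total displacement is fixed.
  let f : X → ℕ := fun x ↦ ∑ g ∈ S, T.dist x (g • x)
  let x := Function.argmin f
  refine ⟨x, ?_⟩
  by_contra! hc
  obtain ⟨g, hg, hx⟩ := hc
  have hmoved : ∀ h : H, h • x ≠ x →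
      T.dist (dir T x (g • x)) (h • dir T x (g • x)) < T.dist x (h • x) := by
    intro h hh
    have hd := dist_dir_smul_dir_add_two hT hinv hh (hell h x)
    rw [dir_smul_eq_of_smul_ne hT hell hx hh] at hd
    lia
  refine Function.not_lt_argmin f (dir T x (g • x))
    (Finset.sum_lt_sum (fun h _ ↦ ?_) ⟨g, hg, hmoved g hx⟩)
  by_cases hh : h • x = x
  · rw [smul_dir_eq_of_smul_eq hT hell hh, SimpleGraph.dist_self]
    exact Nat.zero_le _
  · exact (hmoved h hh).le

/-- If there is no global fixed vertex, finitely many elements have two common fixed vertices,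
hence fix an edge. -/
theorem derivedSeries_eq_bot_of_elliptic (hT : T.IsTree)
    (hinv : ∀ (h : H) (x : X), ¬ T.Adj x (h • x))
    (hell : ∀ (g : H) (x : X), dir T x (g • x) = dir T x (g⁻¹ • x)) {n : ℕ}
    (hedge : ∀ x y : X, T.Adj x y → derivedSeries
      ↥(MulAction.stabilizer H x ⊓ MulAction.stabilizer H y) n = ⊥)
    (hfix : ∀ x : X, ∃ h : H, h • x ≠ x) : derivedSeries H n = ⊥ := by
  classical
  refine derivedSeries_eq_bot_of_forall_finset fun S ↦ ?_
  obtain ⟨v, hv⟩ := exists_forall_mem_smul_eq hT hinv hell S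
  obtain ⟨h, hh⟩ := hfix v
  obtain ⟨w, hw⟩ := exists_forall_mem_smul_eq hT hinv hell (insert h S)
  have hne : v ≠ w := by
    rintro rfl
    exact hh (hw h (Finset.mem_insert_self _ _))
  refine ⟨MulAction.stabilizer H v ⊓ MulAction.stabilizer H (dir T v w),
    fun g hg ↦ ⟨hv g hg, ?_⟩, hedge _ _ (adj_dir hT.connected hne)⟩
  change g • dir T v w = dir T v w
  rw [← dir_smul_smul hT, hv g hg, hw g (Finset.mem_insert_of_mem hg)]

end EllipticActions

section HyperbolicElements

variable {X H : Type*} {T : SimpleGraph X} [Group H] [MulAction H X]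

variable (T) in
/-- The vertex `x` lies on the axis of a hyperbolic element `g` of a group acting on the tree `T`:
it lies strictly between `g⁻¹ • x` and `g • x`. -/
def IsAxisVertex (g : H) (x : X) : Prop :=
  dir T x (g • x) ≠ dir T x (g⁻¹ • x)

variable (T) in
/-- The half-tree at `x` containing `g • x`. -/
def attractingHalf (g : H) (x : X) : Set X := half T x (dir T x (g • x))

variable (T) in
/-- The end of the tree to which `gⁿ • x` converges, for a vertex `x` on the axis of `g`. -/
def attractingEnd (g : H) (x : X) : Filter X := iterFilter g (attractingHalf T g x)

namespace IsAxisVertex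

variable {g : H} {x : X}

theorem inv (hg : IsAxisVertex T g x) : IsAxisVertex T g⁻¹ x := by
  rw [IsAxisVertex, inv_inv]
  exact hg.symm

theorem smul_ne (hg : IsAxisVertex T g x) : x ≠ g • x := by
  intro hx
  rw [IsAxisVertex, ← hx, inv_smul_eq_iff.2 hx] at hg
  exact hg rfl

theorem disjoint_attractingHalf (hT : T.IsTree) (hg : IsAxisVertex T g x) :
    Disjoint (attractingHalf T g x) (attractingHalf T g⁻¹ x) :=
  disjoint_half_half hT (adj_dir hT.connected hg.smul_ne) (adj_dir hT.connected hg.inv.smul_ne) hg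

theorem nonempty_attractingHalf (hT : T.IsTree) (hg : IsAxisVertex T g x) :
    (attractingHalf T g x).Nonempty :=
  ⟨g • x, (mem_half_iff_dir_eq hT (adj_dir hT.connected hg.smul_ne)).2 rfl⟩

variable [PreservesAdj H T]

theorem dist_smul_eq_add (hT : T.IsTree) (hg : IsAxisVertex T g x) {y : X}
    (hy : y ∉ attractingHalf T g⁻¹ x) : T.dist x (g • y) = T.dist x (g • x) + T.dist x y := by
  rw [attractingHalf, mem_half_iff_dir_eq hT (adj_dir hT.connected hg.inv.smul_ne)] at hy
  have hadd := dist_eq_add_of_dir_ne hT (Ne.symm hy)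
  rwa [← dist_smul_smul g, smul_inv_smul, ← dist_smul_smul g (g⁻¹ • x), smul_inv_smul] at hadd

theorem smul_mem_attractingHalf (hT : T.IsTree) (hg : IsAxisVertex T g x) {y : X}
    (hy : y ∉ attractingHalf T g⁻¹ x) : g • y ∈ attractingHalf T g x := by
  have hadd := hg.dist_smul_eq_add hT hy
  have hdir := dist_dir_add_one hT.connected hg.smul_ne
  have htri := hT.connected.dist_triangle (u := dir T x (g • x)) (v := g • x) (w := g • y)
  rw [dist_smul_smul] at htri
  exact mem_half.2 (by lia)

theorem smul_mem_attractingHalf_of_mem (hT : T.IsTree) (hg : IsAxisVertex T g x) {y : X}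
    (hy : y ∈ attractingHalf T g x) : g • y ∈ attractingHalf T g x :=
  hg.smul_mem_attractingHalf hT (Set.disjoint_left.1 (hg.disjoint_attractingHalf hT) hy)

theorem hasBasis_attractingEnd (hT : T.IsTree) (hg : IsAxisVertex T g x) :
    (attractingEnd T g x).HasBasis (fun _ : ℕ ↦ True) fun n ↦ g ^ n • attractingHalf T g x :=
  hasBasis_iterFilter fun _ ↦ hg.smul_mem_attractingHalf_of_mem hT

theorem attractingHalf_mem (hT : T.IsTree) (hg : IsAxisVertex T g x) :
    attractingHalf T g x ∈ attractingEnd T g x := by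
  simpa using (hg.hasBasis_attractingEnd hT).mem_of_mem (i := 0) trivial

theorem le_dist_of_mem_pow_smul (hT : T.IsTree) (hg : IsAxisVertex T g x) {n : ℕ} {y : X}
    (hy : y ∈ g ^ n • attractingHalf T g x) : n ≤ T.dist x y := by
  obtain ⟨y, hy, rfl⟩ := hy
  suffices g ^ n • y ∈ attractingHalf T g x ∧ n ≤ T.dist x (g ^ n • y) from this.2
  induction n with
  | zero => simpa using hy
  | succ n ih =>
    rw [pow_succ', mul_smul]
    have hadd := hg.dist_smul_eq_add hT
      (Set.disjoint_left.1 (hg.disjoint_attractingHalf hT) ih.1)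
    have hpos := hT.connected.pos_dist_of_ne hg.smul_ne
    exact ⟨hg.smul_mem_attractingHalf_of_mem hT ih.1, by lia⟩

theorem isEnd_attractingEnd (hT : T.IsTree) (hg : IsAxisVertex T g x) :
    IsEnd T (attractingEnd T g x) where
  neBot := (hg.hasBasis_attractingEnd hT).neBot_iff.2 fun _ ↦
    (hg.nonempty_attractingHalf hT).smul_set
  exists_half U hU := by
    obtain ⟨n, -, hn⟩ := (hg.hasBasis_attractingEnd hT).mem_iff.1 hU
    have hmem := (hg.hasBasis_attractingEnd hT).mem_of_mem (i := n) trivial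
    rw [attractingHalf, smul_half] at hn hmem
    exact ⟨_, _, PreservesAdj.adj_smul (g ^ n) (adj_dir hT.connected hg.smul_ne), hmem, hn⟩
  compl_singleton_mem v := by
    refine (hg.hasBasis_attractingEnd hT).mem_iff.2 ⟨T.dist x v + 1, trivial, ?_⟩
    rintro y hy rfl
    exact absurd (hg.le_dist_of_mem_pow_smul hT hy) (by lia)

theorem titsAlternative (hT : T.IsTree) {n : ℕ} (hedge : ∀ x y : X, T.Adj x y → derivedSeries
      ↥(MulAction.stabilizer H x ⊓ MulAction.stabilizer H y) n = ⊥) (hg : IsAxisVertex T g x) :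
    TitsAlternative H := by
  have hdisj := hg.disjoint_attractingHalf hT
  have hends : ∀ χ ∈ ({attractingEnd T g x, attractingEnd T g⁻¹ x} : Set (Filter X)),
      IsEnd T χ := by
    rintro χ (rfl | rfl)
    exacts [hg.isEnd_attractingEnd hT, hg.inv.isEnd_attractingEnd hT]
  have := (hg.isEnd_attractingEnd hT).neBot
  exact .of_northSouth (φ := attractingEnd T g x) (ψ := attractingEnd T g⁻¹ x)
    (northSouth_iterFilter hdisj fun y hy ↦ hg.smul_mem_attractingHalf hT hy)
    (Filter.disjoint_iff.2
      ⟨_, hg.attractingHalf_mem hT, _, hg.inv.attractingHalf_mem hT, hdisj⟩)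
    (fun h χ hχ χ' hχ' ↦ ((hends χ hχ).smul h).eq_or_disjoint hT (hends χ' hχ'))
    ((hends _ (.inl rfl)).isSolvable_stabilizer hT hedge)
    ((hends _ (.inr rfl)).isSolvable_stabilizer hT hedge)

end IsAxisVertex

theorem titsAlternative_or_exists_forall_smul_eq [PreservesAdj H T] (hT : T.IsTree)
    (hinv : ∀ (h : H) (x : X), ¬ T.Adj x (h • x)) {n : ℕ}
    (hedge : ∀ x y : X, T.Adj x y → derivedSeries
      ↥(MulAction.stabilizer H x ⊓ MulAction.stabilizer H y) n = ⊥) :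
    TitsAlternative H ∨ ∃ x : X, ∀ h : H, h • x = x := by
  by_cases hhyp : ∃ (g : H) (x : X), IsAxisVertex T g x
  · obtain ⟨g, x, hg⟩ := hhyp
    exact .inl (hg.titsAlternative hT hedge)
  refine or_iff_not_imp_right.2 fun hfix ↦ ?_
  push Not at hfix
  have hell : ∀ (g : H) (x : X), dir T x (g • x) = dir T x (g⁻¹ • x) := by
    simpa [IsAxisVertex] using hhyp
  have : Group.IsSolvable H := (Group.isSolvable_def _).2
    ⟨n, derivedSeries_eq_bot_of_elliptic hT hinv hell hedge hfix⟩
  exact .inr .of_isSolvable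

end HyperbolicElements

theorem isTree_of_height {X : Type*} {T : SimpleGraph X} (κ : X → ℕ) (r : X)
    (hne : ∀ x y, T.Adj x y → κ x ≠ κ y)
    (hex : ∀ x, x ≠ r → ∃ y, T.Adj x y ∧ κ y < κ x)
    (huniq : ∀ x y z, T.Adj x y → T.Adj x z → κ y < κ x → κ z < κ x → y = z) : T.IsTree := by
  have hr : ∀ x, T.Reachable x r := by
    intro x
    induction hn : κ x using Nat.strong_induction_on generalizing x with
    | _ n ih =>
      rcases eq_or_ne x r with rfl | hx
      · exact SimpleGraph.Reachable.refl x
      · obtain ⟨y, hxy, hy⟩ := hex x hx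
        exact hxy.reachable.trans (ih (κ y) (hn ▸ hy) y rfl)
  have : Nonempty X := ⟨r⟩
  refine ⟨⟨fun x y ↦ (hr x).trans (hr y).symm⟩, fun v c hc ↦ ?_⟩
  classical
  obtain ⟨m, hm, hmax⟩ := c.support.toFinset.exists_max_image κ ⟨v, by simp⟩
  -- The two neighbours on the cycle of its highest vertex `m` are distinct and lower than `m`.
  have hmc : m ∈ c.support := by simpa using hm
  have hcycle : (c.rotate m hmc).IsCycle := hc.rotate hmc
  have hsnd := SimpleGraph.Walk.adj_snd hcycle.not_nil
  have hpen := (SimpleGraph.Walk.adj_penultimate hcycle.not_nil).symm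
  have hlow : ∀ y, y ∈ (c.rotate m hmc).support → T.Adj m y → κ y < κ m := by
    intro y hy hadj
    refine lt_of_le_of_ne (hmax y ?_) (hne _ _ hadj).symm
    simpa using hy
  exact hcycle.snd_ne_penultimate <| huniq m _ _ hsnd hpen
    (hlow _ (SimpleGraph.Walk.getVert_mem_support _ _) hsnd)
    (hlow _ (SimpleGraph.Walk.getVert_mem_support _ _) hpen)

/-! ### Degrees of plane automorphisms -/

open MvPolynomial MonomialOrder

section Derivatives

variable {σ τ R : Type*} [CommRing R]

theorem algHom_apply_C {F : Type*} [FunLike F (MvPolynomial σ R) (MvPolynomial τ R)]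
    [AlgHomClass F R (MvPolynomial σ R) (MvPolynomial τ R)] (φ : F) (a : R) : φ (C a) = C a :=
  AlgHomClass.commutes φ a

theorem derivation_algHom_apply [Fintype σ] {F : Type*}
    [FunLike F (MvPolynomial σ R) (MvPolynomial τ R)]
    [AlgHomClass F R (MvPolynomial σ R) (MvPolynomial τ R)]
    (D : Derivation R (MvPolynomial τ R) (MvPolynomial τ R)) (φ : F) (p : MvPolynomial σ R) :
    D (φ p) = ∑ i, φ (pderiv i p) * D (φ (X i)) := by
  classical
  induction p using MvPolynomial.induction_on with
  | C a => simp [algHom_apply_C]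
  | add p q hp hq => simp only [map_add, hp, hq, add_mul, Finset.sum_add_distrib]
  | mul_X p i hp =>
    simp only [map_mul, Derivation.leibniz, hp, pderiv_X, smul_eq_mul, map_add, add_mul,
      Finset.sum_add_distrib, Pi.single_apply, apply_ite φ, map_zero, mul_ite, mul_one, mul_zero,
      ite_mul, zero_mul, Finset.mul_sum]
    simp [mul_assoc]

theorem totalDegree_pderiv_le (i : σ) (p : MvPolynomial σ R) :
    (pderiv i p).totalDegree ≤ p.totalDegree - 1 := by
  refine Finset.sup_le fun s hs ↦ ?_
  rw [mem_support_iff, coeff_pderiv] at hs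
  have hle := le_totalDegree (mem_support_iff.2 (left_ne_zero_of_mul hs))
  rw [Finsupp.sum_add_index' (fun _ ↦ rfl) (fun _ _ _ ↦ rfl), Finsupp.sum_single_index rfl] at hle
  omega

theorem coeff_X_mul_pderiv (i : σ) (p : MvPolynomial σ R) (s : σ →₀ ℕ) :
    coeff s (X i * pderiv i p) = s i * coeff s p := by
  classical
  rw [coeff_X_mul', coeff_pderiv]
  split_ifs with h
  · have hi : 1 ≤ s i := Nat.one_le_iff_ne_zero.2 (Finsupp.mem_support_iff.1 h)
    rw [tsub_add_cancel_of_le (Finsupp.single_le_iff.2 hi), Finsupp.tsub_apply,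
      Finsupp.single_eq_same, Nat.cast_sub hi]
    push_cast
    ring
  · simp [Finsupp.notMem_support_iff.1 h]

theorem degree_X_mul_pderiv_le (m : MonomialOrder σ) (i : σ) (p : MvPolynomial σ R) :
    m.degree (X i * pderiv i p) ≼[m] m.degree p := by
  refine degree_le_degree_of_support_subset fun s hs ↦ ?_
  rw [mem_support_iff, coeff_X_mul_pderiv] at hs
  exact mem_support_iff.2 (right_ne_zero_of_mul hs)

end Derivatives

section WeightedDegree

variable {σ τ R F : Type*} [CommRing R] [FunLike F (MvPolynomial σ R) (MvPolynomial τ R)]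
  [AlgHomClass F R (MvPolynomial σ R) (MvPolynomial τ R)]

theorem algHom_apply_monomial (φ : F) (s : σ →₀ ℕ) (c : R) :
    φ (monomial s c) = C c * s.prod fun i e ↦ φ (X i) ^ e := by
  rw [monomial_eq, map_mul, algHom_apply_C, map_finsuppProd]
  simp only [map_pow]

theorem totalDegree_algHom_apply_le (φ : F) (p : MvPolynomial σ R) :
    (φ p).totalDegree ≤ weightedTotalDegree (fun i ↦ (φ (X i)).totalDegree) p := by
  conv_lhs => rw [p.as_sum, map_sum]
  refine totalDegree_finsetSum_le fun s hs ↦ ?_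
  rw [algHom_apply_monomial]
  calc _ ≤ (C (coeff s p)).totalDegree + (s.prod fun i e ↦ φ (X i) ^ e).totalDegree :=
        totalDegree_mul _ _
    _ ≤ ∑ i ∈ s.support, s i * (φ (X i)).totalDegree := by
        rw [totalDegree_C, zero_add]
        exact (totalDegree_finsetProd _ _).trans (Finset.sum_le_sum fun i _ ↦ totalDegree_pow _ _)
    _ ≤ _ := le_weightedTotalDegree _ hs

variable [IsDomain R]

theorem totalDegree_pow_of_isDomain (p : MvPolynomial σ R) (n : ℕ) :
    (p ^ n).totalDegree = n * p.totalDegree := by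
  rcases eq_or_ne p 0 with rfl | hp
  · rcases n with - | n <;> simp
  induction n with
  | zero => simp
  | succ n ih =>
    rw [pow_succ, totalDegree_mul_of_isDomain (pow_ne_zero _ hp) hp, ih, Nat.succ_mul]

theorem totalDegree_algHom_apply_monomial {φ : F} (hφ : ∀ i, φ (X i) ≠ 0) (s : σ →₀ ℕ) {c : R}
    (hc : c ≠ 0) :
    (φ (monomial s c)).totalDegree = Finsupp.weight (fun i ↦ (φ (X i)).totalDegree) s := by
  classical
  have hprod (I : Finset σ) : ∏ i ∈ I, φ (X i) ^ s i ≠ 0 :=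
    Finset.prod_ne_zero_iff.2 fun i _ ↦ pow_ne_zero _ (hφ i)
  rw [algHom_apply_monomial, Finsupp.weight_apply, Finsupp.prod, Finsupp.sum,
    totalDegree_mul_of_isDomain (by simpa using hc) (hprod _),
    totalDegree_C, zero_add]
  induction s.support using Finset.induction_on with
  | empty => simp
  | insert i I hi ih =>
    rw [Finset.prod_insert hi, Finset.sum_insert hi, totalDegree_mul_of_isDomain
      (pow_ne_zero _ (hφ i)) (hprod I), totalDegree_pow_of_isDomain, ih, smul_eq_mul]

theorem totalDegree_algHom_apply_of_forall_weight_lt {φ : F} (hφ : ∀ i, φ (X i) ≠ 0)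
    {p : MvPolynomial σ R} {t : σ →₀ ℕ} (ht : t ∈ p.support)
    (h : ∀ s ∈ p.support, s ≠ t → Finsupp.weight (fun i ↦ (φ (X i)).totalDegree) s <
      Finsupp.weight (fun i ↦ (φ (X i)).totalDegree) t) :
    (φ p).totalDegree = Finsupp.weight (fun i ↦ (φ (X i)).totalDegree) t := by
  classical
  have hlead := totalDegree_algHom_apply_monomial hφ t (mem_support_iff.1 ht)
  rw [p.as_sum, map_sum, ← Finset.add_sum_erase _ _ ht]
  rcases (p.support.erase t).eq_empty_or_nonempty with he | ⟨u, hu⟩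
  · rw [he, Finset.sum_empty, add_zero, hlead]
  have hpos := (Nat.zero_le _).trans_lt
    (h u (Finset.mem_of_mem_erase hu) (Finset.ne_of_mem_erase hu))
  rw [totalDegree_add_eq_left_of_totalDegree_lt, hlead]
  rw [hlead]
  refine lt_of_le_of_lt (totalDegree_finsetSum_le fun s hs ↦ ?_) (Nat.sub_one_lt_of_lt hpos)
  have hs' := Finset.mem_of_mem_erase hs
  rw [totalDegree_algHom_apply_monomial hφ s (mem_support_iff.1 hs')]
  exact Nat.le_sub_one_of_lt (h s hs' (Finset.ne_of_mem_erase hs))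

theorem totalDegree_aeval (f : MvPolynomial σ R) (p : Polynomial R) :
    (Polynomial.aeval f p).totalDegree = p.natDegree * f.totalDegree := by
  rcases Nat.eq_zero_or_pos f.totalDegree with hf | hf
  · rw [totalDegree_eq_zero_iff_eq_C.1 hf, ← algebraMap_eq,
      Polynomial.aeval_algebraMap_apply, algebraMap_eq, totalDegree_C, totalDegree_C, mul_zero]
  rcases Nat.eq_zero_or_pos p.natDegree with hp | hp
  · rw [Polynomial.eq_C_of_natDegree_eq_zero hp]
    simp
  have hf0 : f ≠ 0 := by rintro rfl; simp at hf
  have hlead : C (p.coeff p.natDegree) ≠ (0 : MvPolynomial σ R) := by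
    simpa using Polynomial.ne_zero_of_natDegree_gt hp
  have htop : (p.coeff p.natDegree • f ^ p.natDegree).totalDegree =
      p.natDegree * f.totalDegree := by
    rw [smul_eq_C_mul, totalDegree_mul_of_isDomain hlead (pow_ne_zero _ hf0), totalDegree_C,
      zero_add, totalDegree_pow_of_isDomain]
  rw [Polynomial.aeval_eq_sum_range, Finset.sum_range_succ,
    totalDegree_add_eq_right_of_totalDegree_lt, htop]
  rw [htop]
  refine lt_of_le_of_lt (totalDegree_finsetSum_le (d := (p.natDegree - 1) * f.totalDegree)
    fun i hi ↦ ((totalDegree_smul_le _ _).trans (totalDegree_pow _ _)).trans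
      (Nat.mul_le_mul_right _ ?_)) (Nat.mul_lt_mul_of_pos_right (by lia) hf)
  exact Nat.le_sub_one_of_lt (Finset.mem_range.1 hi)

end WeightedDegree

/-- The coordinate ring of the affine plane. -/
abbrev Plane (R : Type*) [CommRing R] := MvPolynomial (Fin 2) R

/-- The automorphism group of the affine plane, as automorphisms of its coordinate ring. -/
abbrev PlaneAut (R : Type*) [CommRing R] := Plane R ≃ₐ[R] Plane R

section Jacobian

variable {R : Type*} [CommRing R]

/-- The Jacobian determinant of two polynomials in two variables. -/
noncomputable def jac (f g : Plane R) : Plane R :=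
  pderiv 0 f * pderiv 1 g - pderiv 1 f * pderiv 0 g

theorem jac_C (f : Plane R) (a : R) : jac f (C a) = 0 := by simp [jac]

theorem jac_X_zero (f : Plane R) : jac (X 0) f = pderiv 1 f := by simp [jac]

theorem jac_sub_C_mul_pow (f g : Plane R) (a : R) (n : ℕ) :
    jac f (g - C a * f ^ n) = jac f g := by
  simp only [jac, map_sub, pderiv_C_mul, pderiv_pow]
  ring

theorem jac_apply {F : Type*} [FunLike F (Plane R) (Plane R)] [AlgHomClass F R (Plane R) (Plane R)]
    (φ : F) (f g : Plane R) : jac (φ f) (φ g) = φ (jac f g) * jac (φ (X 0)) (φ (X 1)) := by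
  simp only [jac, derivation_algHom_apply _ φ f, derivation_algHom_apply _ φ g, map_sub, map_mul,
    Fin.sum_univ_two]
  ring

theorem exists_jac_eq_C [IsReduced R] (φ : PlaneAut R) :
    ∃ c : R, IsUnit c ∧ jac (φ (X 0)) (φ (X 1)) = C c := by
  have h := jac_apply φ (φ.symm (X 0)) (φ.symm (X 1))
  rw [AlgEquiv.apply_symm_apply, AlgEquiv.apply_symm_apply, jac_X_zero, pderiv_X_self] at h
  exact isUnit_iff_eq_C_of_isReduced.1 (IsUnit.of_mul_eq_one_right _ h.symm)

theorem totalDegree_jac_le (f g : Plane R) :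
    (jac f g).totalDegree ≤ (f.totalDegree - 1) + (g.totalDegree - 1) :=
  (totalDegree_sub _ _).trans <| max_le
    ((totalDegree_mul _ _).trans
      (add_le_add (totalDegree_pderiv_le _ _) (totalDegree_pderiv_le _ _)))
    ((totalDegree_mul _ _).trans
      (add_le_add (totalDegree_pderiv_le _ _) (totalDegree_pderiv_le _ _)))

theorem totalDegree_X_aut_pos [Nontrivial R] (φ : PlaneAut R) (i : Fin 2) :
    1 ≤ (φ (X i)).totalDegree := by
  by_contra! h
  have hC : φ (X i) = φ (C (coeff 0 (φ (X i)))) := by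
    rw [algHom_apply_C]
    exact totalDegree_eq_zero_iff_eq_C.1 (by lia)
  have hdeg := congrArg totalDegree (φ.injective hC)
  rw [totalDegree_X, totalDegree_C] at hdeg
  exact one_ne_zero hdeg

theorem totalDegree_aut_X_mul_pderiv_le [IsDomain R] (φ : PlaneAut R) (f : Plane R) :
    (φ (X 1 * pderiv 1 f)).totalDegree ≤
      (φ f).totalDegree + ((φ (X 0)).totalDegree + (φ (X 1)).totalDegree - 2) := by
  obtain ⟨c, hc, hjac⟩ := exists_jac_eq_C φ
  have hderiv : jac (φ (X 0)) (φ f) = φ (pderiv 1 f) * C c := by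
    rw [jac_apply, jac_X_zero, hjac]
  rcases Nat.eq_zero_or_pos (φ f).totalDegree with hf | hf
  · rw [totalDegree_eq_zero_iff_eq_C.1 hf, jac_C, eq_comm,
      mul_eq_zero_iff_right (by simpa using hc.ne_zero)] at hderiv
    simp [hderiv]
  · have hdeg : (φ (pderiv 1 f)).totalDegree ≤ (jac (φ (X 0)) (φ f)).totalDegree := by
      rw [hderiv]
      rcases eq_or_ne (φ (pderiv 1 f)) 0 with h | h
      · simp [h]
      · rw [totalDegree_mul_of_isDomain h (by simpa using hc.ne_zero)]
        exact Nat.le_add_right _ _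
    have hle := totalDegree_jac_le (φ (X 0)) (φ f)
    have hmul := totalDegree_mul (φ (X 1)) (φ (pderiv 1 f))
    have h₀ := totalDegree_X_aut_pos φ 0
    have h₁ := totalDegree_X_aut_pos φ 1
    rw [map_mul]
    lia

end Jacobian

section Divisibility

variable {R : Type*} [CommRing R]

/-- The exponents of the monomials of highest weight of a polynomial. -/
noncomputable def leadingExponents {σ : Type*} (w : σ → ℕ) (p : MvPolynomial σ R) :
    Finset (σ →₀ ℕ) :=
  {s ∈ p.support | Finsupp.weight w s = weightedTotalDegree w p}

theorem leadingExponents_nonempty {σ : Type*} (w : σ → ℕ) {p : MvPolynomial σ R} (hp : p ≠ 0) :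
    (leadingExponents w p).Nonempty := by
  obtain ⟨s, hs, hmax⟩ :=
    Finset.exists_mem_eq_sup _ (support_nonempty.2 hp) (Finsupp.weight w)
  exact ⟨s, Finset.mem_filter.2 ⟨hs, hmax.symm⟩⟩

theorem weight_fin_two (w : Fin 2 → ℕ) (s : Fin 2 →₀ ℕ) :
    Finsupp.weight w s = s 0 * w 0 + s 1 * w 1 := by
  rw [Finsupp.weight_eq_sum, Fin.sum_univ_two, smul_eq_mul, smul_eq_mul]

theorem eq_of_weight_eq {w : Fin 2 → ℕ} (hw : 0 < w 0) {s t : Fin 2 →₀ ℕ}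
    (h : Finsupp.weight w s = Finsupp.weight w t) (h₁ : s 1 = t 1) : s = t := by
  rw [weight_fin_two, weight_fin_two, h₁, Nat.add_right_cancel_iff] at h
  ext i
  fin_cases i
  exacts [Nat.eq_of_mul_eq_mul_right hw h, h₁]

theorem modEq_of_weight_eq {a b e : ℕ} (he : 0 < e) (hab : a.Coprime b) {s t : Fin 2 →₀ ℕ}
    (h : Finsupp.weight ![a * e, b * e] s = Finsupp.weight ![a * e, b * e] t) :
    s 1 ≡ t 1 [MOD a] := by
  have hdiv : s 0 * a + b * s 1 = t 0 * a + b * t 1 := by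
    rw [weight_fin_two, weight_fin_two] at h
    refine Nat.eq_of_mul_eq_mul_right he ?_
    linarith [show s 0 * (a * e) + s 1 * (b * e) = t 0 * (a * e) + t 1 * (b * e) from h]
  have hmod : s 0 * a + b * s 1 ≡ t 0 * a + b * t 1 [MOD a] := by rw [hdiv]
  exact Nat.ModEq.cancel_left_of_coprime hab (by simpa [Nat.ModEq] using hmod)

theorem card_leadingExponents_le {a b e M : ℕ} (he : 0 < e) (ha : 0 < a) (hab : a.Coprime b)
    {p : Plane R} (hM : ∀ s ∈ leadingExponents ![a * e, b * e] p, s 1 ≤ M) :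
    (leadingExponents ![a * e, b * e] p).card ≤ M / a + 1 := by
  rw [← Finset.card_range (M / a + 1)]
  refine Finset.card_le_card_of_injOn (fun s ↦ s 1 / a) (fun s hs ↦ ?_) fun s hs t ht hst ↦ ?_
  · simpa [Nat.lt_succ_iff] using Nat.div_le_div_right (hM s hs)
  · have hw : Finsupp.weight ![a * e, b * e] s = Finsupp.weight ![a * e, b * e] t :=
      (Finset.mem_filter.1 hs).2.trans (Finset.mem_filter.1 ht).2.symm
    refine eq_of_weight_eq (Nat.mul_pos ha he) hw ?_
    rw [← Nat.div_add_mod (s 1) a, ← Nat.div_add_mod (t 1) a, modEq_of_weight_eq he hab hw,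
      show s 1 / a = t 1 / a from hst]

variable [IsDomain R] (φ : PlaneAut R)

/- The operator `f ↦ X 1 * ∂₁ f - j * f` multiplies the coefficient of an exponent `s` by `s 1 - j`
and, as the Jacobian of `φ` is constant, it raises `deg (φ f)` by little. -/
theorem exists_coeff_eq_prod_mul (f : Plane R) (J : Finset ℕ) :
    ∃ g : Plane R, (∀ s, coeff s g = (∏ j ∈ J, ((s 1 : R) - j)) * coeff s f) ∧
      (φ g).totalDegree ≤ (φ f).totalDegree +
        J.card * ((φ (X 0)).totalDegree + (φ (X 1)).totalDegree - 2) := by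
  classical
  induction J using Finset.induction_on with
  | empty => exact ⟨f, by simp, by simp⟩
  | insert j J hj ih =>
    obtain ⟨g, hcoeff, hdeg⟩ := ih
    refine ⟨X 1 * pderiv 1 g - C (j : R) * g, fun s ↦ ?_, ?_⟩
    · rw [coeff_sub, coeff_X_mul_pderiv, coeff_C_mul, hcoeff, Finset.prod_insert hj]
      ring
    · have hder := totalDegree_aut_X_mul_pderiv_le φ g
      have hmul := totalDegree_mul (C (j : R)) (φ g)
      rw [totalDegree_C] at hmul
      rw [Finset.card_insert_of_notMem hj, map_sub, map_mul φ (C _), algHom_apply_C, Nat.succ_mul]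
      exact (totalDegree_sub _ _).trans (max_le (by lia) (by lia))

theorem weightedTotalDegree_le_totalDegree_aut_add [CharZero R] {f : Plane R} (hf : f ≠ 0) :
    weightedTotalDegree (fun i ↦ (φ (X i)).totalDegree) f ≤ (φ f).totalDegree +
      ((leadingExponents (fun i ↦ (φ (X i)).totalDegree) f).card - 1) *
        ((φ (X 0)).totalDegree + (φ (X 1)).totalDegree - 2) := by
  classical
  set w : Fin 2 → ℕ := fun i ↦ (φ (X i)).totalDegree
  obtain ⟨t, ht⟩ := leadingExponents_nonempty w hf
  obtain ⟨htf, htw⟩ := Finset.mem_filter.1 ht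
  -- Every leading monomial but `t` is killed, so that `φ g` has the weight of `t` as its degree.
  set J := ((leadingExponents w f).erase t).image (· 1)
  have hinj : ∀ s ∈ leadingExponents w f, s 1 = t 1 → s = t := fun s hs hst ↦
    eq_of_weight_eq (totalDegree_X_aut_pos φ 0) ((Finset.mem_filter.1 hs).2.trans htw.symm) hst
  obtain ⟨g, hcoeff, hdeg⟩ := exists_coeff_eq_prod_mul φ f J
  have htg : t ∈ g.support := by
    rw [mem_support_iff, hcoeff]
    refine mul_ne_zero (Finset.prod_ne_zero_iff.2 fun j hj ↦ ?_) (mem_support_iff.1 htf)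
    obtain ⟨s, hs, rfl⟩ := Finset.mem_image.1 hj
    rw [sub_ne_zero, Ne, Nat.cast_inj]
    exact fun h ↦ Finset.ne_of_mem_erase hs (hinj s (Finset.mem_of_mem_erase hs) h.symm)
  have hlead : (φ g).totalDegree = Finsupp.weight w t := by
    refine totalDegree_algHom_apply_of_forall_weight_lt (by simp) htg fun s hs hst ↦ ?_
    change Finsupp.weight w s < Finsupp.weight w t
    rw [htw]
    rw [mem_support_iff, hcoeff] at hs
    have hsf := mem_support_iff.2 (right_ne_zero_of_mul hs)
    refine lt_of_le_of_ne (le_weightedTotalDegree w hsf) fun hsw ↦ left_ne_zero_of_mul hs ?_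
    have hsJ : s 1 ∈ J := Finset.mem_image_of_mem _
      (Finset.mem_erase.2 ⟨hst, Finset.mem_filter.2 ⟨hsf, hsw⟩⟩)
    exact Finset.prod_eq_zero hsJ (sub_self _)
  have hcard : J.card ≤ (leadingExponents w f).card - 1 :=
    Finset.card_image_le.trans (Finset.card_erase_of_mem ht).le
  rw [← htw, ← hlead]
  exact hdeg.trans (Nat.add_le_add_left (Nat.mul_le_mul_right _ hcard) _)

theorem not_mul_le_one_add_mul_sub_two {a b e T : ℕ} (ha : 2 ≤ a) (hb : 2 ≤ b) (he : 0 < e)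
    (hT : 0 < T) : ¬ T * a * (b * e) ≤ 1 + T * (a * e + b * e - 2) := by
  intro h
  have hae : 2 ≤ a * e := ha.trans (Nat.le_mul_of_pos_right a he)
  obtain ⟨r, hr⟩ : ∃ r, a * e + b * e = r + 2 := ⟨a * e + b * e - 2, by lia⟩
  have hadd : a + b ≤ a * b := by nlinarith
  have hle : T * (r + 2) ≤ T * a * (b * e) := by
    rw [← hr, mul_assoc, ← add_mul, ← mul_assoc a]
    gcongr
  rw [hr, Nat.add_sub_cancel] at h
  lia

theorem totalDegree_dvd_or_dvd [CharZero R] :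
    (φ (X 0)).totalDegree ∣ (φ (X 1)).totalDegree ∨
      (φ (X 1)).totalDegree ∣ (φ (X 0)).totalDegree := by
  by_contra! hcon
  have hpos := totalDegree_X_aut_pos φ 0
  obtain ⟨e, a, b, he, hab, hae, hbe⟩ := Nat.exists_coprime'
    (Nat.gcd_pos_of_pos_left (φ (X 1)).totalDegree hpos)
  have hdeg : (fun i ↦ (φ (X i)).totalDegree) = ![a * e, b * e] := by
    ext i
    fin_cases i
    exacts [hae, hbe]
  rw [hae, hbe] at hcon
  have ha : 2 ≤ a := (Nat.two_le_iff a).2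
    ⟨by rintro rfl; simp [hae] at hpos, by rintro rfl; simp at hcon⟩
  have hb : 2 ≤ b := (Nat.two_le_iff b).2 ⟨by rintro rfl; simp at hcon, by rintro rfl; simp at hcon⟩
  set f := φ.symm (X 0) with hf
  have hφf : φ f = X 0 := φ.apply_symm_apply _
  have hle := weightedTotalDegree_le_totalDegree_aut_add φ (f := f) (by simp [hf])
  have hone : 1 ≤ weightedTotalDegree (fun i ↦ (φ (X i)).totalDegree) f := by
    rw [← totalDegree_X (R := R) (0 : Fin 2), ← hφf]
    exact totalDegree_algHom_apply_le φ f
  rw [hφf, totalDegree_X, hdeg, hae, hbe] at hle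
  rw [hdeg] at hone
  obtain ⟨t, ht, hmax⟩ := Finset.exists_max_image _ (· 1)
    (leadingExponents_nonempty ![a * e, b * e] (p := f) (by simp [hf]))
  have hcard := card_leadingExponents_le he (by lia) hab hmax
  have htw := (Finset.mem_filter.1 ht).2
  rw [weight_fin_two] at htw
  change t 0 * (a * e) + t 1 * (b * e) = _ at htw
  set T := (leadingExponents ![a * e, b * e] f).card - 1
  rcases Nat.eq_zero_or_pos T with hT | hT
  · rw [hT, zero_mul, add_zero] at hle
    have h2 : a * e ≠ 1 ∧ b * e ≠ 1 := by constructor <;> nlinarith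
    rcases Nat.add_eq_one_iff.1 (htw.trans (le_antisymm hle hone)) with ⟨-, h⟩ | ⟨h, -⟩
    · exact h2.2 (Nat.eq_one_of_mul_eq_one_left h)
    · exact h2.1 (Nat.eq_one_of_mul_eq_one_left h)
  · refine not_mul_le_one_add_mul_sub_two ha hb he hT (le_trans ?_ hle)
    have hTa : T * a ≤ t 1 := (Nat.le_div_iff_mul_le (by lia)).1 (by lia)
    exact (Nat.mul_le_mul_right _ hTa).trans (htw ▸ Nat.le_add_left _ _)

end Divisibility

section Reduction

variable {R : Type*} [CommRing R]

theorem coeff_X_mul_X_mul_jac (m : MonomialOrder (Fin 2)) (f g : Plane R) :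
    coeff (m.degree f + m.degree g) (X 0 * X 1 * jac f g) =
      (m.degree f 0 * m.degree g 1 - m.degree f 1 * m.degree g 0) *
        (m.leadingCoeff f * m.leadingCoeff g) := by
  have hsplit : X 0 * X 1 * jac f g = X 0 * pderiv 0 f * (X 1 * pderiv 1 g) -
      X 1 * pderiv 1 f * (X 0 * pderiv 0 g) := by
    rw [jac]
    ring
  rw [hsplit, coeff_sub, coeff_mul_of_add_of_degree_le (degree_X_mul_pderiv_le m 0 f)
    (degree_X_mul_pderiv_le m 1 g), coeff_mul_of_add_of_degree_le (degree_X_mul_pderiv_le m 1 f)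
    (degree_X_mul_pderiv_le m 0 g)]
  simp only [coeff_X_mul_pderiv, leadingCoeff]
  ring

variable [IsDomain R] [CharZero R]

theorem degree_mul_degree_eq_of_jac_eq_C {f g : Plane R} {c : R} (h : jac f g = C c)
    (hd : 2 < f.totalDegree + g.totalDegree) :
    degLex.degree f 0 * degLex.degree g 1 = degLex.degree f 1 * degLex.degree g 0 := by
  rcases eq_or_ne f 0 with rfl | hf
  · simp
  rcases eq_or_ne g 0 with rfl | hg
  · simp
  have hvanish : coeff (degLex.degree f + degLex.degree g) (X 0 * X 1 * jac f g) = 0 := by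
    refine coeff_eq_zero_of_totalDegree_lt (lt_of_lt_of_le ?_
      (show f.totalDegree + g.totalDegree ≤ Finsupp.degree (degLex.degree f + degLex.degree g) by
        rw [map_add, degree_degLexDegree, degree_degLexDegree]))
    have hXX := totalDegree_mul (X 0 : Plane R) (X 1)
    have hmul := totalDegree_mul (X 0 * X 1) (jac f g)
    rw [h, totalDegree_C] at hmul
    rw [totalDegree_X, totalDegree_X] at hXX
    rw [h]
    lia
  rw [coeff_X_mul_X_mul_jac, mul_eq_zero_iff_right (mul_ne_zero
    (degLex.leadingCoeff_ne_zero_iff.2 hf) (degLex.leadingCoeff_ne_zero_iff.2 hg)),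
    sub_eq_zero] at hvanish
  exact_mod_cast hvanish

theorem degree_eq_smul_of_jac_eq_C {f g : Plane R} {c : R} (h : jac f g = C c) {d : ℕ}
    (hf : 1 ≤ f.totalDegree) (hg : 2 ≤ g.totalDegree) (hd : g.totalDegree = d * f.totalDegree) :
    degLex.degree g = d • degLex.degree f := by
  have hpar := degree_mul_degree_eq_of_jac_eq_C h (by lia)
  rw [← degree_degLexDegree, ← degree_degLexDegree, Finsupp.degree_eq_sum, Finsupp.degree_eq_sum,
    Fin.sum_univ_two, Fin.sum_univ_two] at hd
  rw [← degree_degLexDegree, Finsupp.degree_eq_sum, Fin.sum_univ_two] at hf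
  generalize degLex.degree f = p at *
  generalize degLex.degree g = q at *
  ext i
  rw [Finsupp.smul_apply, smul_eq_mul]
  refine Nat.eq_of_mul_eq_mul_right hf ?_
  fin_cases i
  · calc q 0 * (p 0 + p 1) = q 0 * p 0 + p 1 * q 0 := by ring
      _ = p 0 * (q 0 + q 1) := by rw [← hpar]; ring
      _ = d * p 0 * (p 0 + p 1) := by rw [hd]; ring
  · calc q 1 * (p 0 + p 1) = q 1 * p 1 + p 0 * q 1 := by ring
      _ = p 1 * (q 0 + q 1) := by rw [hpar]; ring
      _ = d * p 1 * (p 0 + p 1) := by rw [hd]; ring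

theorem exists_totalDegree_sub_lt_of_jac_eq_C {k : Type*} [Field k] [CharZero k] {f g : Plane k}
    {c : k} (h : jac f g = C c) {d : ℕ} (hf : 1 ≤ f.totalDegree) (hg : 2 ≤ g.totalDegree)
    (hd : g.totalDegree = d * f.totalDegree) :
    ∃ a : k, (g - C a * f ^ d).totalDegree < g.totalDegree := by
  have hf0 : f ≠ 0 := by rintro rfl; simp at hf
  have hlead := pow_ne_zero d (degLex.leadingCoeff_ne_zero_iff.2 hf0)
  refine ⟨degLex.leadingCoeff g / degLex.leadingCoeff f ^ d, ?_⟩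
  set r := g - C (degLex.leadingCoeff g / degLex.leadingCoeff f ^ d) * f ^ d with hr
  by_contra! hlt
  have hle : r.totalDegree ≤ g.totalDegree := by
    refine (totalDegree_sub _ _).trans (max_le le_rfl ((totalDegree_mul _ _).trans ?_))
    rw [totalDegree_C, zero_add, totalDegree_pow_of_isDomain, hd]
  have hrg := le_antisymm hle hlt
  -- `r` has the same Jacobian with `f` as `g`, hence the same leading exponent; but its
  -- coefficient there is zero by the choice of the constant.
  have hdeg := degree_eq_smul_of_jac_eq_C h hf hg hd
  have hdegr := degree_eq_smul_of_jac_eq_C ((jac_sub_C_mul_pow f g _ d).trans h) hf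
    (hrg ▸ hg) (hrg.trans hd)
  have hr0 : r ≠ 0 := by
    rintro h0
    rw [h0, totalDegree_zero] at hrg
    lia
  refine degLex.coeff_degree_ne_zero_iff.2 hr0 ?_
  rw [hdegr, hr, coeff_sub, coeff_C_mul, degLex.coeff_pow_nsmul_degree,
    div_mul_cancel₀ _ hlead, ← hdeg]
  exact sub_self _

theorem exists_totalDegree_sub_lt {k : Type*} [Field k] [CharZero k] (φ : PlaneAut k)
    (hle : (φ (X 0)).totalDegree ≤ (φ (X 1)).totalDegree) (h₂ : 2 ≤ (φ (X 1)).totalDegree) :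
    ∃ (a : k) (d : ℕ), (φ (X 1)).totalDegree = d * (φ (X 0)).totalDegree ∧
      (φ (X 1) - C a * φ (X 0) ^ d).totalDegree < (φ (X 1)).totalDegree := by
  have hpos := totalDegree_X_aut_pos φ 0
  obtain ⟨d, hd⟩ : (φ (X 0)).totalDegree ∣ (φ (X 1)).totalDegree :=
    (totalDegree_dvd_or_dvd φ).elim id fun h ↦
      dvd_of_eq (le_antisymm hle (Nat.le_of_dvd hpos h))
  rw [mul_comm] at hd
  obtain ⟨c, -, hjac⟩ := exists_jac_eq_C φ
  obtain ⟨a, ha⟩ := exists_totalDegree_sub_lt_of_jac_eq_C hjac hpos h₂ hd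
  exact ⟨a, d, hd, ha⟩

end Reduction

/-! ### The tree of the plane -/

section Elementary

variable {R : Type*} [CommRing R]

theorem aut_ext {φ ψ : PlaneAut R} (h : ∀ i, φ (X i) = ψ (X i)) : φ = ψ :=
  AlgEquiv.coe_toAlgHom_injective <| MvPolynomial.algHom_ext h

variable (R) in
/-- The automorphism exchanging the coordinates. -/
noncomputable def flip : PlaneAut R := renameEquiv R (Equiv.swap 0 1)

theorem mul_flip_X_zero (φ : PlaneAut R) : (φ * flip R) (X 0) = φ (X 1) := by simp [flip]

theorem mul_flip_X_one (φ : PlaneAut R) : (φ * flip R) (X 1) = φ (X 0) := by simp [flip]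

/-- The endomorphism `X 0 ↦ X 0`, `X 1 ↦ c X 1 + p (X 0)` of the coordinate ring of the plane. -/
noncomputable def shearHom (c : R) (p : Polynomial R) : Plane R →ₐ[R] Plane R :=
  aeval ![X 0, C c * X 1 + Polynomial.aeval (X 0) p]

theorem shearHom_comp_shearHom {c c' : R} {p p' : Polynomial R} (hc : c' * c = 1)
    (hp : Polynomial.C c' * p + p' = 0) :
    (shearHom c p).comp (shearHom c' p') = AlgHom.id R _ := by
  have hp' := congrArg (Polynomial.aeval (X 0 : Plane R)) hp
  rw [map_add, map_mul, Polynomial.aeval_C, algebraMap_eq, map_zero] at hp'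
  refine MvPolynomial.algHom_ext <| Fin.forall_fin_two.2 ⟨by simp [shearHom], ?_⟩
  simp only [shearHom, AlgHom.comp_apply, aeval_X, Matrix.cons_val_one,
    Matrix.cons_val_fin_one, map_add, map_mul, algHom_C, algebraMap_eq,
    ← Polynomial.aeval_algHom_apply, Matrix.cons_val_zero, AlgHom.id_apply]
  rw [mul_add, ← mul_assoc, ← C_mul, hc, C_1, one_mul, add_assoc, hp', add_zero]

/-- The triangular automorphism `X 0 ↦ X 0`, `X 1 ↦ u X 1 + p (X 0)` of the plane. -/
noncomputable def shear (u : Rˣ) (p : Polynomial R) : PlaneAut R :=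
  .ofAlgHom (shearHom u p) (shearHom (↑u⁻¹ : R) (-(Polynomial.C (↑u⁻¹ : R) * p)))
    (shearHom_comp_shearHom u.inv_mul (add_neg_cancel (Polynomial.C (↑u⁻¹ : R) * p)))
    (shearHom_comp_shearHom u.mul_inv (by
      rw [mul_neg, ← mul_assoc, ← Polynomial.C_mul, u.mul_inv, Polynomial.C_1, one_mul,
        neg_add_cancel]))

theorem mul_shear_X_zero (φ : PlaneAut R) (u : Rˣ) (p : Polynomial R) :
    (φ * shear u p) (X 0) = φ (X 0) := by
  simp [shear, shearHom]

theorem mul_shear_X_one (φ : PlaneAut R) (u : Rˣ) (p : Polynomial R) :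
    (φ * shear u p) (X 1) = C (u : R) * φ (X 1) + Polynomial.aeval (φ (X 0)) p := by
  simp [shear, shearHom, Polynomial.aeval_algHom_apply, algHom_apply_C]

theorem pderiv_one_aeval_X_zero (p : Polynomial R) :
    pderiv 1 (Polynomial.aeval (X 0 : Plane R) p) = 0 := by
  rw [Derivation.map_aeval, pderiv_X_of_ne zero_ne_one, smul_zero]

theorem exists_aeval_eq_of_pderiv_eq_zero [IsDomain R] [CharZero R] {g : Plane R}
    (h : pderiv 1 g = 0) : ∃ p : Polynomial R, Polynomial.aeval (X 0) p = g := by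
  refine ⟨∑ s ∈ g.support, Polynomial.monomial (s 0) (coeff s g), ?_⟩
  conv_rhs => rw [g.as_sum]
  rw [map_sum]
  refine Finset.sum_congr rfl fun s hs ↦ ?_
  have hmul := coeff_X_mul_pderiv 1 g s
  rw [h, mul_zero, coeff_zero, eq_comm, mul_eq_zero, Nat.cast_eq_zero] at hmul
  have hs₁ : s 1 = 0 := hmul.resolve_right (mem_support_iff.1 hs)
  rw [Polynomial.aeval_monomial, algebraMap_eq, monomial_eq, Finsupp.prod_fintype _ _ (by simp),
    Fin.prod_univ_two, hs₁, pow_zero, mul_one]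

end Elementary

section Spans

variable {R : Type*} [CommRing R]

variable (R) in
/-- The space of polynomials of degree at most one. -/
noncomputable def planeSpan : Submodule R (Plane R) := Submodule.span R {1, X 0, X 1}

variable (R) in
/-- The space of polynomials of degree at most one in the first coordinate alone. -/
noncomputable def lineSpan : Submodule R (Plane R) := Submodule.span R {1, X 0}

theorem mem_smul_planeSpan {φ : PlaneAut R} {g : Plane R} :
    g ∈ φ • planeSpan R ↔ ∃ a b c : R, C a + C b * φ (X 0) + C c * φ (X 1) = g := by
  rw [Submodule.mem_smul_pointwise_iff_exists]
  constructor
  · rintro ⟨s, hs, rfl⟩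
    obtain ⟨a, b, c, rfl⟩ := Submodule.mem_span_triple.1 hs
    exact ⟨a, b, c, by simp [smul_eq_C_mul, algHom_apply_C]⟩
  · rintro ⟨a, b, c, rfl⟩
    exact ⟨a • 1 + b • X 0 + c • X 1, Submodule.mem_span_triple.2 ⟨a, b, c, rfl⟩,
      by simp [smul_eq_C_mul, algHom_apply_C]⟩

theorem mem_smul_lineSpan {φ : PlaneAut R} {g : Plane R} :
    g ∈ φ • lineSpan R ↔ ∃ a b : R, C a + C b * φ (X 0) = g := by
  rw [Submodule.mem_smul_pointwise_iff_exists]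
  constructor
  · rintro ⟨s, hs, rfl⟩
    obtain ⟨a, b, rfl⟩ := Submodule.mem_span_pair.1 hs
    exact ⟨a, b, by simp [smul_eq_C_mul, algHom_apply_C]⟩
  · rintro ⟨a, b, rfl⟩
    exact ⟨a • 1 + b • X 0, Submodule.mem_span_pair.2 ⟨a, b, rfl⟩,
      by simp [smul_eq_C_mul, algHom_apply_C]⟩

theorem smul_planeSpan_le {φ : PlaneAut R} {S : Submodule R (Plane R)} :
    φ • planeSpan R ≤ S ↔ (1 : Plane R) ∈ S ∧ φ (X 0) ∈ S ∧ φ (X 1) ∈ S := by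
  constructor
  · intro h
    exact ⟨h (mem_smul_planeSpan.2 ⟨1, 0, 0, by simp⟩), h (mem_smul_planeSpan.2 ⟨0, 1, 0, by simp⟩),
      h (mem_smul_planeSpan.2 ⟨0, 0, 1, by simp⟩)⟩
  · rintro ⟨h, h₀, h₁⟩ g hg
    obtain ⟨a, b, c, rfl⟩ := mem_smul_planeSpan.1 hg
    rw [← mul_one (C a), ← smul_eq_C_mul, ← smul_eq_C_mul, ← smul_eq_C_mul]
    exact S.add_mem (S.add_mem (S.smul_mem _ h) (S.smul_mem _ h₀)) (S.smul_mem _ h₁)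

theorem smul_lineSpan_le {φ : PlaneAut R} {S : Submodule R (Plane R)} :
    φ • lineSpan R ≤ S ↔ (1 : Plane R) ∈ S ∧ φ (X 0) ∈ S := by
  constructor
  · intro h
    exact ⟨h (mem_smul_lineSpan.2 ⟨1, 0, by simp⟩), h (mem_smul_lineSpan.2 ⟨0, 1, by simp⟩)⟩
  · rintro ⟨h, h₀⟩ g hg
    obtain ⟨a, b, rfl⟩ := mem_smul_lineSpan.1 hg
    rw [← mul_one (C a), ← smul_eq_C_mul, ← smul_eq_C_mul]
    exact S.add_mem (S.smul_mem _ h) (S.smul_mem _ h₀)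

theorem one_mem_smul_planeSpan (φ : PlaneAut R) : (1 : Plane R) ∈ φ • planeSpan R :=
  (smul_planeSpan_le.1 le_rfl).1

theorem X_mem_smul_planeSpan (φ : PlaneAut R) (i : Fin 2) : φ (X i) ∈ φ • planeSpan R :=
  Fin.forall_fin_two (p := fun i ↦ φ (X i) ∈ φ • planeSpan R).2 (smul_planeSpan_le.1 le_rfl).2 i

theorem one_mem_smul_lineSpan (φ : PlaneAut R) : (1 : Plane R) ∈ φ • lineSpan R :=
  (smul_lineSpan_le.1 le_rfl).1

theorem X_mem_smul_lineSpan (φ : PlaneAut R) : φ (X 0) ∈ φ • lineSpan R :=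
  (smul_lineSpan_le.1 le_rfl).2

theorem smul_lineSpan_le_smul_planeSpan (φ : PlaneAut R) :
    φ • lineSpan R ≤ φ • planeSpan R :=
  smul_lineSpan_le.2 ⟨one_mem_smul_planeSpan φ, X_mem_smul_planeSpan φ 0⟩

theorem C_mul_add_aeval_mem_smul_planeSpan (φ : PlaneAut R) (c : R) {p : Polynomial R}
    (hp : p.natDegree ≤ 1) :
    C c * φ (X 1) + Polynomial.aeval (φ (X 0)) p ∈ φ • planeSpan R := by
  rw [Polynomial.eq_X_add_C_of_natDegree_le_one hp]
  refine mem_smul_planeSpan.2 ⟨p.coeff 0, p.coeff 1, c, ?_⟩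
  simp only [map_add, map_mul, Polynomial.aeval_C, Polynomial.aeval_X, algebraMap_eq]
  ring

theorem mem_planeSpan_of_totalDegree_le_one {g : Plane R} (hg : g.totalDegree ≤ 1) :
    g ∈ planeSpan R := by
  rw [g.as_sum]
  refine Submodule.sum_mem _ fun s hs ↦ ?_
  have hdeg := (le_totalDegree hs).trans hg
  rw [Finsupp.sum_fintype _ _ (by simp), Fin.sum_univ_two] at hdeg
  rw [monomial_eq, Finsupp.prod_fintype _ _ (by simp), Fin.prod_univ_two, ← smul_eq_C_mul]
  refine Submodule.smul_mem _ _ (Submodule.subset_span ?_)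
  obtain ⟨h₀, h₁⟩ | ⟨h₀, h₁⟩ | ⟨h₀, h₁⟩ :
      (s 0 = 0 ∧ s 1 = 0) ∨ (s 0 = 1 ∧ s 1 = 0) ∨ (s 0 = 0 ∧ s 1 = 1) := by lia
  all_goals simp [h₀, h₁]

theorem linearIndependent_one_X : LinearIndependent R ![(1 : Plane R), X 0, X 1] := by
  let s : Fin 3 → Fin 2 →₀ ℕ := ![0, Finsupp.single 0 1, Finsupp.single 1 1]
  have hs : Function.Injective s := by
    intro i j h
    fin_cases i <;> fin_cases j <;>
      simp [s, Finsupp.single_left_inj, eq_comm (a := (0 : Fin 2 →₀ ℕ))] at h ⊢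
  have hcomp : basisMonomials (Fin 2) R ∘ s = ![1, X 0, X 1] := by
    ext i : 1
    fin_cases i <;> simp [s, X]
  exact hcomp ▸ (basisMonomials (Fin 2) R).linearIndependent.comp s hs

end Spans

section Vertices

variable {k : Type*} [Field k]

theorem finrank_smul (φ : PlaneAut k) (S : Submodule k (Plane k)) :
    Module.finrank k ↥(φ • S) = Module.finrank k S :=
  LinearEquiv.finrank_map_eq φ.toLinearEquiv S

theorem finrank_smul_planeSpan (φ : PlaneAut k) : Module.finrank k ↥(φ • planeSpan k) = 3 := by
  have h := finrank_span_eq_card (linearIndependent_one_X (R := k))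
  rwa [Matrix.range_cons, Matrix.range_cons, Matrix.range_cons, Matrix.range_empty,
    Set.union_empty, Set.singleton_union, Set.singleton_union, Fintype.card_fin, ← planeSpan,
    ← finrank_smul φ] at h

theorem finrank_smul_lineSpan (φ : PlaneAut k) : Module.finrank k ↥(φ • lineSpan k) = 2 := by
  have hlin : LinearIndependent k ![(1 : Plane k), X 0] := by
    have hcomp : ![(1 : Plane k), X 0, X 1] ∘ ![0, 1] = ![1, X 0] := by
      ext i : 1
      fin_cases i <;> rfl
    exact hcomp ▸ linearIndependent_one_X.comp ![0, 1] (by decide)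
  have h := finrank_span_eq_card hlin
  rwa [Matrix.range_cons, Matrix.range_cons, Matrix.range_empty,
    Set.union_empty, Set.singleton_union, Fintype.card_fin, ← lineSpan, ← finrank_smul φ] at h

instance finiteDimensional_smul_planeSpan (φ : PlaneAut k) :
    FiniteDimensional k ↥(φ • planeSpan k) :=
  Module.finite_of_finrank_pos (by simp [finrank_smul_planeSpan])

instance finiteDimensional_smul_lineSpan (φ : PlaneAut k) :
    FiniteDimensional k ↥(φ • lineSpan k) :=
  Module.finite_of_finrank_pos (by simp [finrank_smul_lineSpan])

theorem smul_planeSpan_eq_of_le {φ ψ : PlaneAut k} (h : φ • planeSpan k ≤ ψ • planeSpan k) :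
    φ • planeSpan k = ψ • planeSpan k :=
  Submodule.eq_of_le_of_finrank_le h (by rw [finrank_smul_planeSpan, finrank_smul_planeSpan])

theorem smul_lineSpan_eq_of_le {φ ψ : PlaneAut k} (h : φ • lineSpan k ≤ ψ • lineSpan k) :
    φ • lineSpan k = ψ • lineSpan k :=
  Submodule.eq_of_le_of_finrank_le h (by rw [finrank_smul_lineSpan, finrank_smul_lineSpan])

theorem smul_planeSpan_ne_smul_lineSpan (φ ψ : PlaneAut k) :
    φ • planeSpan k ≠ ψ • lineSpan k := fun h ↦ by
  have hrank := finrank_smul_planeSpan φ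
  rw [h, finrank_smul_lineSpan] at hrank
  lia

theorem smul_lineSpan_lt_smul_planeSpan (φ : PlaneAut k) : φ • lineSpan k < φ • planeSpan k :=
  (smul_lineSpan_le_smul_planeSpan φ).lt_of_ne (smul_planeSpan_ne_smul_lineSpan φ φ).symm

theorem mul_flip_smul_planeSpan (φ : PlaneAut k) :
    (φ * flip k) • planeSpan k = φ • planeSpan k := by
  refine smul_planeSpan_eq_of_le (smul_planeSpan_le.2 ⟨one_mem_smul_planeSpan φ, ?_, ?_⟩)
  · rw [mul_flip_X_zero]
    exact X_mem_smul_planeSpan φ 1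
  · rw [mul_flip_X_one]
    exact X_mem_smul_planeSpan φ 0

theorem mul_shear_smul_planeSpan (φ : PlaneAut k) (u : kˣ) {p : Polynomial k}
    (hp : p.natDegree ≤ 1) : (φ * shear u p) • planeSpan k = φ • planeSpan k := by
  refine smul_planeSpan_eq_of_le (smul_planeSpan_le.2 ⟨one_mem_smul_planeSpan φ, ?_, ?_⟩)
  · rw [mul_shear_X_zero]
    exact X_mem_smul_planeSpan φ 0
  · rw [mul_shear_X_one]
    exact C_mul_add_aeval_mem_smul_planeSpan φ u hp

theorem mul_shear_smul_lineSpan (φ : PlaneAut k) (u : kˣ) (p : Polynomial k) :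
    (φ * shear u p) • lineSpan k = φ • lineSpan k :=
  smul_lineSpan_eq_of_le <| smul_lineSpan_le.2
    ⟨one_mem_smul_lineSpan φ, by rw [mul_shear_X_zero]; exact X_mem_smul_lineSpan φ⟩

theorem aut_X_zero_ne_C (φ : PlaneAut k) (a : k) : φ (X 0) ≠ C a := fun h ↦ by
  have hdeg := totalDegree_X_aut_pos φ 0
  rw [h, totalDegree_C] at hdeg
  lia

theorem exists_aut_X_zero_eq (φ : PlaneAut k) {a b c : k} (hbc : ¬ (b = 0 ∧ c = 0)) :
    ∃ ψ : PlaneAut k, ψ (X 0) = C a + C b * φ (X 0) + C c * φ (X 1) ∧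
      ψ • planeSpan k = φ • planeSpan k := by
  by_cases hb : b = 0
  · have hc : c ≠ 0 := fun hc ↦ hbc ⟨hb, hc⟩
    refine ⟨φ * shear (Units.mk0 c hc) (Polynomial.C a) * flip k, ?_, ?_⟩
    · rw [mul_flip_X_zero, mul_shear_X_one, hb, Polynomial.aeval_C, algebraMap_eq, Units.val_mk0,
        C_0, zero_mul, add_zero, add_comm]
    · rw [mul_flip_smul_planeSpan, mul_shear_smul_planeSpan _ _ (by simp)]
  · let p := Polynomial.C c * Polynomial.X + Polynomial.C a
    have hp : p.natDegree ≤ 1 := Polynomial.natDegree_linear_le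
    refine ⟨φ * flip k * shear (Units.mk0 b hb) p * flip k, ?_, ?_⟩
    · simp only [p, mul_flip_X_zero, mul_shear_X_one, mul_flip_X_one, Units.val_mk0, map_add,
        map_mul, Polynomial.aeval_C, Polynomial.aeval_X, algebraMap_eq]
      ring
    · rw [mul_flip_smul_planeSpan, mul_shear_smul_planeSpan _ _ hp, mul_flip_smul_planeSpan]

theorem exists_aut_of_smul_lineSpan_le {φ φ' : PlaneAut k}
    (h : φ • lineSpan k ≤ φ' • planeSpan k) :
    ∃ ψ : PlaneAut k, ψ • lineSpan k = φ • lineSpan k ∧ ψ • planeSpan k = φ' • planeSpan k := by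
  obtain ⟨a, b, c, habc⟩ := mem_smul_planeSpan.1 (smul_lineSpan_le.1 h).2
  obtain ⟨ψ, hψ₀, hψ⟩ := exists_aut_X_zero_eq φ' (a := a) (b := b) (c := c) <| by
    rintro ⟨rfl, rfl⟩
    exact aut_X_zero_ne_C φ a (by simp [← habc])
  refine ⟨ψ, smul_lineSpan_eq_of_le (smul_lineSpan_le.2 ⟨one_mem_smul_lineSpan φ, ?_⟩), hψ⟩
  rw [hψ₀, habc]
  exact X_mem_smul_lineSpan φ

theorem exists_form_of_smul_lineSpan [CharZero k] {θ : PlaneAut k}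
    (h : θ • lineSpan k = lineSpan k) :
    ∃ (a b c : k) (p : Polynomial k), θ (X 0) = C a * X 0 + C b ∧
      θ (X 1) = C c * X 1 + Polynomial.aeval (X 0) p := by
  have hle : θ • lineSpan k ≤ (1 : PlaneAut k) • lineSpan k := by rw [h, one_smul]
  obtain ⟨b, a, hab⟩ := mem_smul_lineSpan.1 (smul_lineSpan_le.1 hle).2
  rw [AlgEquiv.one_apply] at hab
  have ha : a ≠ 0 := by
    rintro rfl
    exact aut_X_zero_ne_C θ b (by simp [← hab])
  obtain ⟨c, -, hjac⟩ := exists_jac_eq_C θ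
  have hder : pderiv 1 (θ (X 1)) = C (c / a) := by
    have hmul : C a * pderiv 1 (θ (X 1)) = C c := by
      rw [← hjac, jac, ← hab]
      simp
    rw [div_eq_mul_inv, mul_comm c, C_mul, ← hmul, ← mul_assoc, ← C_mul, inv_mul_cancel₀ ha, C_1,
      one_mul]
  obtain ⟨p, hp⟩ := exists_aeval_eq_of_pderiv_eq_zero (g := θ (X 1) - C (c / a) * X 1)
    (by simp [hder])
  exact ⟨a, b, c / a, p, by rw [← hab, add_comm], by rw [hp, add_sub_cancel]⟩

theorem exists_X_one_eq_of_smul_lineSpan_eq [CharZero k] {φ ψ : PlaneAut k}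
    (h : ψ • lineSpan k = φ • lineSpan k) :
    ∃ (c : k) (p : Polynomial k), ψ (X 1) = C c * φ (X 1) + Polynomial.aeval (φ (X 0)) p := by
  obtain ⟨-, -, c, p, -, h₁⟩ := exists_form_of_smul_lineSpan (θ := φ⁻¹ * ψ)
    (by rw [mul_smul, h, inv_smul_smul])
  refine ⟨c, p, ?_⟩
  have hφ := congrArg φ h₁
  rwa [← AlgEquiv.mul_apply, mul_inv_cancel_left, map_add, map_mul, algHom_apply_C,
    ← Polynomial.aeval_algHom_apply] at hφ

end Vertices

section Heights

variable {k : Type*} [Field k]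

/-- The least bound for the degrees of the elements of a space of polynomials. -/
noncomputable def degreeBound (S : Submodule k (Plane k)) : ℕ :=
  sInf {d | S ≤ restrictTotalDegree (Fin 2) k d}

theorem degreeBound_eq {S : Submodule k (Plane k)} {n : ℕ}
    (h : ∀ d, S ≤ restrictTotalDegree (Fin 2) k d ↔ n ≤ d) : degreeBound S = n := by
  rw [degreeBound, show {d | S ≤ restrictTotalDegree (Fin 2) k d} = Set.Ici n from Set.ext h,
    csInf_Ici]

theorem smul_planeSpan_le_restrictTotalDegree {φ : PlaneAut k} {d : ℕ} :
    φ • planeSpan k ≤ restrictTotalDegree (Fin 2) k d ↔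
      max (φ (X 0)).totalDegree (φ (X 1)).totalDegree ≤ d := by
  simp [smul_planeSpan_le, mem_restrictTotalDegree]

theorem smul_lineSpan_le_restrictTotalDegree {φ : PlaneAut k} {d : ℕ} :
    φ • lineSpan k ≤ restrictTotalDegree (Fin 2) k d ↔ (φ (X 0)).totalDegree ≤ d := by
  simp [smul_lineSpan_le, mem_restrictTotalDegree]

/-- The height of a space of polynomials, which orients the tree of the plane towards its root.
The parity of the height tells the two kinds of vertices apart. -/
noncomputable def height (S : Submodule k (Plane k)) : ℕ :=
  2 * degreeBound S + (3 - Module.finrank k S)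

theorem height_smul_planeSpan (φ : PlaneAut k) :
    height (φ • planeSpan k) = 2 * max (φ (X 0)).totalDegree (φ (X 1)).totalDegree := by
  rw [height, finrank_smul_planeSpan,
    degreeBound_eq fun d ↦ smul_planeSpan_le_restrictTotalDegree, Nat.sub_self, add_zero]

theorem height_smul_lineSpan (φ : PlaneAut k) :
    height (φ • lineSpan k) = 2 * (φ (X 0)).totalDegree + 1 := by
  rw [height, finrank_smul_lineSpan,
    degreeBound_eq fun d ↦ smul_lineSpan_le_restrictTotalDegree]

theorem height_smul_lineSpan_lt_iff {φ : PlaneAut k} :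
    height (φ • lineSpan k) < height (φ • planeSpan k) ↔
      (φ (X 0)).totalDegree < (φ (X 1)).totalDegree := by
  rw [height_smul_lineSpan, height_smul_planeSpan]
  lia

theorem height_smul_planeSpan_lt_iff {φ : PlaneAut k} :
    height (φ • planeSpan k) < height (φ • lineSpan k) ↔
      (φ (X 1)).totalDegree ≤ (φ (X 0)).totalDegree := by
  rw [height_smul_lineSpan, height_smul_planeSpan]
  lia

theorem totalDegree_eq_of_smul_lineSpan_eq {φ ψ : PlaneAut k}
    (h : φ • lineSpan k = ψ • lineSpan k) :
    (φ (X 0)).totalDegree = (ψ (X 0)).totalDegree := by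
  have hheight := congrArg height h
  rw [height_smul_lineSpan, height_smul_lineSpan] at hheight
  lia

theorem smul_planeSpan_eq_of_forall_totalDegree_le_one {φ : PlaneAut k}
    (h : ∀ i, (φ (X i)).totalDegree ≤ 1) : φ • planeSpan k = planeSpan k := by
  rw [← one_smul (PlaneAut k) (planeSpan k), smul_smul, mul_one]
  refine smul_planeSpan_eq_of_le (smul_planeSpan_le.2 ⟨one_mem_smul_planeSpan 1, ?_, ?_⟩) <;>
    rw [one_smul] <;> exact mem_planeSpan_of_totalDegree_le_one (h _)

theorem smul_lineSpan_eq_of_smul_planeSpan_eq {φ ψ : PlaneAut k}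
    (h : ψ • planeSpan k = φ • planeSpan k)
    (hφ : (φ (X 0)).totalDegree < (φ (X 1)).totalDegree)
    (hψ : (ψ (X 0)).totalDegree < (ψ (X 1)).totalDegree) :
    ψ • lineSpan k = φ • lineSpan k := by
  -- Otherwise the two lines span the plane, whose elements are then of too small degree.
  by_contra hne
  have hmax := congrArg height h
  rw [height_smul_planeSpan, height_smul_planeSpan, max_eq_right hφ.le, max_eq_right hψ.le] at hmax
  have hle : ψ • lineSpan k ⊔ φ • lineSpan k ≤ φ • planeSpan k :=
    sup_le ((smul_lineSpan_le_smul_planeSpan ψ).trans h.le) (smul_lineSpan_le_smul_planeSpan φ)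
  have hlt : φ • lineSpan k < ψ • lineSpan k ⊔ φ • lineSpan k :=
    right_lt_sup.2 fun hle ↦ hne (smul_lineSpan_eq_of_le hle)
  have hrank := Submodule.finrank_lt_finrank_of_lt hlt
  rw [finrank_smul_lineSpan] at hrank
  have hsup : ψ • lineSpan k ⊔ φ • lineSpan k = φ • planeSpan k :=
    Submodule.eq_of_le_of_finrank_le hle (by rw [finrank_smul_planeSpan]; lia)
  have hbound : φ • planeSpan k ≤
      restrictTotalDegree (Fin 2) k ((φ (X 1)).totalDegree - 1) := by
    rw [← hsup]
    exact sup_le (smul_lineSpan_le_restrictTotalDegree.2 (by lia))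
      (smul_lineSpan_le_restrictTotalDegree.2 (by lia))
  have := (le_max_right _ _).trans (smul_planeSpan_le_restrictTotalDegree.1 hbound)
  lia

variable [CharZero k]

theorem exists_totalDegree_lt_of_totalDegree_eq {φ : PlaneAut k}
    (heq : (φ (X 0)).totalDegree = (φ (X 1)).totalDegree) (h₂ : 2 ≤ (φ (X 1)).totalDegree) :
    ∃ ψ : PlaneAut k, ψ • planeSpan k = φ • planeSpan k ∧
      (ψ (X 0)).totalDegree < (ψ (X 1)).totalDegree := by
  obtain ⟨c, d, hd, hlt⟩ := exists_totalDegree_sub_lt φ heq.le h₂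
  obtain rfl : d = 1 := by
    rw [heq] at hd
    exact (Nat.mul_eq_right (by lia)).1 hd.symm
  rw [pow_one] at hlt
  have hp : (-(Polynomial.C c * Polynomial.X)).natDegree ≤ 1 := by compute_degree
  refine ⟨φ * shear 1 (-(Polynomial.C c * Polynomial.X)) * flip k, ?_, ?_⟩
  · rw [mul_flip_smul_planeSpan, mul_shear_smul_planeSpan _ _ hp]
  · rw [mul_flip_X_zero, mul_flip_X_one, mul_shear_X_zero, mul_shear_X_one, heq]
    simpa [algebraMap_eq, ← sub_eq_add_neg] using hlt

theorem exists_smul_planeSpan_eq_and_totalDegree_lt {φ : PlaneAut k}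
    (h : φ • planeSpan k ≠ planeSpan k) :
    ∃ ψ : PlaneAut k, ψ • planeSpan k = φ • planeSpan k ∧
      (ψ (X 0)).totalDegree < (ψ (X 1)).totalDegree := by
  rcases lt_trichotomy (φ (X 0)).totalDegree (φ (X 1)).totalDegree with hlt | heq | hgt
  · exact ⟨φ, rfl, hlt⟩
  · refine exists_totalDegree_lt_of_totalDegree_eq heq ?_
    by_contra! hlt
    exact h (smul_planeSpan_eq_of_forall_totalDegree_le_one
      (Fin.forall_fin_two.2 ⟨by lia, by lia⟩))
  · exact ⟨φ * flip k, mul_flip_smul_planeSpan φ, by rwa [mul_flip_X_zero, mul_flip_X_one]⟩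

theorem exists_smul_lineSpan_eq_and_totalDegree_le (φ : PlaneAut k) :
    ∃ ψ : PlaneAut k, ψ • lineSpan k = φ • lineSpan k ∧
      (ψ (X 1)).totalDegree ≤ (ψ (X 0)).totalDegree := by
  induction hn : (φ (X 1)).totalDegree using Nat.strong_induction_on generalizing φ with
  | _ n ih =>
    rcases le_or_gt (φ (X 1)).totalDegree (φ (X 0)).totalDegree with hle | hlt
    · exact ⟨φ, rfl, hle⟩
    · have hpos := totalDegree_X_aut_pos φ 0
      obtain ⟨c, d, -, hdeg⟩ := exists_totalDegree_sub_lt φ hlt.le (by lia)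
      let θ := φ * shear 1 (-(Polynomial.C c * Polynomial.X ^ d))
      have hθ : θ (X 1) = φ (X 1) - C c * φ (X 0) ^ d := by
        rw [mul_shear_X_one]
        simp [algebraMap_eq, ← sub_eq_add_neg]
      obtain ⟨ψ, hψ, hψ'⟩ := ih _ (hn ▸ hθ ▸ hdeg) θ rfl
      exact ⟨ψ, hψ.trans (mul_shear_smul_lineSpan _ _ _), hψ'⟩

theorem smul_planeSpan_eq_of_smul_lineSpan_eq {φ ψ : PlaneAut k}
    (h : ψ • lineSpan k = φ • lineSpan k)
    (hφ : (φ (X 1)).totalDegree ≤ (φ (X 0)).totalDegree)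
    (hψ : (ψ (X 1)).totalDegree ≤ (ψ (X 0)).totalDegree) :
    ψ • planeSpan k = φ • planeSpan k := by
  obtain ⟨c, p, hp⟩ := exists_X_one_eq_of_smul_lineSpan_eq h
  have hpdeg : p.natDegree ≤ 1 := by
    have hdeg : (Polynomial.aeval (φ (X 0)) p).totalDegree ≤ 1 * (φ (X 0)).totalDegree := by
      rw [one_mul, ← add_sub_cancel_left (C c * φ (X 1)) (Polynomial.aeval (φ (X 0)) p), ← hp]
      refine (totalDegree_sub _ _).trans (max_le ?_ ?_)
      · exact hψ.trans (totalDegree_eq_of_smul_lineSpan_eq h).le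
      · exact (totalDegree_mul _ _).trans (by rwa [totalDegree_C, zero_add])
    rw [totalDegree_aeval] at hdeg
    exact Nat.le_of_mul_le_mul_right hdeg (totalDegree_X_aut_pos φ 0)
  refine smul_planeSpan_eq_of_le (smul_planeSpan_le.2 ⟨one_mem_smul_planeSpan φ, ?_, ?_⟩)
  · exact smul_lineSpan_le_smul_planeSpan φ (h ▸ X_mem_smul_lineSpan ψ)
  · rw [hp]
    exact C_mul_add_aeval_mem_smul_planeSpan φ c hpdeg

end Heights

section Tree

variable {k : Type*} [Field k]

variable (k) in
/-- The vertices of the tree of the plane: the translates of the two standard spaces. -/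
noncomputable def vertices : SubMulAction (PlaneAut k) (Submodule k (Plane k)) where
  carrier := {S | ∃ φ : PlaneAut k, S = φ • planeSpan k ∨ S = φ • lineSpan k}
  smul_mem' := by
    rintro ψ _ ⟨φ, rfl | rfl⟩
    · exact ⟨ψ * φ, .inl (smul_smul _ _ _)⟩
    · exact ⟨ψ * φ, .inr (smul_smul _ _ _)⟩

/-- The translate by `φ` of the space of polynomials of degree at most one, as a vertex. -/
noncomputable def planeVertex (φ : PlaneAut k) : vertices k := ⟨φ • planeSpan k, φ, .inl rfl⟩

/-- The translate by `φ` of the space of polynomials of degree at most one in the first coordinate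
alone, as a vertex. -/
noncomputable def lineVertex (φ : PlaneAut k) : vertices k := ⟨φ • lineSpan k, φ, .inr rfl⟩

theorem exists_eq_planeVertex_or_lineVertex (x : vertices k) :
    ∃ φ : PlaneAut k, x = planeVertex φ ∨ x = lineVertex φ :=
  x.2.imp fun _ h ↦ h.imp Subtype.ext Subtype.ext

theorem smul_planeVertex (ψ φ : PlaneAut k) : ψ • planeVertex φ = planeVertex (ψ * φ) :=
  Subtype.ext (smul_smul _ _ _)

theorem smul_lineVertex (ψ φ : PlaneAut k) : ψ • lineVertex φ = lineVertex (ψ * φ) :=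
  Subtype.ext (smul_smul _ _ _)

theorem planeVertex_ne_lineVertex (φ ψ : PlaneAut k) : planeVertex φ ≠ lineVertex ψ :=
  fun h ↦ smul_planeSpan_ne_smul_lineSpan φ ψ (congrArg Subtype.val h)

variable (k) in
/-- The tree of the plane: two vertices are adjacent when one properly contains the other. -/
noncomputable def tree : SimpleGraph (vertices k) where
  Adj x y := (x : Submodule k (Plane k)) < y ∨ (y : Submodule k (Plane k)) < x
  symm := ⟨fun _ _ ↦ Or.symm⟩
  loopless := ⟨fun _ h ↦ h.elim (lt_irrefl _) (lt_irrefl _)⟩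

theorem tree_adj_lineVertex_planeVertex (φ : PlaneAut k) :
    (tree k).Adj (lineVertex φ) (planeVertex φ) :=
  .inl (smul_lineSpan_lt_smul_planeSpan φ)

theorem exists_eq_of_coe_lt {x y : vertices k} (h : (x : Submodule k (Plane k)) < y) :
    ∃ φ : PlaneAut k, x = lineVertex φ ∧ y = planeVertex φ := by
  obtain ⟨φ, rfl | rfl⟩ := exists_eq_planeVertex_or_lineVertex x <;>
    obtain ⟨ψ, rfl | rfl⟩ := exists_eq_planeVertex_or_lineVertex y
  · exact absurd (smul_planeSpan_eq_of_le h.le) h.ne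
  · have hrank := Submodule.finrank_lt_finrank_of_lt (show φ • planeSpan k < ψ • lineSpan k from h)
    rw [finrank_smul_planeSpan, finrank_smul_lineSpan] at hrank
    lia
  · obtain ⟨θ, hline, hplane⟩ := exists_aut_of_smul_lineSpan_le h.le
    exact ⟨θ, Subtype.ext hline.symm, Subtype.ext hplane.symm⟩
  · exact absurd (smul_lineSpan_eq_of_le h.le) h.ne

theorem tree_adj_iff {x y : vertices k} : (tree k).Adj x y ↔ ∃ φ : PlaneAut k,
    (x = lineVertex φ ∧ y = planeVertex φ) ∨ (x = planeVertex φ ∧ y = lineVertex φ) := by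
  constructor
  · rintro (h | h) <;> obtain ⟨φ, rfl, rfl⟩ := exists_eq_of_coe_lt h
    · exact ⟨φ, .inl ⟨rfl, rfl⟩⟩
    · exact ⟨φ, .inr ⟨rfl, rfl⟩⟩
  · rintro ⟨φ, ⟨rfl, rfl⟩ | ⟨rfl, rfl⟩⟩
    · exact tree_adj_lineVertex_planeVertex φ
    · exact (tree_adj_lineVertex_planeVertex φ).symm

instance preservesAdj_tree (H : Subgroup (PlaneAut k)) : PreservesAdj H (tree k) where
  adj_smul h x y hxy := by
    rw [Subgroup.smul_def, Subgroup.smul_def]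
    obtain ⟨φ, ⟨rfl, rfl⟩ | ⟨rfl, rfl⟩⟩ := tree_adj_iff.1 hxy <;>
      rw [smul_lineVertex, smul_planeVertex]
    · exact tree_adj_lineVertex_planeVertex _
    · exact (tree_adj_lineVertex_planeVertex _).symm

theorem not_tree_adj_smul (φ : PlaneAut k) (x : vertices k) : ¬ (tree k).Adj x (φ • x) := by
  intro h
  obtain ⟨ψ, ⟨rfl, hψ⟩ | ⟨rfl, hψ⟩⟩ := tree_adj_iff.1 h
  · exact planeVertex_ne_lineVertex _ _ (hψ.symm.trans (smul_lineVertex _ _))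
  · exact planeVertex_ne_lineVertex _ _ ((smul_planeVertex _ _).symm.trans hψ)

theorem height_ne_of_tree_adj {x y : vertices k} (h : (tree k).Adj x y) :
    height (x : Submodule k (Plane k)) ≠ height (y : Submodule k (Plane k)) := by
  obtain ⟨φ, ⟨rfl, rfl⟩ | ⟨rfl, rfl⟩⟩ := tree_adj_iff.1 h <;>
    simp only [planeVertex, lineVertex, height_smul_planeSpan, height_smul_lineSpan] <;> lia

variable [CharZero k]

theorem exists_tree_adj_height_lt {x : vertices k} (hx : x ≠ planeVertex 1) :
    ∃ y, (tree k).Adj x y ∧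
      height (y : Submodule k (Plane k)) < height (x : Submodule k (Plane k)) := by
  obtain ⟨φ, rfl | rfl⟩ := exists_eq_planeVertex_or_lineVertex x
  · have hφ : φ • planeSpan k ≠ planeSpan k := fun h ↦
      hx (Subtype.ext (h.trans (one_smul _ _).symm))
    obtain ⟨ψ, hψ, hdeg⟩ := exists_smul_planeSpan_eq_and_totalDegree_lt hφ
    rw [show planeVertex φ = planeVertex ψ from Subtype.ext hψ.symm]
    exact ⟨lineVertex ψ, (tree_adj_lineVertex_planeVertex ψ).symm,
      height_smul_lineSpan_lt_iff.2 hdeg⟩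
  · obtain ⟨ψ, hψ, hdeg⟩ := exists_smul_lineSpan_eq_and_totalDegree_le φ
    rw [show lineVertex φ = lineVertex ψ from Subtype.ext hψ.symm]
    exact ⟨planeVertex ψ, tree_adj_lineVertex_planeVertex ψ, height_smul_planeSpan_lt_iff.2 hdeg⟩

theorem eq_of_tree_adj_of_height_lt {x y z : vertices k} (hxy : (tree k).Adj x y)
    (hxz : (tree k).Adj x z)
    (hy : height (y : Submodule k (Plane k)) < height (x : Submodule k (Plane k)))
    (hz : height (z : Submodule k (Plane k)) < height (x : Submodule k (Plane k))) : y = z := by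
  obtain ⟨φ, ⟨rfl, rfl⟩ | ⟨rfl, rfl⟩⟩ := tree_adj_iff.1 hxy <;>
    obtain ⟨ψ, ⟨hψ, rfl⟩ | ⟨hψ, rfl⟩⟩ := tree_adj_iff.1 hxz
  · rw [hψ] at hz
    exact Subtype.ext (smul_planeSpan_eq_of_smul_lineSpan_eq (congrArg Subtype.val hψ)
      (height_smul_planeSpan_lt_iff.1 hz) (height_smul_planeSpan_lt_iff.1 hy))
  · exact absurd hψ.symm (planeVertex_ne_lineVertex _ _)
  · exact absurd hψ (planeVertex_ne_lineVertex _ _)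
  · rw [hψ] at hz
    exact Subtype.ext (smul_lineSpan_eq_of_smul_planeSpan_eq (congrArg Subtype.val hψ)
      (height_smul_lineSpan_lt_iff.1 hz) (height_smul_lineSpan_lt_iff.1 hy))

theorem isTree_tree : (tree k).IsTree :=
  isTree_of_height (fun x ↦ height (x : Submodule k (Plane k))) (planeVertex 1)
    (fun _ _ ↦ height_ne_of_tree_adj) (fun _ ↦ exists_tree_adj_height_lt)
    fun _ _ _ ↦ eq_of_tree_adj_of_height_lt

end Tree

section LineStabilizer

variable {k : Type*} [Field k] [CharZero k]

theorem constantCoeff_pderiv_zero_mul_apply {θ θ' : PlaneAut k}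
    (h' : θ' • lineSpan k = lineSpan k) :
    constantCoeff (pderiv 0 ((θ * θ') (X 0))) =
      constantCoeff (pderiv 0 (θ (X 0))) * constantCoeff (pderiv 0 (θ' (X 0))) := by
  obtain ⟨a, b, -, -, hX₀, -⟩ := exists_form_of_smul_lineSpan h'
  rw [AlgEquiv.mul_apply, hX₀]
  simp [algHom_apply_C, mul_comm]

theorem constantCoeff_pderiv_one_mul_apply {θ θ' : PlaneAut k} (h : θ • lineSpan k = lineSpan k)
    (h' : θ' • lineSpan k = lineSpan k) :
    constantCoeff (pderiv 1 ((θ * θ') (X 1))) =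
      constantCoeff (pderiv 1 (θ (X 1))) * constantCoeff (pderiv 1 (θ' (X 1))) := by
  obtain ⟨a, b, -, -, hX₀, -⟩ := exists_form_of_smul_lineSpan h
  obtain ⟨-, -, c', p', -, hX₁⟩ := exists_form_of_smul_lineSpan h'
  have hder₀ : pderiv 1 (θ (X 0)) = 0 := by simp [hX₀]
  have hder₁ : pderiv 1 (θ' (X 1)) = C c' := by simp [hX₁]
  rw [AlgEquiv.mul_apply, derivation_algHom_apply, Fin.sum_univ_two, hder₀, hder₁, algHom_apply_C]
  simp [mul_comm]

variable (k) in
/-- The diagonal part of the automorphisms stabilizing the line span. -/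
noncomputable def lineDiagonal :
    MulAction.stabilizer (PlaneAut k) (lineSpan k) →* k × k where
  toFun θ := (constantCoeff (pderiv 0 (θ.1 (X 0))), constantCoeff (pderiv 1 (θ.1 (X 1))))
  map_one' := by simp
  map_mul' θ θ' := Prod.ext (constantCoeff_pderiv_zero_mul_apply θ'.2)
    (constantCoeff_pderiv_one_mul_apply θ.2 θ'.2)

theorem exists_form_of_mem_ker_lineDiagonal
    {θ : MulAction.stabilizer (PlaneAut k) (lineSpan k)} (h : θ ∈ (lineDiagonal k).ker) :
    ∃ (b : k) (p : Polynomial k), θ.1 (X 0) = X 0 + C b ∧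
      θ.1 (X 1) = X 1 + Polynomial.aeval (X 0) p := by
  obtain ⟨a, b, c, p, hX₀, hX₁⟩ := exists_form_of_smul_lineSpan θ.2
  obtain ⟨ha, hc⟩ := Prod.ext_iff.1 (MonoidHom.mem_ker.1 h)
  have ha : a = 1 := by simpa [lineDiagonal, hX₀] using ha
  have hc : c = 1 := by simpa [lineDiagonal, hX₁, pderiv_one_aeval_X_zero] using hc
  exact ⟨b, p, by rw [hX₀, ha, C_1, one_mul], by rw [hX₁, hc, C_1, one_mul]⟩

variable (k) in
/-- The translation part of the unipotent automorphisms stabilizing the line span. -/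
noncomputable def lineTranslation : (lineDiagonal k).ker →* Multiplicative k where
  toFun θ := .ofAdd (constantCoeff (θ.1.1 (X 0)))
  map_one' := by simp
  map_mul' θ θ' := by
    obtain ⟨b, -, hb, -⟩ := exists_form_of_mem_ker_lineDiagonal θ.2
    obtain ⟨b', -, hb', -⟩ := exists_form_of_mem_ker_lineDiagonal θ'.2
    rw [← ofAdd_add]
    simp [hb, hb', algHom_apply_C]

theorem exists_form_of_mem_ker_lineTranslation {θ : (lineDiagonal k).ker}
    (h : θ ∈ (lineTranslation k).ker) : θ.1.1 (X 0) = X 0 ∧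
      ∃ p : Polynomial k, θ.1.1 (X 1) = X 1 + Polynomial.aeval (X 0) p := by
  obtain ⟨b, p, hb, hp⟩ := exists_form_of_mem_ker_lineDiagonal θ.2
  have hzero : constantCoeff (θ.1.1 (X 0)) = 0 := Multiplicative.ofAdd.injective h
  have hb0 : b = 0 := by simpa [hb] using hzero
  exact ⟨by rw [hb, hb0, C_0, add_zero], p, hp⟩

instance isSolvable_ker_lineTranslation : Group.IsSolvable (lineTranslation k).ker := by
  refine Group.isSolvable_of_comm fun θ θ' ↦ Subtype.ext (Subtype.ext (Subtype.ext (aut_ext ?_)))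
  obtain ⟨hX₀, p, hX₁⟩ := exists_form_of_mem_ker_lineTranslation θ.2
  obtain ⟨hX₀', p', hX₁'⟩ := exists_form_of_mem_ker_lineTranslation θ'.2
  refine Fin.forall_fin_two.2 ⟨?_, ?_⟩
  · change θ.1.1.1 (θ'.1.1.1 (X 0)) = θ'.1.1.1 (θ.1.1.1 (X 0))
    rw [hX₀, hX₀', hX₀]
  · change θ.1.1.1 (θ'.1.1.1 (X 1)) = θ'.1.1.1 (θ.1.1.1 (X 1))
    rw [hX₁, hX₁', map_add, map_add, hX₁, hX₁', ← Polynomial.aeval_algHom_apply,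
      ← Polynomial.aeval_algHom_apply, hX₀, hX₀']
    ring

theorem isSolvable_stabilizer_lineSpan :
    Group.IsSolvable (MulAction.stabilizer (PlaneAut k) (lineSpan k)) :=
  have : Group.IsSolvable (lineDiagonal k).ker := isSolvable_of_isSolvable_ker (lineTranslation k)
  isSolvable_of_isSolvable_ker (lineDiagonal k)

end LineStabilizer

section PlaneStabilizer

variable {k : Type*} [Field k]

theorem exists_form_of_smul_planeSpan {θ : PlaneAut k} (h : θ • planeSpan k = planeSpan k)
    (i : Fin 2) : ∃ a b c : k, θ (X i) = C a + C b * X 0 + C c * X 1 := by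
  have hmem : θ (X i) ∈ (1 : PlaneAut k) • planeSpan k := by
    rw [one_smul]
    exact h ▸ X_mem_smul_planeSpan θ i
  obtain ⟨a, b, c, habc⟩ := mem_smul_planeSpan.1 hmem
  exact ⟨a, b, c, habc.symm⟩

theorem pderiv_eq_C_of_smul_planeSpan {θ : PlaneAut k} (h : θ • planeSpan k = planeSpan k)
    (i j : Fin 2) : pderiv j (θ (X i)) = C (constantCoeff (pderiv j (θ (X i)))) := by
  obtain ⟨a, b, c, habc⟩ := exists_form_of_smul_planeSpan h i
  rw [habc]
  fin_cases j <;> simp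

variable (k) in
/-- The linear part of the affine automorphisms. -/
noncomputable def linearPart :
    MulAction.stabilizer (PlaneAut k) (planeSpan k) →* Matrix (Fin 2) (Fin 2) k where
  toFun θ := Matrix.of fun j i ↦ constantCoeff (pderiv j (θ.1 (X i)))
  map_one' := by
    ext i j
    fin_cases i <;> fin_cases j <;> simp
  map_mul' θ θ' := by
    ext j i
    rw [Matrix.mul_apply, Matrix.of_apply, Subgroup.coe_mul, AlgEquiv.mul_apply,
      derivation_algHom_apply, map_sum]
    refine Finset.sum_congr rfl fun l _ ↦ ?_
    rw [pderiv_eq_C_of_smul_planeSpan θ'.2, algHom_apply_C, map_mul, constantCoeff_C, mul_comm,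
      Matrix.of_apply, Matrix.of_apply]

theorem exists_eq_X_add_C_of_mem_ker_linearPart
    {θ : MulAction.stabilizer (PlaneAut k) (planeSpan k)} (h : linearPart k θ = 1) (i : Fin 2) :
    ∃ a : k, θ.1 (X i) = X i + C a := by
  obtain ⟨a, b, c, habc⟩ := exists_form_of_smul_planeSpan θ.2 i
  have hrow (j : Fin 2) : constantCoeff (pderiv j (θ.1 (X i))) = (1 : Matrix _ _ k) j i :=
    congrFun (congrFun h j) i
  have hb : b = (1 : Matrix (Fin 2) (Fin 2) k) 0 i := by rw [← hrow 0, habc]; simp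
  have hc : c = (1 : Matrix (Fin 2) (Fin 2) k) 1 i := by rw [← hrow 1, habc]; simp
  refine ⟨a, ?_⟩
  rw [habc, hb, hc]
  revert i
  simp [Fin.forall_fin_two, add_comm]

instance isSolvable_ker_linearPart : Group.IsSolvable (linearPart k).toHomUnits.ker := by
  refine Group.isSolvable_of_comm fun θ θ' ↦ Subtype.ext (Subtype.ext (aut_ext fun i ↦ ?_))
  obtain ⟨a, ha⟩ := exists_eq_X_add_C_of_mem_ker_linearPart (congrArg Units.val θ.2) i
  obtain ⟨a', ha'⟩ := exists_eq_X_add_C_of_mem_ker_linearPart (congrArg Units.val θ'.2) i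
  change θ.1.1 (θ'.1.1 (X i)) = θ'.1.1 (θ.1.1 (X i))
  rw [ha, ha', map_add, map_add, ha, ha', algHom_apply_C, algHom_apply_C]
  ring

end PlaneStabilizer

section Reduction

/-- Conjugation carries a group fixing `g • a` into the stabilizer of `a`. -/
def conjStabilizer {G H X : Type*} [Group G] [Group H] [MulAction G X] (f : H →* G) (g : G) (a : X)
    (h : ∀ x, f x • g • a = g • a) : H →* MulAction.stabilizer G a :=
  ((MulAut.conj g⁻¹).toMonoidHom.comp f).codRestrict _ fun x ↦ by
    simp [MulAction.mem_stabilizer_iff, mul_smul, h]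

theorem conjStabilizer_injective {G H X : Type*} [Group G] [Group H] [MulAction G X] {f : H →* G}
    (hf : Function.Injective f) (g : G) (a : X) (h : ∀ x, f x • g • a = g • a) :
    Function.Injective (conjStabilizer f g a h) := fun _ _ hxy ↦
  hf ((MulAut.conj g⁻¹).injective (congrArg Subtype.val hxy))

variable {k : Type*} [Field k]

theorem derivedSeries_stabilizer_inf_eq_bot (H : Subgroup (PlaneAut k)) {n : ℕ}
    (hn : derivedSeries (MulAction.stabilizer (PlaneAut k) (lineSpan k)) n = ⊥)
    {x y : vertices k} (hxy : (tree k).Adj x y) :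
    derivedSeries ↥(MulAction.stabilizer H x ⊓ MulAction.stabilizer H y) n = ⊥ := by
  obtain ⟨φ, hφ⟩ : ∃ φ : PlaneAut k,
      ∀ g : ↥(MulAction.stabilizer H x ⊓ MulAction.stabilizer H y),
        (g : PlaneAut k) • φ • lineSpan k = φ • lineSpan k := by
    obtain ⟨φ, ⟨rfl, rfl⟩ | ⟨rfl, rfl⟩⟩ := tree_adj_iff.1 hxy
    · exact ⟨φ, fun g ↦ congrArg Subtype.val g.2.1⟩
    · exact ⟨φ, fun g ↦ congrArg Subtype.val g.2.2⟩
  let f := H.subtype.comp (Subgroup.subtype (MulAction.stabilizer H x ⊓ MulAction.stabilizer H y))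
  have hf : Function.Injective f := H.subtype_injective.comp (Subgroup.subtype_injective _)
  exact derivedSeries_eq_bot_of_injective (conjStabilizer f φ (lineSpan k) hφ)
    (conjStabilizer_injective hf _ _ _) hn

theorem strongTitsAlternative_planeAut [CharZero k]
    (hGL : StrongTitsAlternative (GL (Fin 2) k)) : StrongTitsAlternative (PlaneAut k) := by
  intro H
  have := isSolvable_stabilizer_lineSpan (k := k)
  obtain ⟨n, hn⟩ := (Group.isSolvable_def _).1 this
  obtain h | ⟨x, hx⟩ := titsAlternative_or_exists_forall_smul_eq (H := H) isTree_tree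
    (fun h x ↦ not_tree_adj_smul (h : PlaneAut k) x)
    (fun x y ↦ derivedSeries_stabilizer_inf_eq_bot H hn)
  · exact h
  obtain ⟨φ, rfl | rfl⟩ := exists_eq_planeVertex_or_lineVertex x
  · let f := conjStabilizer H.subtype φ (planeSpan k) fun h ↦ congrArg Subtype.val (hx h)
    have hf : Function.Injective f := conjStabilizer_injective H.subtype_injective _ _ _
    have := isSolvable_ker_comp hf (linearPart k).toHomUnits
    exact TitsAlternative.of_range ((linearPart k).toHomUnits.comp f) (hGL _)
  · let f := conjStabilizer H.subtype φ (lineSpan k) fun h ↦ congrArg Subtype.val (hx h)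
    have hf : Function.Injective f := conjStabilizer_injective H.subtype_injective _ _ _
    have := Group.isSolvable_of_isSolvable_injective hf
    exact .inr .of_isSolvable

end Reduction

/-! ### The general linear group of degree two -/

section Entries

variable {K : Type*} [Field K]

theorem mul_apply_fin_two (A B : GL (Fin 2) K) (i j : Fin 2) :
    (A * B) i j = A i 0 * B 0 j + A i 1 * B 1 j := by
  simp [Matrix.mul_apply, Fin.sum_univ_two]

theorem det_fin_two_ne_zero (A : GL (Fin 2) K) : A 0 0 * A 1 1 - A 0 1 * A 1 0 ≠ 0 := by
  have hdet := A.det.ne_zero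
  rwa [Matrix.GeneralLinearGroup.val_det_apply, Matrix.det_fin_two] at hdet

theorem inv_apply_fin_two (A : GL (Fin 2) K) :
    A⁻¹ 0 0 = A 1 1 / (A 0 0 * A 1 1 - A 0 1 * A 1 0) ∧
    A⁻¹ 0 1 = -A 0 1 / (A 0 0 * A 1 1 - A 0 1 * A 1 0) ∧
    A⁻¹ 1 0 = -A 1 0 / (A 0 0 * A 1 1 - A 0 1 * A 1 0) ∧
    A⁻¹ 1 1 = A 0 0 / (A 0 0 * A 1 1 - A 0 1 * A 1 0) := by
  rw [Matrix.coe_units_inv, Matrix.inv_def, Matrix.det_fin_two, Matrix.adjugate_fin_two,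
    Ring.inverse_eq_inv']
  simp [div_eq_inv_mul]

theorem pow_apply_of_diagonal {A : GL (Fin 2) K} (h01 : A 0 1 = 0) (h10 : A 1 0 = 0) (n : ℕ) :
    (A ^ n) 0 0 = A 0 0 ^ n ∧ (A ^ n) 0 1 = 0 ∧ (A ^ n) 1 0 = 0 ∧ (A ^ n) 1 1 = A 1 1 ^ n := by
  induction n with
  | zero => simp
  | succ n ih => simp [pow_succ A, mul_apply_fin_two, ih, h01, h10, pow_succ]

theorem inv_apply_self_of_diagonal {A : GL (Fin 2) K} (h01 : A 0 1 = 0) (i : Fin 2) :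
    A⁻¹ i i = (A i i)⁻¹ := by
  obtain ⟨h₀, -, -, h₁⟩ := inv_apply_fin_two A
  have hdet := det_fin_two_ne_zero A
  rw [h01, zero_mul, sub_zero, mul_ne_zero_iff] at hdet
  revert i
  simp only [Fin.forall_fin_two, h₀, h₁, h01, zero_mul, sub_zero]
  exact ⟨div_mul_cancel_right₀ hdet.2 _, div_mul_cancel_left₀ hdet.1 _⟩

end Entries

section LinearGroups

variable {Γ K : Type*} [Group Γ] [Field K]

theorem isSolvable_of_apply_eq_zero (ρ : Γ →* GL (Fin 2) K) (hρ : Function.Injective ρ)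
    {i j : Fin 2} (hij : i ≠ j) (h : ∀ g, ρ g i j = 0) : Group.IsSolvable Γ := by
  have hzero (g g' : Γ) : ρ g 0 1 * ρ g' 1 0 = 0 := by
    fin_cases i <;> fin_cases j <;> simp_all
  let diag : Γ →* K × K :=
    { toFun g := (ρ g 0 0, ρ g 1 1)
      map_one' := by simp
      map_mul' g g' := by
        simp only [map_mul, mul_apply_fin_two, hzero, add_zero, Prod.mk_mul_mk,
          mul_comm (ρ g 1 0), zero_add] }
  suffices Group.IsSolvable diag.ker from isSolvable_of_isSolvable_ker diag
  refine Group.isSolvable_of_comm ?_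
  rintro ⟨a, ha⟩ ⟨b, hb⟩
  obtain ⟨ha₀, ha₁⟩ : ρ a 0 0 = 1 ∧ ρ a 1 1 = 1 := by simpa [diag] using ha
  obtain ⟨hb₀, hb₁⟩ : ρ b 0 0 = 1 ∧ ρ b 1 1 = 1 := by simpa [diag] using hb
  refine Subtype.ext (hρ (Units.ext (Matrix.ext fun m n ↦ ?_)))
  change ρ (a * b) m n = ρ (b * a) m n
  rw [map_mul, map_mul, mul_apply_fin_two, mul_apply_fin_two]
  have hab := hzero a b
  have hba := hzero b a
  fin_cases m <;> fin_cases n <;> grind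

section ProjectiveLine

variable [DecidableEq K] {g : GL (Fin 2) K}

theorem smul_coe_zero_eq_coe_zero : g • ((0 : K) : OnePoint K) = (0 : K) ↔ g 0 1 = 0 := by
  have hdet := det_fin_two_ne_zero g
  rw [OnePoint.smul_some_eq_ite]
  by_cases hg : g 1 1 = 0
  · have hne : g 0 1 ≠ 0 := fun h ↦ hdet (by rw [hg, h, mul_zero, zero_mul, sub_zero])
    simp [hg, hne]
  · simp [hg]

theorem smul_coe_zero_eq_infty : g • ((0 : K) : OnePoint K) = OnePoint.infty ↔ g 1 1 = 0 := by
  simp [OnePoint.smul_some_eq_ite]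

theorem smul_infty_eq_coe_zero : g • (OnePoint.infty : OnePoint K) = (0 : K) ↔ g 0 0 = 0 := by
  have hdet := det_fin_two_ne_zero g
  rw [OnePoint.smul_infty_eq_ite]
  by_cases hg : g 1 0 = 0
  · have hne : g 0 0 ≠ 0 := fun h ↦ hdet (by rw [hg, h, mul_zero, zero_mul, sub_zero])
    simp [hg, hne]
  · simp [hg]

end ProjectiveLine

theorem isVirtuallySolvable_of_forall_exists_apply_eq_zero (ρ : Γ →* GL (Fin 2) K)
    (hρ : Function.Injective ρ) (h : ∀ g, ∃ i j, ρ g i j = 0) : IsVirtuallySolvable Γ := by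
  classical
  let : MulAction Γ (OnePoint K) := MulAction.compHom _ ρ
  have hmeet (g : Γ) : ∃ p ∈ ({.infty, ((0 : K) : OnePoint K)} : Finset (OnePoint K)),
      ∃ q ∈ ({.infty, ((0 : K) : OnePoint K)} : Finset (OnePoint K)), g • p = q := by
    simp only [Finset.mem_insert, Finset.mem_singleton, exists_eq_or_imp, exists_eq_left]
    have hg := h g
    simp only [Fin.exists_fin_two] at hg
    obtain (hg | hg) | (hg | hg) := hg
    · exact .inl (.inr (smul_infty_eq_coe_zero.2 hg))
    · exact .inr (.inr (smul_coe_zero_eq_coe_zero.2 hg))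
    · exact .inl (.inl (OnePoint.smul_infty_eq_self_iff.2 hg))
    · exact .inr (.inl (smul_coe_zero_eq_infty.2 hg))
  have hsolv (x : OnePoint K) {i j : Fin 2} (hij : i ≠ j)
      (hx : ∀ g : Γ, ρ g • x = x → ρ g i j = 0) :
      Group.IsSolvable (MulAction.stabilizer Γ x) :=
    isSolvable_of_apply_eq_zero (ρ.comp (Subgroup.subtype _))
      (hρ.comp (Subgroup.subtype_injective _)) hij fun g ↦ hx g g.2
  obtain ⟨p, hp, hfin⟩ := exists_finiteIndex_stabilizer_of_forall_exists_smul_eq hmeet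
  refine ⟨_, hfin, ?_⟩
  obtain rfl | rfl : p = .infty ∨ p = (0 : K) := by simpa using hp
  · exact hsolv _ one_ne_zero fun g ↦ OnePoint.smul_infty_eq_self_iff.1
  · exact hsolv _ zero_ne_one fun g ↦ smul_coe_zero_eq_coe_zero.1

end LinearGroups

section AxisDynamics

variable {L : Type*} [NormedField L]

theorem smul_nonzero_apply (g : GL (Fin 2) L) (v : {v : Fin 2 → L // v ≠ 0}) (i j : Fin 2) :
    (g • v).1 j = g j i * v.1 i + g j (i + 1) * v.1 (i + 1) := by
  have happly : (g • v).1 j = g j 0 * v.1 0 + g j 1 * v.1 1 := by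
    change (g • v.1) j = _
    rw [Matrix.GeneralLinearGroup.fin_two_smul]
    fin_cases j <;> rfl
  rw [happly]
  fin_cases i
  · rfl
  · exact add_comm _ _

/-- The nonzero vectors making a small angle with the `i`-th coordinate axis. -/
def sector (i : Fin 2) (ε : ℝ) : Set {v : Fin 2 → L // v ≠ 0} :=
  {v | ‖v.1 (i + 1)‖ < ε * ‖v.1 i‖}

theorem sector_mono (i : Fin 2) {ε ε' : ℝ} (h : ε ≤ ε') :
    (sector i ε : Set {v : Fin 2 → L // v ≠ 0}) ⊆ sector i ε' := fun v hv ↦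
  lt_of_lt_of_le (b := ε * ‖v.1 i‖) hv (by gcongr)

/-- The filter of neighbourhoods of the `i`-th coordinate axis. -/
def axisFilter (L : Type*) [NormedField L] (i : Fin 2) : Filter {v : Fin 2 → L // v ≠ 0} where
  sets := {s | ∃ ε > 0, sector i ε ⊆ s}
  univ_sets := ⟨1, one_pos, Set.subset_univ _⟩
  sets_of_superset := fun ⟨ε, hε, h⟩ hst ↦ ⟨ε, hε, h.trans hst⟩
  inter_sets := fun ⟨ε, hε, h⟩ ⟨ε', hε', h'⟩ ↦ ⟨min ε ε', lt_min hε hε', Set.subset_inter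
    ((sector_mono i (min_le_left _ _)).trans h) ((sector_mono i (min_le_right _ _)).trans h')⟩

theorem mem_axisFilter {i : Fin 2} {s : Set {v : Fin 2 → L // v ≠ 0}} :
    s ∈ axisFilter L i ↔ ∃ ε > 0, sector i ε ⊆ s := Iff.rfl

instance axisFilter_neBot (i : Fin 2) : (axisFilter L i).NeBot := by
  refine Filter.neBot_iff.2 fun h ↦ ?_
  obtain ⟨ε, hε, hs⟩ := mem_axisFilter.1 (Filter.empty_mem_iff_bot.2 h)
  refine hs (a := ⟨Pi.single i 1, by simp⟩) ?_
  change ‖(Pi.single i (1 : L) : Fin 2 → L) (i + 1)‖ < ε * ‖(Pi.single i (1 : L) : Fin 2 → L) i‖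
  fin_cases i <;> simpa using hε

theorem disjoint_axisFilter : Disjoint (axisFilter L 0) (axisFilter L 1) := by
  refine Filter.disjoint_iff.2 ⟨_, ⟨1, one_pos, subset_rfl⟩, _, ⟨1, one_pos, subset_rfl⟩, ?_⟩
  refine Set.disjoint_left.2 fun v (hv : ‖v.1 1‖ < 1 * ‖v.1 0‖) (hv' : ‖v.1 0‖ < 1 * ‖v.1 1‖) ↦ ?_
  linarith

theorem mul_norm_le_norm_smul_apply {h : GL (Fin 2) L} {i j : Fin 2} {ε : ℝ}
    {v : {v : Fin 2 → L // v ≠ 0}} (hv : ‖v.1 (i + 1)‖ ≤ ε * ‖v.1 i‖) :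
    (‖h j i‖ - ε * ‖h j (i + 1)‖) * ‖v.1 i‖ ≤ ‖(h • v).1 j‖ :=
  calc (‖h j i‖ - ε * ‖h j (i + 1)‖) * ‖v.1 i‖
      = ‖h j i‖ * ‖v.1 i‖ - ‖h j (i + 1)‖ * (ε * ‖v.1 i‖) := by ring
    _ ≤ ‖h j i‖ * ‖v.1 i‖ - ‖h j (i + 1)‖ * ‖v.1 (i + 1)‖ := by gcongr
    _ ≤ ‖h j i * v.1 i + h j (i + 1) * v.1 (i + 1)‖ := by
      rw [← norm_mul, ← norm_mul]
      exact norm_sub_le_norm_add _ _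
    _ = ‖(h • v).1 j‖ := by rw [smul_nonzero_apply h v i]

theorem norm_smul_apply_le_mul_norm {h : GL (Fin 2) L} {i j : Fin 2}
    {v : {v : Fin 2 → L // v ≠ 0}} (hv : ‖v.1 (i + 1)‖ ≤ ‖v.1 i‖) :
    ‖(h • v).1 j‖ ≤ (‖h j i‖ + ‖h j (i + 1)‖) * ‖v.1 i‖ :=
  calc ‖(h • v).1 j‖
      = ‖h j i * v.1 i + h j (i + 1) * v.1 (i + 1)‖ := by rw [smul_nonzero_apply h v i]
    _ ≤ ‖h j i‖ * ‖v.1 i‖ + ‖h j (i + 1)‖ * ‖v.1 (i + 1)‖ := by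
      rw [← norm_mul, ← norm_mul]
      exact norm_add_le _ _
    _ ≤ ‖h j i‖ * ‖v.1 i‖ + ‖h j (i + 1)‖ * ‖v.1 i‖ := by gcongr
    _ = (‖h j i‖ + ‖h j (i + 1)‖) * ‖v.1 i‖ := by ring

theorem disjoint_smul_axisFilter {h : GL (Fin 2) L} {i j : Fin 2} (hh : h (j + 1) i ≠ 0) :
    Disjoint (h • axisFilter L i) (axisFilter L j) := by
  set S := ‖h (j + 1) (i + 1)‖ + (‖h j i‖ + ‖h j (i + 1)‖) + 1 with hS
  have hS₀ : 0 < S := by positivity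
  have hp : 0 < ‖h (j + 1) i‖ := norm_pos_iff.2 hh
  obtain ⟨ε, hε, hε₁, hεS⟩ : ∃ ε : ℝ, 0 < ε ∧ ε ≤ 1 ∧ ε * S ≤ ‖h (j + 1) i‖ :=
    ⟨min 1 (‖h (j + 1) i‖ / S), lt_min one_pos (div_pos hp hS₀), min_le_left _ _,
      (le_div_iff₀ hS₀).1 (min_le_right _ _)⟩
  refine Filter.disjoint_iff.2 ⟨h • sector i ε, Filter.smul_set_mem_smul_filter ⟨ε, hε, subset_rfl⟩,
    sector j ε, ⟨ε, hε, subset_rfl⟩, Set.disjoint_left.2 ?_⟩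
  rintro _ ⟨v, hv : ‖v.1 (i + 1)‖ < ε * ‖v.1 i‖, rfl⟩
    (hw : ‖(h • v).1 (j + 1)‖ < ε * ‖(h • v).1 j‖)
  have hx : 0 < ‖v.1 i‖ := pos_of_mul_pos_right ((norm_nonneg _).trans_lt hv) hε.le
  have hy : ‖v.1 (i + 1)‖ ≤ ‖v.1 i‖ := hv.le.trans (mul_le_of_le_one_left hx.le hε₁)
  have hlt : (‖h (j + 1) i‖ - ε * ‖h (j + 1) (i + 1)‖) * ‖v.1 i‖ <
      ε * (‖h j i‖ + ‖h j (i + 1)‖) * ‖v.1 i‖ :=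
    calc (‖h (j + 1) i‖ - ε * ‖h (j + 1) (i + 1)‖) * ‖v.1 i‖
        ≤ ‖(h • v).1 (j + 1)‖ := mul_norm_le_norm_smul_apply hv.le
      _ < ε * ‖(h • v).1 j‖ := hw
      _ ≤ ε * ((‖h j i‖ + ‖h j (i + 1)‖) * ‖v.1 i‖) := by
        gcongr
        exact norm_smul_apply_le_mul_norm hy
      _ = ε * (‖h j i‖ + ‖h j (i + 1)‖) * ‖v.1 i‖ := by ring
  have hlt := lt_of_mul_lt_mul_right hlt hx.le
  rw [hS] at hεS
  linarith

theorem northSouth_axisFilter {g : GL (Fin 2) L} (h01 : g 0 1 = 0) (h10 : g 1 0 = 0)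
    (hlt : ‖g 1 1‖ < ‖g 0 0‖) : NorthSouth g (axisFilter L 0) (axisFilter L 1) := by
  rintro U ⟨ε, hε, hU⟩ V ⟨δ, hδ, hV⟩
  have h0 : 0 < ‖g 0 0‖ := (norm_nonneg _).trans_lt hlt
  have hlim := tendsto_pow_atTop_nhds_zero_of_lt_one (r := ‖g 1 1‖ / ‖g 0 0‖) (by positivity)
    ((div_lt_one h0).2 hlt)
  obtain ⟨N, hN⟩ :=
    Filter.eventually_atTop.1 (hlim.eventually_lt_const (u := ε * δ) (by positivity))
  refine ⟨N, fun n hn x hx ↦ hU ?_⟩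
  have hxδ : δ * ‖x.1 1‖ ≤ ‖x.1 0‖ := not_lt.1 fun h ↦ hx (hV h)
  have hx0 : 0 < ‖x.1 0‖ := by
    refine norm_pos_iff.2 fun h ↦ x.2 (funext (Fin.forall_fin_two.2 ⟨h, ?_⟩))
    rw [h, norm_zero] at hxδ
    exact norm_le_zero_iff.1 (nonpos_of_mul_nonpos_right hxδ hδ)
  have hratio := hN n hn
  rw [div_pow, div_lt_iff₀ (by positivity)] at hratio
  change ‖(g ^ n • x).1 1‖ < ε * ‖(g ^ n • x).1 0‖
  obtain ⟨hpow00, hpow01, hpow10, hpow11⟩ := pow_apply_of_diagonal h01 h10 n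
  rw [smul_nonzero_apply _ x 0, smul_nonzero_apply _ x 0, zero_add, hpow00, hpow01, hpow10, hpow11,
    zero_mul, zero_mul, zero_add, add_zero, norm_mul, norm_mul, norm_pow, norm_pow]
  refine lt_of_mul_lt_mul_left (a := δ) ?_ hδ.le
  calc δ * (‖g 1 1‖ ^ n * ‖x.1 1‖) = ‖g 1 1‖ ^ n * (δ * ‖x.1 1‖) := by ring
    _ ≤ ‖g 1 1‖ ^ n * ‖x.1 0‖ := by gcongr
    _ < ε * δ * ‖g 0 0‖ ^ n * ‖x.1 0‖ := by gcongr
    _ = δ * (ε * (‖g 0 0‖ ^ n * ‖x.1 0‖)) := by ring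

theorem containsNonabelianFree_of_diagonal {G : Type*} [Group G] (ρ : G →* GL (Fin 2) L)
    {g h : G} (h01 : ρ g 0 1 = 0) (h10 : ρ g 1 0 = 0) (hne : ‖ρ g 0 0‖ ≠ ‖ρ g 1 1‖)
    (hh : ∀ i j, ρ h i j ≠ 0) : ContainsNonabelianFree G := by
  wlog hlt : ‖ρ g 1 1‖ < ‖ρ g 0 0‖ generalizing g
  · obtain ⟨-, hinv01, hinv10, -⟩ := inv_apply_fin_two (ρ g)
    have hg0 : ρ g 0 0 ≠ 0 := fun h ↦ det_fin_two_ne_zero (ρ g) (by rw [h, h01]; ring)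
    have hnorm (i : Fin 2) : ‖ρ g⁻¹ i i‖ = ‖ρ g i i‖⁻¹ := by
      rw [map_inv, inv_apply_self_of_diagonal h01, norm_inv]
    refine this (g := g⁻¹) ?_ ?_ ?_ ?_
    · rw [map_inv, hinv01, h01, neg_zero, zero_div]
    · rw [map_inv, hinv10, h10, neg_zero, zero_div]
    · rw [hnorm, hnorm]
      exact inv_injective.ne hne
    · rw [hnorm, hnorm]
      exact inv_strictAnti₀ (norm_pos_iff.2 hg0) (hne.lt_of_le (not_lt.1 hlt))
  let : MulAction G {v : Fin 2 → L // v ≠ 0} := MulAction.compHom _ ρ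
  have hNS : NorthSouth g (axisFilter L 0) (axisFilter L 1) := fun U hU V hV ↦ by
    obtain ⟨N, hN⟩ := northSouth_axisFilter h01 h10 hlt U hU V hV
    refine ⟨N, fun n hn x hx ↦ ?_⟩
    have := hN n hn x hx
    rwa [← map_pow] at this
  exact .of_northSouth (h := h) hNS disjoint_axisFilter (disjoint_smul_axisFilter (hh _ _))
    (disjoint_smul_axisFilter (hh _ _)) (disjoint_smul_axisFilter (hh _ _))
    (disjoint_smul_axisFilter (hh _ _))

end AxisDynamics

/-! ### Embeddings of countable fields into normed fields -/

section Embeddings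

open scoped IntermediateField

theorem exists_extension_of_countable {R F L : Type*} [CommRing R] [IsDomain R] [Field F] [Field L]
    [IsAlgClosed L] [Countable R] [Countable F] [Uncountable L] (i : R →+* F) (j : R →+* L)
    (hi : Function.Injective i) (hj : Function.Injective j) : ∃ σ : F →+* L, σ.comp i = j := by
  let : Algebra R F := i.toAlgebra
  let : Algebra R L := j.toAlgebra
  have : FaithfulSMul R F := (faithfulSMul_iff_algebraMap_injective R F).2 hi
  have : FaithfulSMul R L := (faithfulSMul_iff_algebraMap_injective R L).2 hj
  obtain ⟨s, hs⟩ := exists_isTranscendenceBasis R F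
  obtain ⟨t, ht⟩ := exists_isTranscendenceBasis R L
  have hcard := IsAlgClosed.cardinal_eq_cardinal_transcendence_basis_of_aleph0_lt _ ht
    (Cardinal.mk_le_aleph0_iff.2 inferInstance) (Cardinal.aleph0_lt_mk_iff.2 inferInstance)
  rw [Cardinal.lift_inj] at hcard
  have : Infinite t :=
    Cardinal.infinite_iff.2 (hcard ▸ (Cardinal.aleph0_lt_mk_iff.2 inferInstance).le)
  obtain ⟨c, hc⟩ := exists_injective_nat s
  let b (x : s) : L := Infinite.natEmbedding t (c x)
  have hb : AlgebraicIndependent R b :=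
    ht.1.comp _ ((Infinite.natEmbedding t).injective.comp hc)
  let S := Algebra.adjoin R (Set.range ((↑) : s → F))
  let φ : S →ₐ[R] L := (aeval b).comp (hs.1.aevalEquiv.symm : S →ₐ[R] MvPolynomial s R)
  have hφ : Function.Injective φ :=
    Function.Injective.comp (g := aeval b) hb hs.1.aevalEquiv.symm.injective
  let : Algebra S L := φ.toRingHom.toAlgebra
  have : FaithfulSMul S L := (faithfulSMul_iff_algebraMap_injective _ L).2 hφ
  have := hs.isAlgebraic
  let σ : F →ₐ[S] L := IsAlgClosed.lift
  exact ⟨σ, RingHom.ext fun x ↦ (σ.commutes (algebraMap R _ x)).trans (φ.commutes x)⟩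

theorem norm_coeff_le_one_of_splits {L : Type*} [NormedField L] [IsUltrametricDist L]
    {f : Polynomial L} (hf : f.Splits) (hmonic : f.Monic) (hroots : ∀ x ∈ f.roots, ‖x‖ ≤ 1)
    (n : ℕ) : ‖f.coeff n‖ ≤ 1 := by
  let O := (NormedField.valuation (K := L)).integer
  have hmem : f ∈ Polynomial.lifts O.subtype :=
    hf.mem_lift_of_roots_mem_range hmonic O.subtype fun x hx ↦ ⟨⟨x, hroots x hx⟩, rfl⟩
  obtain ⟨a, ha⟩ := (Polynomial.lifts_iff_coeff_lifts _).1 hmem n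
  rw [← ha]
  exact a.2

theorem den_eq_one_of_forall_norm_le_one {q : ℚ}
    (h : ∀ (p : ℕ) [Fact p.Prime], ‖(q : ℚ_[p])‖ ≤ 1) : q.den = 1 := by
  by_contra hne
  obtain ⟨p, hp, hdvd⟩ := Nat.exists_prime_and_dvd hne
  have : Fact p.Prime := ⟨hp⟩
  have hunit := PadicInt.isUnit_iff.1 (PadicInt.isUnit_den q (h p))
  exact (PadicInt.norm_natCast_lt_one_iff.2 hdvd).ne hunit

theorem isIntegral_of_norm_le_one {F : Type*} [Field F] [CharZero F] {r : F} (hr : IsIntegral ℚ r)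
    (h : ∀ (p : ℕ) [Fact p.Prime] (x : PadicAlgCl p), Polynomial.aeval x (minpoly ℚ r) = 0 →
      ‖x‖ ≤ 1) : IsIntegral ℤ r := by
  have hmonic := minpoly.monic hr
  have hcoeff (p : ℕ) [Fact p.Prime] (n : ℕ) : ‖((minpoly ℚ r).coeff n : ℚ_[p])‖ ≤ 1 := by
    have hle := norm_coeff_le_one_of_splits
      (IsAlgClosed.splits ((minpoly ℚ r).map (algebraMap ℚ (PadicAlgCl p)))) (hmonic.map _)
      (fun x hx ↦ h p x (Polynomial.mem_aroots.1 hx).2) n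
    rwa [Polynomial.coeff_map, IsScalarTower.algebraMap_apply ℚ ℚ_[p] (PadicAlgCl p),
      PadicAlgCl.norm_extends] at hle
  have hlift : minpoly ℚ r ∈ Polynomial.lifts (Int.castRingHom ℚ) :=
    (Polynomial.lifts_iff_coeff_lifts _).2 fun n ↦
      ⟨_, (Rat.den_eq_one_iff _).1 (den_eq_one_of_forall_norm_le_one fun p _ ↦ hcoeff p n)⟩
  obtain ⟨q, hq, -, hqmonic⟩ := Polynomial.lifts_and_natDegree_eq_and_monic hlift hmonic
  refine ⟨q, hqmonic, ?_⟩
  have hroot := minpoly.aeval ℚ r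
  rwa [← hq, Polynomial.aeval_def, Polynomial.eval₂_map,
    RingHom.ext_int ((algebraMap ℚ F).comp _) (algebraMap ℤ F)] at hroot

variable {F : Type*} [Field F] [CharZero F]

theorem numberField_adjoin_simple {r : F} (hr : IsIntegral ℚ r) : NumberField ℚ⟮r⟯ := by
  have := IntermediateField.adjoin.finiteDimensional hr
  exact ⟨⟩

theorem isIntegral_gen {r : F} (hr : IsIntegral ℤ r) :
    IsIntegral ℤ (IntermediateField.AdjoinSimple.gen ℚ r) :=
  (isIntegral_algebraMap_iff (algebraMap ℚ⟮r⟯ F).injective).1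
    (by rwa [IntermediateField.AdjoinSimple.algebraMap_gen])

instance : Uncountable ℂ :=
  Cardinal.aleph0_lt_mk_iff.1 (Cardinal.mk_complex ▸ Cardinal.aleph0_lt_continuum)

theorem uncountable_padicAlgCl (p : ℕ) [Fact p.Prime] : Uncountable (PadicAlgCl p) :=
  have : Uncountable ℚ_[p] := Cardinal.aleph0_lt_mk_iff.1
    (Cardinal.aleph0_lt_continuum.trans_le (continuum_le_cardinal_of_nontriviallyNormedField _))
  (algebraMap ℚ_[p] (PadicAlgCl p)).injective.uncountable

section Countable

variable [Countable F] {r : F}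

theorem exists_ringHom_complex_of_transcendental (hr : Transcendental ℚ r) :
    ∃ σ : F →+* ℂ, ‖σ r‖ < 1 := by
  obtain ⟨z, hz, hz_ball⟩ := ((Algebraic.countable ℚ ℂ).dense_compl ℝ).exists_mem_open
    (Metric.isOpen_ball (x := (0 : ℂ)) (ε := 1)) ⟨0, by simp⟩
  have : Countable (Polynomial ℚ) := Cardinal.mk_le_aleph0_iff.1 (by simp)
  obtain ⟨σ, hσ⟩ := exists_extension_of_countable
    (Polynomial.aeval r : Polynomial ℚ →ₐ[ℚ] F).toRingHom
    (Polynomial.aeval z : Polynomial ℚ →ₐ[ℚ] ℂ).toRingHom (transcendental_iff_injective.1 hr)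
    (transcendental_iff_injective.1 hz)
  have hσr : σ r = z := by simpa using RingHom.congr_fun hσ Polynomial.X
  exact ⟨σ, by rwa [hσr, ← mem_ball_zero_iff]⟩

theorem exists_ringHom_complex_of_isIntegral (hr : IsIntegral ℤ r) (hfin : ¬ IsOfFinOrder r) :
    ∃ σ : F →+* ℂ, ‖σ r‖ ≠ 1 := by
  have := numberField_adjoin_simple hr.tower_top
  obtain ⟨φ, hφ⟩ : ∃ φ : ℚ⟮r⟯ →+* ℂ, ‖φ (IntermediateField.AdjoinSimple.gen ℚ r)‖ ≠ 1 := by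
    by_contra! hall
    obtain ⟨n, hn, hpow⟩ := NumberField.Embeddings.pow_eq_one_of_norm_eq_one _ ℂ
      (isIntegral_gen hr) hall
    exact hfin (isOfFinOrder_iff_pow_eq_one.2 ⟨n, hn, congrArg Subtype.val hpow⟩)
  obtain ⟨σ, hσ⟩ := exists_extension_of_countable (algebraMap ℚ⟮r⟯ F) φ
    (algebraMap ℚ⟮r⟯ F).injective φ.injective
  exact ⟨σ, by rwa [← hσ] at hφ⟩

theorem exists_ringHom_padicAlgCl_of_not_isIntegral (hr : IsIntegral ℚ r)
    (hint : ¬ IsIntegral ℤ r) :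
    ∃ (p : ℕ) (_ : Fact p.Prime) (σ : F →+* PadicAlgCl p), 1 < ‖σ r‖ := by
  obtain ⟨p, hp, x, hx, hnorm⟩ : ∃ (p : ℕ) (_ : Fact p.Prime) (x : PadicAlgCl p),
      Polynomial.aeval x (minpoly ℚ r) = 0 ∧ 1 < ‖x‖ := by
    by_contra! hle
    exact hint (isIntegral_of_norm_le_one hr fun p hp x hx ↦ hle p hp x hx)
  have := uncountable_padicAlgCl p
  have := numberField_adjoin_simple hr
  let φ := (IntermediateField.algHomAdjoinIntegralEquiv ℚ (K := PadicAlgCl p) hr).symm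
    ⟨x, Polynomial.mem_aroots.2 ⟨minpoly.ne_zero hr, hx⟩⟩
  have hφ : φ (IntermediateField.AdjoinSimple.gen ℚ r) = x :=
    IntermediateField.algHomAdjoinIntegralEquiv_symm_apply_gen ..
  obtain ⟨σ, hσ⟩ := exists_extension_of_countable (algebraMap ℚ⟮r⟯ F) φ.toRingHom
    (algebraMap ℚ⟮r⟯ F).injective φ.toRingHom.injective
  have hσr : σ r = x := (RingHom.congr_fun hσ _).trans hφ
  exact ⟨p, hp, σ, by rwa [hσr]⟩

theorem exists_ringHom_norm_ne_one (hr : ¬ IsOfFinOrder r) :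
    ∃ (L : Type) (_ : NormedField L) (σ : F →+* L), ‖σ r‖ ≠ 1 := by
  by_cases htr : Transcendental ℚ r
  · obtain ⟨σ, hσ⟩ := exists_ringHom_complex_of_transcendental htr
    exact ⟨ℂ, inferInstance, σ, hσ.ne⟩
  by_cases hint : IsIntegral ℤ r
  · exact ⟨ℂ, inferInstance, exists_ringHom_complex_of_isIntegral hint hr⟩
  obtain ⟨p, _, σ, hσ⟩ := exists_ringHom_padicAlgCl_of_not_isIntegral
    (not_not.1 htr : IsAlgebraic ℚ r).isIntegral hint
  exact ⟨PadicAlgCl p, inferInstance, σ, hσ.ne'⟩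

end Countable

end Embeddings

/-! ### Sine squares -/

section SineSquares

open scoped IntermediateField

theorem eq_zero_of_norm_lt_one {A : Type*} [Field A] [CharZero A] [Algebra.IsAlgebraic ℚ A] {α : A}
    (hα : IsIntegral ℤ α) (h : ∀ φ : A →+* ℂ, ‖φ α‖ < 1) : α = 0 := by
  by_contra hne
  have := numberField_adjoin_simple (Algebra.IsIntegral.isIntegral (R := ℚ) α)
  have hgen (φ : ℚ⟮α⟯ →+* ℂ) : ‖φ (IntermediateField.AdjoinSimple.gen ℚ α)‖ ≤ 1 := by
    let : Algebra ℚ⟮α⟯ ℂ := φ.toAlgebra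
    have : Algebra.IsAlgebraic ℚ⟮α⟯ A := Algebra.IsAlgebraic.tower_top (K := ℚ) _
    let ψ : A →ₐ[ℚ⟮α⟯] ℂ := IsAlgClosed.lift
    have hψ : ψ α = φ (IntermediateField.AdjoinSimple.gen ℚ α) :=
      ψ.commutes (IntermediateField.AdjoinSimple.gen ℚ α)
    exact (hψ ▸ h (ψ : A →+* ℂ)).le
  obtain ⟨n, hn, hpow⟩ := NumberField.Embeddings.pow_eq_one_of_norm_le_one _ ℂ
    (fun h0 ↦ hne (congrArg Subtype.val h0))
    (isIntegral_gen hα) hgen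
  have hfin : IsOfFinOrder α := isOfFinOrder_iff_pow_eq_one.2 ⟨n, hn, congrArg Subtype.val hpow⟩
  let ψ : A →ₐ[ℚ] ℂ := IsAlgClosed.lift
  exact (h ψ).ne ((ψ : A →* ℂ).isOfFinOrder hfin).norm_eq_one

section Field

variable {A : Type*} [Field A]

/-- The element `2 - ν - ν⁻¹`, which is `4 sin² (θ / 2)` for `ν = exp (i θ)`. -/
def sineSquare (ν : A) : A := 2 - ν - ν⁻¹

/-- The elements `2 - ν - ν⁻¹` with `ν` a root of unity: algebraic integers all of whose complex
conjugates are nonnegative real numbers. -/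
def IsSineSquare (w : A) : Prop := ∃ ν : A, IsOfFinOrder ν ∧ w = sineSquare ν

theorem sineSquare_eq_mul {ν : A} (hν : ν ≠ 0) : sineSquare ν = (1 - ν) * (1 - ν⁻¹) := by
  rw [sineSquare]
  field_simp
  ring

theorem sineSquare_ne_zero {ν : A} (hν : ν ≠ 0) (hν₁ : ν ≠ 1) : sineSquare ν ≠ 0 := by
  rw [sineSquare_eq_mul hν]
  exact mul_ne_zero (sub_ne_zero.2 hν₁.symm) (sub_ne_zero.2 fun h ↦ hν₁ (inv_eq_one.1 h.symm))

theorem map_sineSquare {B : Type*} [Field B] (φ : A →+* B) (ν : A) :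
    φ (sineSquare ν) = sineSquare (φ ν) := by
  simp only [sineSquare, map_sub, map_inv₀, map_ofNat]

theorem isIntegral_of_isOfFinOrder {ν : A} (hν : IsOfFinOrder ν) : IsIntegral ℤ ν := by
  obtain ⟨n, hn, hpow⟩ := isOfFinOrder_iff_pow_eq_one.1 hν
  exact IsIntegral.of_pow hn (hpow ▸ isIntegral_one)

theorem isOfFinOrder_inv₀ {ν : A} (hν : IsOfFinOrder ν) : IsOfFinOrder ν⁻¹ :=
  (invMonoidWithZeroHom : A →*₀ A).toMonoidHom.isOfFinOrder hν

theorem IsSineSquare.isIntegral {w : A} (hw : IsSineSquare w) : IsIntegral ℤ w := by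
  obtain ⟨ν, hν, rfl⟩ := hw
  have htwo : IsIntegral ℤ (2 : A) := by
    simpa using isIntegral_algebraMap (R := ℤ) (A := A) (x := 2)
  exact (htwo.sub (isIntegral_of_isOfFinOrder hν)).sub
    (isIntegral_of_isOfFinOrder (isOfFinOrder_inv₀ hν))

theorem IsSineSquare.exists_eq_ofReal {w : A} (hw : IsSineSquare w) (φ : A →+* ℂ) :
    ∃ x : ℝ, 0 ≤ x ∧ φ w = x := by
  obtain ⟨ν, hν, rfl⟩ := hw
  have hnorm : ‖φ ν‖ = 1 := ((φ : A →* ℂ).isOfFinOrder hν).norm_eq_one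
  refine ⟨2 - 2 * (φ ν).re, ?_, ?_⟩
  · have := Complex.re_le_norm (φ ν)
    linarith
  · rw [map_sineSquare, sineSquare, Complex.inv_eq_conj hnorm, sub_sub, Complex.add_conj]
    norm_cast

theorem prod_sineSquare_pow {r : A} {N : ℕ} (hr : IsPrimitiveRoot r (N + 1)) :
    ∏ j ∈ Finset.range N, sineSquare (r ^ (j + 1)) = (N + 1) ^ 2 :=
  calc ∏ j ∈ Finset.range N, sineSquare (r ^ (j + 1))
      = (∏ j ∈ Finset.range N, (1 - r ^ (j + 1))) * ∏ j ∈ Finset.range N, (1 - r⁻¹ ^ (j + 1)) := by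
        rw [← Finset.prod_mul_distrib]
        refine Finset.prod_congr rfl fun j _ ↦ ?_
        rw [sineSquare_eq_mul (pow_ne_zero _ (hr.ne_zero N.succ_ne_zero)), inv_pow]
    _ = (N + 1) ^ 2 := by
        rw [hr.prod_one_sub_pow_eq_order, hr.inv.prod_one_sub_pow_eq_order, pow_two]

theorem norm_map_mul_le_of_isSineSquare (φ : A →+* ℂ) {u v s : A} (huv : u + v = 1) (hs : s ≠ 0)
    (hu : IsSineSquare (u * s)) (hv : IsSineSquare (v * s)) : ‖φ (u * v)‖ ≤ 1 / 4 := by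
  obtain ⟨x, hx₀, hx⟩ := hu.exists_eq_ofReal φ
  obtain ⟨y, hy₀, hy⟩ := hv.exists_eq_ofReal φ
  have hsum : φ s = ((x + y : ℝ) : ℂ) := by
    rw [Complex.ofReal_add, ← hx, ← hy, ← map_add, ← add_mul, huv, one_mul]
  have hne : x + y ≠ 0 := fun h ↦ (map_ne_zero φ).2 hs (by rw [hsum, h, Complex.ofReal_zero])
  have huv : φ (u * v) = ((x * y / (x + y) ^ 2 : ℝ) : ℂ) := by
    rw [Complex.ofReal_div, eq_div_iff (by exact_mod_cast pow_ne_zero 2 hne), Complex.ofReal_mul,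
      Complex.ofReal_pow, ← hsum, ← hx, ← hy, ← map_mul, ← map_pow, ← map_mul]
    ring_nf
  rw [huv, Complex.norm_real, Real.norm_of_nonneg (by positivity), div_le_iff₀ (by positivity)]
  nlinarith [sq_nonneg (x - y)]

end Field

theorem succ_pow_four_lt_four_pow {N : ℕ} (hN : 6 ≤ N) : (N + 1) ^ 4 < 4 ^ N := by
  induction N, hN using Nat.le_induction with
  | base => norm_num
  | succ N hN ih =>
    have hstep : (N + 1 + 1) ^ 4 ≤ 4 * (N + 1) ^ 4 := by
      have hlt : 7 * (N + 2) ≤ 8 * (N + 1) := by lia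
      have hpow := Nat.pow_le_pow_left hlt 4
      rw [mul_pow, mul_pow] at hpow
      lia
    rw [pow_succ 4]
    lia

-- The norm of `(u * v) ^ N * (N + 1) ^ 4`, an algebraic integer, is at most `(N + 1) ^ 4 / 4 ^ N`
-- in every complex embedding.
theorem mul_eq_zero_of_isSineSquare_of_isAlgebraic {A : Type*} [Field A] [CharZero A]
    [Algebra.IsAlgebraic ℚ A] {N : ℕ} (hN : 6 ≤ N) {r : A} (hr : IsPrimitiveRoot r (N + 1))
    {u v : A} (huv : u + v = 1) (hu : ∀ j, IsSineSquare (u * sineSquare (r ^ j)))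
    (hv : ∀ j, IsSineSquare (v * sineSquare (r ^ j))) : u * v = 0 := by
  have hprod : ∏ j ∈ Finset.range N,
      (u * sineSquare (r ^ (j + 1)) * (v * sineSquare (r ^ (j + 1)))) =
        (u * v) ^ N * (N + 1) ^ 4 := by
    simp only [Finset.prod_mul_distrib, Finset.prod_const, Finset.card_range,
      prod_sineSquare_pow hr]
    ring
  have hint : IsIntegral ℤ ((u * v) ^ N * (N + 1) ^ 4) := by
    rw [← hprod]
    exact IsIntegral.prod _ fun j _ ↦ (hu _).isIntegral.mul (hv _).isIntegral
  have hlt (φ : A →+* ℂ) : ‖φ ((u * v) ^ N * (N + 1) ^ 4)‖ < 1 := by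
    have hs : sineSquare (r ^ 1) ≠ 0 := by
      rw [pow_one]
      exact sineSquare_ne_zero (hr.ne_zero N.succ_ne_zero) (hr.ne_one (by lia))
    have hquarter := norm_map_mul_le_of_isSineSquare φ huv hs (hu 1) (hv 1)
    have hnorm : ‖φ (((N : A) + 1) ^ 4)‖ = ((N : ℝ) + 1) ^ 4 := by
      rw [map_pow, norm_pow, map_add, map_one, map_natCast, ← Nat.cast_add_one,
        Complex.norm_natCast, Nat.cast_add_one]
    have hfour : ((N : ℝ) + 1) ^ 4 < 4 ^ N := by exact_mod_cast succ_pow_four_lt_four_pow hN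
    calc ‖φ ((u * v) ^ N * (N + 1) ^ 4)‖ = ‖φ (u * v)‖ ^ N * ((N : ℝ) + 1) ^ 4 := by
          rw [map_mul, norm_mul, hnorm, map_pow, norm_pow]
      _ ≤ (1 / 4) ^ N * ((N : ℝ) + 1) ^ 4 := by gcongr
      _ < (1 / 4) ^ N * 4 ^ N := by gcongr
      _ = 1 := by rw [← mul_pow, one_div_mul_cancel four_ne_zero, one_pow]
  have hN₀ : ((N : A) + 1) ^ 4 ≠ 0 := pow_ne_zero _ (Nat.cast_add_one_ne_zero N)
  exact eq_zero_of_pow_eq_zero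
    ((mul_eq_zero.1 (eq_zero_of_norm_lt_one hint hlt)).resolve_right hN₀)

section CharZero

variable {K : Type*} [Field K] [CharZero K]

theorem mem_algebraicClosure_of_isOfFinOrder {ν : K} (hν : IsOfFinOrder ν) :
    ν ∈ algebraicClosure ℚ K :=
  mem_algebraicClosure_iff.2 (isIntegral_of_isOfFinOrder hν).tower_top.isAlgebraic

theorem IsSineSquare.exists_coe_eq {w : K} (hw : IsSineSquare w) :
    ∃ w' : algebraicClosure ℚ K, IsSineSquare w' ∧ w' = w := by
  obtain ⟨ν, hν, rfl⟩ := hw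
  let ν' : algebraicClosure ℚ K := ⟨ν, mem_algebraicClosure_of_isOfFinOrder hν⟩
  have hν' : IsOfFinOrder ν' := by
    obtain ⟨n, hn, hpow⟩ := isOfFinOrder_iff_pow_eq_one.1 hν
    exact isOfFinOrder_iff_pow_eq_one.2 ⟨n, hn, Subtype.ext hpow⟩
  exact ⟨sineSquare ν', ⟨ν', hν', rfl⟩, map_sineSquare (algebraMap _ K) ν'⟩

theorem mul_eq_zero_of_isSineSquare {N : ℕ} (hN : 6 ≤ N) {r : K} (hr : IsPrimitiveRoot r (N + 1))
    {u v : K} (huv : u + v = 1) (hu : ∀ j, IsSineSquare (u * sineSquare (r ^ j)))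
    (hv : ∀ j, IsSineSquare (v * sineSquare (r ^ j))) : u * v = 0 := by
  obtain ⟨r, rfl⟩ : ∃ r' : algebraicClosure ℚ K, algebraMap _ K r' = r :=
    ⟨⟨r, mem_algebraicClosure_of_isOfFinOrder (hr.isOfFinOrder N.succ_ne_zero)⟩, rfl⟩
  have hinj := (algebraMap (algebraicClosure ℚ K) K).injective
  have hs : sineSquare r ≠ 0 := by
    replace hr := hr.of_map_of_injective hinj
    exact sineSquare_ne_zero (hr.ne_zero N.succ_ne_zero) (hr.ne_one (by lia))
  obtain ⟨u, rfl⟩ : ∃ u' : algebraicClosure ℚ K, algebraMap _ K u' = u := by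
    obtain ⟨w, -, hw⟩ := (hu 1).exists_coe_eq
    refine ⟨w / sineSquare r, ?_⟩
    rw [map_div₀, div_eq_iff ((map_ne_zero _).2 hs), map_sineSquare]
    rwa [pow_one] at hw
  obtain rfl : algebraMap _ K (1 - u) = v := by
    rw [map_sub, map_one, ← huv, add_sub_cancel_left]
  have hcoe {a : algebraicClosure ℚ K} {j : ℕ}
      (ha : IsSineSquare (algebraMap _ K a * sineSquare (algebraMap _ K r ^ j))) :
      IsSineSquare (a * sineSquare (r ^ j)) := by
    obtain ⟨w, hw, hw_coe⟩ := ha.exists_coe_eq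
    rw [← map_pow, ← map_sineSquare, ← map_mul] at hw_coe
    rwa [← hinj hw_coe]
  have : Algebra.IsAlgebraic ℚ (algebraicClosure ℚ K) := algebraicClosure.isAlgebraic ℚ K
  rw [← map_mul, mul_eq_zero_of_isSineSquare_of_isAlgebraic hN (hr.of_map_of_injective hinj)
    (add_sub_cancel u 1) (fun j ↦ hcoe (hu j)) fun j ↦ hcoe (hv j), map_zero]

end CharZero

end SineSquares

/-! ### Eigenvalue ratios of infinite order -/

section Descent

variable {Γ K : Type*} [Group Γ] [Field K]

theorem generalLinearGroup_map_injective {F : Type*} [Field F] (σ : F →+* K) :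
    Function.Injective (Matrix.GeneralLinearGroup.map (n := Fin 2) σ) := fun _ _ h ↦
  Units.ext (Matrix.map_injective σ.injective (congrArg Units.val h))

theorem mem_range_map_of_forall_mem {F : Subfield K} {A : GL (Fin 2) K} (h : ∀ i j, A i j ∈ F) :
    A ∈ (Matrix.GeneralLinearGroup.map (n := Fin 2) F.subtype).range := by
  let M : Matrix (Fin 2) (Fin 2) F := fun i j ↦ ⟨A i j, h i j⟩
  have hM : M.map F.subtype = A := rfl
  have hdet : M.det ≠ 0 := fun hzero ↦ A.det.ne_zero <| by
    rw [Matrix.GeneralLinearGroup.val_det_apply, ← hM, ← RingHom.mapMatrix_apply,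
      ← RingHom.map_det, hzero, map_zero]
  exact ⟨Matrix.GeneralLinearGroup.mkOfDetNeZero M hdet, Units.ext hM⟩

theorem countable_subfieldClosure {s : Set K} (hs : s.Countable) :
    Countable (Subfield.closure s) :=
  Cardinal.mk_le_aleph0_iff.1 ((Subfield.cardinalMk_closure_le_max s).trans
    (max_le (Cardinal.mk_le_aleph0_iff.2 hs.to_subtype) le_rfl))

theorem exists_countable_subfield_restriction (ρ : Γ →* GL (Fin 2) K) {s : Set Γ}
    (hs : s.Countable) : ∃ (F : Subfield K) (G : Subgroup Γ) (f : G →* GL (Fin 2) F),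
      Countable F ∧ s ⊆ G ∧ ∀ x i j, (f x i j : K) = ρ x i j := by
  let F := Subfield.closure (⋃ g ∈ s, Set.range fun p : Fin 2 × Fin 2 ↦ ρ g p.1 p.2)
  let ι := Matrix.GeneralLinearGroup.map (n := Fin 2) F.subtype
  have hι : Function.Injective ι := generalLinearGroup_map_injective _
  refine ⟨F, ι.range.comap ρ, (MonoidHom.ofInjective hι).symm.toMonoidHom.comp
    (ρ.subgroupComap ι.range), countable_subfieldClosure (hs.biUnion fun _ _ ↦
      Set.countable_range _), fun g hg ↦ ?_, fun x i j ↦ ?_⟩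
  · exact mem_range_map_of_forall_mem fun i j ↦
      Subfield.subset_closure (Set.mem_biUnion hg ⟨(i, j), rfl⟩)
  · exact congrArg (fun A : GL (Fin 2) K ↦ A i j)
      (MonoidHom.apply_ofInjective_symm hι (ρ.subgroupComap ι.range x))

theorem containsNonabelianFree_of_not_isOfFinOrder [CharZero K] (ρ : Γ →* GL (Fin 2) K) {g h : Γ}
    (h01 : ρ g 0 1 = 0) (h10 : ρ g 1 0 = 0) (hr : ¬ IsOfFinOrder (ρ g 0 0 / ρ g 1 1))
    (hh : ∀ i j, ρ h i j ≠ 0) : ContainsNonabelianFree Γ := by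
  obtain ⟨F, G, f, _, hG, hf⟩ :=
    exists_countable_subfield_restriction ρ (s := {g, h}) (Set.toFinite _).countable
  obtain ⟨g, rfl⟩ : ∃ g' : G, (g' : Γ) = g := ⟨⟨g, hG (by simp)⟩, rfl⟩
  obtain ⟨h, rfl⟩ : ∃ h' : G, (h' : Γ) = h := ⟨⟨h, hG (by simp)⟩, rfl⟩
  simp only [← hf, ne_eq, ZeroMemClass.coe_eq_zero] at h01 h10 hr hh
  obtain ⟨L, _, σ, hσ⟩ := exists_ringHom_norm_ne_one (r := f g 0 0 / f g 1 1) fun hfin ↦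
    hr (by simpa using (F.subtype : F →* K).isOfFinOrder hfin)
  refine (containsNonabelianFree_of_diagonal ((Matrix.GeneralLinearGroup.map σ).comp f)
    (g := g) (h := h) ?_ ?_ ?_ ?_).map G.subtype G.subtype_injective
  · simp [h01]
  · simp [h10]
  · have hdet := det_fin_two_ne_zero (f g)
    rw [h01, zero_mul, sub_zero] at hdet
    rw [map_div₀, norm_div, ne_eq, div_eq_one_iff_eq (by simpa using right_ne_zero_of_mul hdet)]
      at hσ
    simpa using hσ
  · simpa using hh

end Descent

/-! ### Eigenvalues and conjugation -/

section Eigenvalues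

variable {Γ K : Type*} [Group Γ] [Field K]

/-- The numbers `x` and `y` are the eigenvalues of `A`, counted with multiplicity. -/
def IsEigenpair (A : GL (Fin 2) K) (x y : K) : Prop :=
  x + y = A 0 0 + A 1 1 ∧ x * y = A 0 0 * A 1 1 - A 0 1 * A 1 0

theorem isEigenpair_iff {A : GL (Fin 2) K} {x y : K} :
    IsEigenpair A x y ↔ x + y = A.val.trace ∧ x * y = A.val.det := by
  rw [Matrix.trace_fin_two, Matrix.det_fin_two]
  rfl

theorem IsEigenpair.ne_zero {A : GL (Fin 2) K} {x y : K} (h : IsEigenpair A x y) :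
    x ≠ 0 ∧ y ≠ 0 :=
  mul_ne_zero_iff.1 (h.2 ▸ det_fin_two_ne_zero A)

theorem exists_isEigenpair [IsAlgClosed K] (A : GL (Fin 2) K) : ∃ x y, IsEigenpair A x y := by
  obtain ⟨x, hx⟩ := IsAlgClosed.exists_root A.val.charpoly
    (by rw [Matrix.charpoly_degree_eq_dim]; simp)
  rw [Polynomial.IsRoot, Matrix.charpoly_fin_two] at hx
  refine ⟨x, A.val.trace - x, isEigenpair_iff.2 ⟨add_sub_cancel _ _, ?_⟩⟩
  simp only [Polynomial.eval_add, Polynomial.eval_sub, Polynomial.eval_pow, Polynomial.eval_X,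
    Polynomial.eval_mul, Polynomial.eval_C] at hx
  linear_combination -hx

theorem isEigenpair_conj {A P : GL (Fin 2) K} {x y : K} :
    IsEigenpair (P⁻¹ * A * P) x y ↔ IsEigenpair A x y := by
  simp only [isEigenpair_iff, Units.val_mul, Matrix.trace_units_conj', Matrix.det_units_conj']

theorem exists_apply_zero_eq {v : Fin 2 → K} (hv : v ≠ 0) :
    ∃ P : GL (Fin 2) K, ∀ i, P i 0 = v i := by
  by_cases h : v 0 = 0
  · have hv₁ : v 1 ≠ 0 := fun h₁ ↦ hv (funext (Fin.forall_fin_two.2 ⟨h, h₁⟩))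
    exact ⟨.mkOfDetNeZero !![v 0, 1; v 1, 0] (by simpa [Matrix.det_fin_two_of] using hv₁),
      Fin.forall_fin_two.2 ⟨rfl, rfl⟩⟩
  · exact ⟨.mkOfDetNeZero !![v 0, 0; v 1, 1] (by simpa [Matrix.det_fin_two_of] using h),
      Fin.forall_fin_two.2 ⟨rfl, rfl⟩⟩

theorem IsEigenpair.exists_conj_upperTriangular {A : GL (Fin 2) K} {x y : K}
    (h : IsEigenpair A x y) : ∃ P : GL (Fin 2) K,
      (P⁻¹ * A * P) 0 0 = x ∧ (P⁻¹ * A * P) 1 0 = 0 ∧ (P⁻¹ * A * P) 1 1 = y := by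
  obtain ⟨v, hv, hAv⟩ : ∃ v ≠ 0, (A.val - Matrix.scalar (Fin 2) x).mulVec v = 0 := by
    refine Matrix.exists_mulVec_eq_zero_iff.2 ?_
    simp only [Matrix.det_fin_two, Matrix.sub_apply, Matrix.scalar_apply, Matrix.diagonal_apply,
      if_true, Fin.zero_eq_one_iff, Fin.one_eq_zero_iff, OfNat.ofNat_ne_one, if_false, sub_zero]
    linear_combination x * h.1 - h.2
  obtain ⟨P, hP⟩ := exists_apply_zero_eq hv
  have hcol (i : Fin 2) : (P⁻¹ * A * P) i 0 = (1 : GL (Fin 2) K) i 0 * x := by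
    have hAP (j : Fin 2) : (A * P) j 0 = P j 0 * x := by
      rw [Matrix.sub_mulVec, sub_eq_zero, Matrix.scalar_apply] at hAv
      have hAvj := congrFun hAv j
      rw [Matrix.mulVec_diagonal, Matrix.mulVec_eq_sum, Fin.sum_univ_two] at hAvj
      simpa [mul_apply_fin_two, hP, mul_comm] using hAvj
    rw [mul_assoc, mul_apply_fin_two, hAP, hAP, ← mul_assoc, ← mul_assoc, ← add_mul,
      ← mul_apply_fin_two, inv_mul_cancel]
  have h00 : (P⁻¹ * A * P) 0 0 = x := by rw [hcol]; simp
  refine ⟨P, h00, by rw [hcol]; simp, ?_⟩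
  have htrace := ((isEigenpair_conj (P := P)).2 h).1
  rw [h00] at htrace
  exact (add_left_cancel htrace).symm

theorem IsEigenpair.exists_conj_diagonal {A : GL (Fin 2) K} {x y : K} (h : IsEigenpair A x y)
    (hxy : x ≠ y) : ∃ P : GL (Fin 2) K, (P⁻¹ * A * P) 0 0 = x ∧ (P⁻¹ * A * P) 0 1 = 0 ∧
      (P⁻¹ * A * P) 1 0 = 0 ∧ (P⁻¹ * A * P) 1 1 = y := by
  obtain ⟨P, h00, h10, h11⟩ := h.exists_conj_upperTriangular
  set T := P⁻¹ * A * P with hT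
  have hyx : y - x ≠ 0 := sub_ne_zero.2 hxy.symm
  let U := Matrix.GeneralLinearGroup.upperRightHom (T 0 1 / (y - x))
  have hconj : (P * U)⁻¹ * A * (P * U) = U⁻¹ * T * U := by rw [hT]; group
  refine ⟨P * U, ?_⟩
  rw [hconj]
  obtain ⟨i00, i01, i10, i11⟩ := inv_apply_fin_two U
  simp only [mul_apply_fin_two, i00, i01, i10, i11, h00, h10, h11]
  simp [U]
  field_simp
  ring

/-- The conjugate of a representation by a matrix. -/
def conjHom (ρ : Γ →* GL (Fin 2) K) (P : GL (Fin 2) K) : Γ →* GL (Fin 2) K :=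
  (MulAut.conj P⁻¹).toMonoidHom.comp ρ

theorem conjHom_apply (ρ : Γ →* GL (Fin 2) K) (P : GL (Fin 2) K) (g : Γ) :
    conjHom ρ P g = P⁻¹ * ρ g * P := by
  simp [conjHom]

theorem conjHom_injective {ρ : Γ →* GL (Fin 2) K} (hρ : Function.Injective ρ) (P : GL (Fin 2) K) :
    Function.Injective (conjHom ρ P) :=
  (MulAut.conj P⁻¹).injective.comp hρ

theorem isEigenpair_conjHom {ρ : Γ →* GL (Fin 2) K} {P : GL (Fin 2) K} {g : Γ} {x y : K} :
    IsEigenpair (conjHom ρ P g) x y ↔ IsEigenpair (ρ g) x y := by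
  rw [conjHom_apply, isEigenpair_conj]

theorem sq_trace_eq_four_mul_det [IsAlgClosed K] {A : GL (Fin 2) K}
    (h : ∀ x y, IsEigenpair A x y → x = y) :
    (A 0 0 + A 1 1) ^ 2 = 4 * (A 0 0 * A 1 1 - A 0 1 * A 1 0) := by
  obtain ⟨x, y, hxy⟩ := exists_isEigenpair A
  obtain rfl := h x y hxy
  rw [← hxy.1, ← hxy.2]
  ring

-- With `q A = (tr A) ^ 2 - 4 * det A` and `U = !![x, b; 0, x]`, the second difference
-- `q (U ^ 2 * A) - 2 * x ^ 2 * q (U * A) + x ^ 4 * q A` is `2 * (x * b * A 1 0) ^ 2`.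
theorem apply_one_zero_eq_zero_of_forall_eigenvalues_eq [CharZero K] [IsAlgClosed K]
    (ρ : Γ →* GL (Fin 2) K) (h : ∀ g x y, IsEigenpair (ρ g) x y → x = y) {u : Γ} {x : K}
    (h00 : ρ u 0 0 = x) (h01 : ρ u 0 1 ≠ 0) (h10 : ρ u 1 0 = 0) (h11 : ρ u 1 1 = x) (g : Γ) :
    ρ g 1 0 = 0 := by
  have hx : x ≠ 0 := by
    rintro rfl
    exact det_fin_two_ne_zero (ρ u) (by rw [h00, h10, zero_mul, mul_zero, sub_zero])
  have hq₀ := sq_trace_eq_four_mul_det (h g)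
  have hq₁ := sq_trace_eq_four_mul_det (h (u * g))
  have hq₂ := sq_trace_eq_four_mul_det (h (u * (u * g)))
  simp only [map_mul, mul_apply_fin_two, h00, h10, h11] at hq₁ hq₂
  have hsq : 2 * (x * ρ u 0 1 * ρ g 1 0) ^ 2 = 0 := by
    linear_combination hq₂ - 2 * x ^ 2 * hq₁ + x ^ 4 * hq₀
  simpa [hx, h01] using hsq

theorem isSolvable_of_forall_eigenvalues_eq [CharZero K] [IsAlgClosed K] (ρ : Γ →* GL (Fin 2) K)
    (hρ : Function.Injective ρ) (h : ∀ g x y, IsEigenpair (ρ g) x y → x = y) :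
    Group.IsSolvable Γ := by
  by_cases hlower : ∀ g, ρ g 1 0 = 0
  · exact isSolvable_of_apply_eq_zero ρ hρ one_ne_zero hlower
  push Not at hlower
  obtain ⟨u, hu⟩ := hlower
  obtain ⟨x, y, hxy⟩ := exists_isEigenpair (ρ u)
  obtain rfl := h u x y hxy
  obtain ⟨P, h00, h10, h11⟩ := hxy.exists_conj_upperTriangular
  have hpar : (ρ u).val.IsParabolic := by
    refine ⟨?_, ?_⟩
    · rintro ⟨c, hc⟩
      exact hu (by rw [← hc]; simp)
    · rw [Matrix.discr_fin_two, Matrix.trace_fin_two, Matrix.det_fin_two,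
        sq_trace_eq_four_mul_det (h u), sub_self]
  have h01 : (P⁻¹ * ρ u * P) 0 1 ≠ 0 :=
    ((Matrix.isParabolic_iff_of_upperTriangular h10).1 (by
      rwa [Units.val_mul, Units.val_mul, Matrix.coe_units_inv, Matrix.isParabolic_conj'_iff])).2
  rw [← conjHom_apply] at h00 h01 h10 h11
  exact isSolvable_of_apply_eq_zero (conjHom ρ P) (conjHom_injective hρ P) one_ne_zero
    (apply_one_zero_eq_zero_of_forall_eigenvalues_eq (conjHom ρ P)
      (fun k x y hk ↦ h k x y (isEigenpair_conjHom.1 hk)) h00 h01 h10 h11)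

end Eigenvalues

/-! ### Eigenvalue ratios of large finite order -/

section NormalizedEigenvalues

variable {Γ K : Type*} [Group Γ] [Field K]

theorem div_sq_eq_div {x y p : K} (hp : p ≠ 0) (hprod : x * y = p ^ 2) : (x / p) ^ 2 = x / y := by
  have hy : y ≠ 0 := right_ne_zero_of_mul (hprod ▸ pow_ne_zero 2 hp)
  rw [div_pow, div_eq_div_iff (pow_ne_zero 2 hp) hy, ← hprod]
  ring

theorem inv_div_eq_div {x y p : K} (hp : p ≠ 0) (hprod : x * y = p ^ 2) : (x / p)⁻¹ = y / p := by
  have hx : x ≠ 0 := left_ne_zero_of_mul (hprod ▸ pow_ne_zero 2 hp)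
  rw [inv_div, div_eq_div_iff hx hp]
  linear_combination -hprod

theorem isSineSquare_of_trace_eq [IsAlgClosed K] {A : GL (Fin 2) K}
    (hA : ∀ x y, IsEigenpair A x y → IsOfFinOrder (x / y)) {p w : K} (hp : p ≠ 0)
    (htrace : A 0 0 + A 1 1 = p * (2 - w)) (hdet : A.val.det = p ^ 2) : IsSineSquare w := by
  obtain ⟨x, y, hxy⟩ := exists_isEigenpair A
  have hprod : x * y = p ^ 2 := (isEigenpair_iff.1 hxy).2.trans hdet
  refine ⟨x / p, .of_pow (n := 2) (div_sq_eq_div hp hprod ▸ hA x y hxy) two_ne_zero, ?_⟩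
  rw [sineSquare, inv_div_eq_div hp hprod]
  field_simp
  linear_combination hxy.1 + htrace

theorem trace_mul_mul_mul_inv_of_diagonal {G H : GL (Fin 2) K} (h01 : G 0 1 = 0)
    (h10 : G 1 0 = 0) : (G * H * G * H⁻¹) 0 0 + (G * H * G * H⁻¹) 1 1 = G 0 0 * G 1 1 *
      (2 - H 0 0 * H 1 1 / (H 0 0 * H 1 1 - H 0 1 * H 1 0) * sineSquare (G 0 0 / G 1 1)) := by
  have hG := det_fin_two_ne_zero G
  have hH := det_fin_two_ne_zero H
  rw [h01, zero_mul, sub_zero, mul_ne_zero_iff] at hG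
  obtain ⟨i00, i01, i10, i11⟩ := inv_apply_fin_two H
  simp only [mul_apply_fin_two, h01, h10, i00, i01, i10, i11, sineSquare]
  obtain ⟨hG₀, hG₁⟩ := hG
  generalize hΔ : H 0 0 * H 1 1 - H 0 1 * H 1 0 = Δ at hH
  field_simp
  rw [← hΔ]
  ring

theorem trace_mul_mul_inv_mul_inv_of_diagonal {G H : GL (Fin 2) K} (h01 : G 0 1 = 0)
    (h10 : G 1 0 = 0) : (G * H * G⁻¹ * H⁻¹) 0 0 + (G * H * G⁻¹ * H⁻¹) 1 1 =
      2 - -(H 0 1 * H 1 0) / (H 0 0 * H 1 1 - H 0 1 * H 1 0) * sineSquare (G 0 0 / G 1 1) := by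
  have hG := det_fin_two_ne_zero G
  have hH := det_fin_two_ne_zero H
  obtain ⟨i00, i01, i10, i11⟩ := inv_apply_fin_two H
  obtain ⟨j00, j01, j10, j11⟩ := inv_apply_fin_two G
  rw [h01, zero_mul, sub_zero] at j00 j01 j10 j11 hG
  obtain ⟨hG₀, hG₁⟩ := mul_ne_zero_iff.1 hG
  simp only [mul_apply_fin_two, h01, h10, i00, i01, i10, i11, j00, j01, j10, j11, sineSquare]
  generalize hΔ : H 0 0 * H 1 1 - H 0 1 * H 1 0 = Δ at hH
  field_simp
  rw [← hΔ]
  ring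

theorem det_mul_mul_mul_inv {n R : Type*} [Fintype n] [DecidableEq n] [CommRing R]
    (G H : GL n R) : (G * H * G * H⁻¹).det = G.det ^ 2 := by
  rw [map_mul, map_mul, map_mul, map_inv, mul_right_comm, mul_inv_cancel_right, sq]

-- After normalization the traces of `g^j h g^j h⁻¹` and `g^j h g^{-j} h⁻¹` are `2 - u s` and
-- `2 - v s`, where `u + v = 1` and `s` is the sine square of `r^j`; hence `u s` and `v s` are sine
-- squares as well.
theorem exists_apply_eq_zero_of_isPrimitiveRoot [CharZero K] [IsAlgClosed K]
    (ρ : Γ →* GL (Fin 2) K) {g : Γ} (h01 : ρ g 0 1 = 0) (h10 : ρ g 1 0 = 0) {N : ℕ} (hN : 6 ≤ N)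
    (hr : IsPrimitiveRoot (ρ g 0 0 / ρ g 1 1) (N + 1))
    (hfin : ∀ k x y, IsEigenpair (ρ k) x y → IsOfFinOrder (x / y)) (h : Γ) :
    ∃ i j, ρ h i j = 0 := by
  have hpow (j : ℕ) : (ρ g ^ j) 0 1 = 0 ∧ (ρ g ^ j) 1 0 = 0 ∧
      (ρ g ^ j) 0 0 / (ρ g ^ j) 1 1 = (ρ g 0 0 / ρ g 1 1) ^ j := by
    obtain ⟨p00, p01, p10, p11⟩ := pow_apply_of_diagonal h01 h10 j
    exact ⟨p01, p10, by rw [p00, p11, div_pow]⟩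
  have hdet := det_fin_two_ne_zero (ρ h)
  set Δ := ρ h 0 0 * ρ h 1 1 - ρ h 0 1 * ρ h 1 0
  have huv : ρ h 0 0 * ρ h 1 1 / Δ + -(ρ h 0 1 * ρ h 1 0) / Δ = 1 := by
    rw [← add_div, ← sub_eq_add_neg, div_self hdet]
  have hzero := mul_eq_zero_of_isSineSquare hN hr huv (fun j ↦ ?_) fun j ↦ ?_
  · simp only [Fin.exists_fin_two]
    simp only [div_eq_zero_iff, mul_eq_zero, neg_eq_zero, hdet, or_false] at hzero
    tauto
  all_goals obtain ⟨p01, p10, hratio⟩ := hpow j; rw [← hratio]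
  · have hA := hfin (g ^ j * h * g ^ j * h⁻¹)
    simp only [map_mul, map_inv, map_pow] at hA
    refine isSineSquare_of_trace_eq hA ?_ (trace_mul_mul_mul_inv_of_diagonal p01 p10) ?_
    · simpa [p01] using det_fin_two_ne_zero (ρ g ^ j)
    · have := congrArg Units.val (det_mul_mul_mul_inv (ρ g ^ j) (ρ h))
      rwa [Units.val_pow_eq_pow_val, Matrix.GeneralLinearGroup.val_det_apply,
        Matrix.GeneralLinearGroup.val_det_apply, (ρ g ^ j).val.det_fin_two, p01, zero_mul,
        sub_zero] at this
  · have hA := hfin (g ^ j * h * (g ^ j)⁻¹ * h⁻¹)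
    simp only [map_mul, map_inv, map_pow] at hA
    refine isSineSquare_of_trace_eq hA one_ne_zero
      ((trace_mul_mul_inv_mul_inv_of_diagonal p01 p10).trans (one_mul _).symm) ?_
    rw [← Matrix.GeneralLinearGroup.val_det_apply, ← commutatorElement_def, map_commutatorElement,
      commutatorElement_eq_one_iff_mul_comm.2 (mul_comm _ _), Units.val_one, one_pow]

end NormalizedEigenvalues

/-! ### Eigenvalue ratios of bounded order -/

section BoundedOrder

variable {Γ K : Type*} [Group Γ] [Field K]

theorem apply_self_eq_of_trace_eq {A B D : Matrix (Fin 2) (Fin 2) K} (h01 : D 0 1 = 0)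
    (h10 : D 1 0 = 0) (hne : D 0 0 ≠ D 1 1) (htr : A.trace = B.trace)
    (hDtr : (D * A).trace = (D * B).trace) : A 0 0 = B 0 0 ∧ A 1 1 = B 1 1 := by
  simp only [Matrix.trace_fin_two, Matrix.mul_apply, Fin.sum_univ_two, h01, h10, zero_mul,
    add_zero, zero_add] at htr hDtr
  constructor <;> refine mul_left_cancel₀ (sub_ne_zero.2 hne) ?_
  · linear_combination hDtr - D 1 1 * htr
  · linear_combination D 0 0 * htr - hDtr

theorem eq_of_trace_eq {A B D H : Matrix (Fin 2) (Fin 2) K} (h01 : D 0 1 = 0) (h10 : D 1 0 = 0)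
    (hne : D 0 0 ≠ D 1 1) (hH01 : H 0 1 ≠ 0) (hH10 : H 1 0 ≠ 0) (htr : A.trace = B.trace)
    (hDtr : (D * A).trace = (D * B).trace) (hHtr : (A * H).trace = (B * H).trace)
    (hDHtr : (D * (A * H)).trace = (D * (B * H)).trace) : A = B := by
  obtain ⟨h₀, h₁⟩ := apply_self_eq_of_trace_eq h01 h10 hne htr hDtr
  obtain ⟨hH₀, hH₁⟩ := apply_self_eq_of_trace_eq h01 h10 hne hHtr hDHtr
  simp only [Matrix.mul_apply, Fin.sum_univ_two, h₀, h₁, add_right_inj, add_left_inj] at hH₀ hH₁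
  ext i j
  fin_cases i <;> fin_cases j
  exacts [h₀, mul_right_cancel₀ hH10 hH₀, mul_right_cancel₀ hH01 hH₁, h₁]

theorem finite_of_forall_trace_mem {T : Subgroup (Matrix.SpecialLinearGroup (Fin 2) K)} {Z : Set K}
    (hZ : Z.Finite) (htr : ∀ A ∈ T, A.val.trace ∈ Z)
    {D H : Matrix.SpecialLinearGroup (Fin 2) K} (hD : D ∈ T) (hH : H ∈ T) (h01 : D 0 1 = 0)
    (h10 : D 1 0 = 0) (hne : D 0 0 ≠ D 1 1) (hH01 : H 0 1 ≠ 0) (hH10 : H 1 0 ≠ 0) :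
    (T : Set (Matrix.SpecialLinearGroup (Fin 2) K)).Finite := by
  refine Set.Finite.of_injOn (t := (Z ×ˢ Z) ×ˢ (Z ×ˢ Z)) (f := fun A ↦
    ((A.val.trace, (D * A).val.trace), ((A * H).val.trace, (D * (A * H)).val.trace)))
    (fun A hA ↦ ⟨⟨htr _ hA, htr _ (T.mul_mem hD hA)⟩, htr _ (T.mul_mem hA hH),
      htr _ (T.mul_mem hD (T.mul_mem hA hH))⟩) (fun A _ B _ hAB ↦ ?_)
    ((hZ.prod hZ).prod (hZ.prod hZ))
  simp only [Prod.mk.injEq, Matrix.SpecialLinearGroup.coe_mul] at hAB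
  obtain ⟨⟨htrA, hDtr⟩, hHtr, hDHtr⟩ := hAB
  exact Subtype.ext (eq_of_trace_eq h01 h10 hne hH01 hH10 htrA hDtr hHtr hDHtr)

theorem toPGL_surjective [IsAlgClosed K] :
    Function.Surjective (Matrix.SpecialLinearGroup.toPGL (n := Fin 2) (R := K)) := by
  have hsqrt (r : Kˣ) : ∃ s : Kˣ, s ^ Fintype.card (Fin 2) = r := by
    obtain ⟨s, hs⟩ := IsAlgClosed.exists_pow_nat_eq (r : K) (n := Fintype.card (Fin 2)) (by simp)
    have hs₀ : s ≠ 0 := fun h ↦ r.ne_zero (by simp [← hs, h])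
    exact ⟨.mk0 s hs₀, Units.ext hs⟩
  intro A
  obtain ⟨B, rfl⟩ := Matrix.ProjectiveSpecialLinearGroup.toPGL_surj_of_roots hsqrt A
  induction B using QuotientGroup.induction_on with | H B => exact ⟨B, rfl⟩

theorem apply_eq_mul_of_mk_eq_mk {A B : GL (Fin 2) K}
    (h : Matrix.ProjGenLinGroup.mk A = Matrix.ProjGenLinGroup.mk B) :
    ∃ u : K, u ≠ 0 ∧ ∀ i j, B i j = A i j * u := by
  obtain ⟨u, rfl⟩ := Matrix.ProjGenLinGroup.mk_eq_mk_iff.1 h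
  refine ⟨u, u.ne_zero, fun i j ↦ ?_⟩
  simp [Matrix.GeneralLinearGroup.coe_scalar, Matrix.mul_diagonal]

theorem trace_mem_of_mk_eq_mk [IsAlgClosed K] {A : GL (Fin 2) K} {B : ℕ}
    (hA : ∀ x y, IsEigenpair A x y → (x / y) ^ B = 1) {S : Matrix.SpecialLinearGroup (Fin 2) K}
    (h : Matrix.ProjGenLinGroup.mk A = Matrix.SpecialLinearGroup.toPGL S) :
    S.val.trace ∈ (fun z ↦ z + z⁻¹) '' {z : K | z ^ (2 * B) = 1} := by
  obtain ⟨u, hu, hSA⟩ := apply_eq_mul_of_mk_eq_mk h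
  simp only [Matrix.SpecialLinearGroup.coe_GL_coe_matrix] at hSA
  obtain ⟨x, y, hxy⟩ := exists_isEigenpair A
  have hprod : x * u * (y * u) = 1 := by
    have := S.det_coe
    rw [Matrix.det_fin_two, hSA, hSA, hSA, hSA] at this
    linear_combination u ^ 2 * hxy.2 + this
  have hratio : (x * u) ^ 2 = x / y := by
    rw [← mul_div_mul_right x y hu, ← div_sq_eq_div one_ne_zero (hprod.trans (one_pow 2).symm),
      div_one]
  refine ⟨x * u, ?_, ?_⟩
  · rw [Set.mem_ofPred, pow_mul, hratio, hA x y hxy]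
  · simp only
    rw [inv_eq_of_mul_eq_one_right hprod, Matrix.trace_fin_two, hSA, hSA, ← add_mul, hxy.1, add_mul]

theorem finite_range_of_forall_div_pow_eq_one [IsAlgClosed K] (ρ : Γ →* GL (Fin 2) K) {g h : Γ}
    (h01 : ρ g 0 1 = 0) (h10 : ρ g 1 0 = 0) (hne : ρ g 0 0 ≠ ρ g 1 1) (hh01 : ρ h 0 1 ≠ 0)
    (hh10 : ρ h 1 0 ≠ 0) {B : ℕ} (hB : 0 < B)
    (hpow : ∀ k x y, IsEigenpair (ρ k) x y → (x / y) ^ B = 1) :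
    Finite (Matrix.ProjGenLinGroup.mk.comp ρ).range := by
  let T := (Matrix.ProjGenLinGroup.mk.comp ρ).range.comap Matrix.SpecialLinearGroup.toPGL
  have hroots : {z : K | z ^ (2 * B) = 1}.Finite :=
    (Polynomial.nthRootsFinset (2 * B) (1 : K)).finite_toSet.subset fun z hz ↦
      (Polynomial.mem_nthRootsFinset (by lia) 1).2 hz
  have htr (S) : S ∈ T → S.val.trace ∈ (fun z ↦ z + z⁻¹) '' {z : K | z ^ (2 * B) = 1} := by
    rintro ⟨k, hk⟩
    exact trace_mem_of_mk_eq_mk (hpow k) hk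
  obtain ⟨D, hD⟩ := toPGL_surjective (Matrix.ProjGenLinGroup.mk (ρ g))
  obtain ⟨H, hH⟩ := toPGL_surjective (Matrix.ProjGenLinGroup.mk (ρ h))
  obtain ⟨u, hu, hDg⟩ := apply_eq_mul_of_mk_eq_mk hD.symm
  obtain ⟨v, hv, hHh⟩ := apply_eq_mul_of_mk_eq_mk hH.symm
  simp only [Matrix.SpecialLinearGroup.coe_GL_coe_matrix] at hDg hHh
  have hT : (T : Set (Matrix.SpecialLinearGroup (Fin 2) K)).Finite :=
    finite_of_forall_trace_mem (hroots.image _) htr ⟨g, hD.symm⟩ ⟨h, hH.symm⟩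
      (by simp [hDg, h01]) (by simp [hDg, h10]) (by simpa [hDg, hu] using hne)
      (by simp [hHh, hh01, hv]) (by simp [hHh, hh10, hv])
  rw [← Subgroup.map_comap_eq_self_of_surjective toPGL_surjective
    (Matrix.ProjGenLinGroup.mk.comp ρ).range]
  exact (hT.image _).to_subtype

theorem isVirtuallySolvable_of_forall_div_pow_eq_one [IsAlgClosed K] (ρ : Γ →* GL (Fin 2) K)
    (hρ : Function.Injective ρ) {g : Γ} (h01 : ρ g 0 1 = 0) (h10 : ρ g 1 0 = 0)
    (hne : ρ g 0 0 ≠ ρ g 1 1) {B : ℕ} (hB : 0 < B)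
    (hpow : ∀ k x y, IsEigenpair (ρ k) x y → (x / y) ^ B = 1) : IsVirtuallySolvable Γ := by
  by_cases hzero : ∀ h, ∃ i j, ρ h i j = 0
  · exact isVirtuallySolvable_of_forall_exists_apply_eq_zero ρ hρ hzero
  push Not at hzero
  obtain ⟨h, hh⟩ := hzero
  have := finite_range_of_forall_div_pow_eq_one ρ h01 h10 hne (hh 0 1) (hh 1 0) hB hpow
  have : Group.IsSolvable (Matrix.ProjGenLinGroup.mk (n := Fin 2) (R := K)).ker :=
    Group.isSolvable_of_comm fun A B ↦ Subtype.ext <|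
      Subgroup.mem_center_iff.1 (Matrix.ProjGenLinGroup.ker_mk.le B.2) A
  exact ⟨_, Subgroup.finiteIndex_ker _, isSolvable_ker_comp hρ Matrix.ProjGenLinGroup.mk⟩

end BoundedOrder

/-! ### The Tits alternative for the general linear group -/

section GeneralLinearGroup

variable {Γ K : Type*} [Group Γ] [Field K]

theorem titsAlternative_of_not_isOfFinOrder [CharZero K] (ρ : Γ →* GL (Fin 2) K)
    (hρ : Function.Injective ρ) {g : Γ} {x y : K} (hg : IsEigenpair (ρ g) x y)
    (hxy : ¬ IsOfFinOrder (x / y)) : TitsAlternative Γ := by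
  obtain ⟨P, h00, h01, h10, h11⟩ := hg.exists_conj_diagonal fun h ↦
    hxy (by rw [h, div_self hg.ne_zero.2]; exact .one)
  rw [← conjHom_apply] at h00 h01 h10 h11
  by_cases hzero : ∀ h, ∃ i j, conjHom ρ P h i j = 0
  · exact .inr (isVirtuallySolvable_of_forall_exists_apply_eq_zero _ (conjHom_injective hρ P) hzero)
  · push Not at hzero
    obtain ⟨h, hh⟩ := hzero
    exact .inl (containsNonabelianFree_of_not_isOfFinOrder _ h01 h10 (by rwa [h00, h11]) hh)

theorem isVirtuallySolvable_of_six_lt_orderOf [CharZero K] [IsAlgClosed K] (ρ : Γ →* GL (Fin 2) K)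
    (hρ : Function.Injective ρ) (hfin : ∀ k x y, IsEigenpair (ρ k) x y → IsOfFinOrder (x / y))
    {g : Γ} {x y : K} (hg : IsEigenpair (ρ g) x y) (hxy : 6 < orderOf (x / y)) :
    IsVirtuallySolvable Γ := by
  obtain ⟨P, h00, h01, h10, h11⟩ := hg.exists_conj_diagonal fun h ↦ by
    rw [h, div_self hg.ne_zero.2, orderOf_one] at hxy
    lia
  rw [← conjHom_apply] at h00 h01 h10 h11
  obtain ⟨N, hN⟩ := Nat.exists_eq_succ_of_ne_zero (n := orderOf (x / y)) (by lia)
  have hroot : IsPrimitiveRoot (conjHom ρ P g 0 0 / conjHom ρ P g 1 1) (N + 1) := by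
    rw [h00, h11, ← Nat.succ_eq_add_one, ← hN]
    exact .orderOf _
  exact isVirtuallySolvable_of_forall_exists_apply_eq_zero _ (conjHom_injective hρ P)
    (exists_apply_eq_zero_of_isPrimitiveRoot _ h01 h10 (by lia) hroot
      fun k x y hk ↦ hfin k x y (isEigenpair_conjHom.1 hk))

theorem isVirtuallySolvable_of_orderOf_le [CharZero K] [IsAlgClosed K] (ρ : Γ →* GL (Fin 2) K)
    (hρ : Function.Injective ρ) {N : ℕ}
    (hfin : ∀ k x y, IsEigenpair (ρ k) x y → IsOfFinOrder (x / y))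
    (hN : ∀ k x y, IsEigenpair (ρ k) x y → orderOf (x / y) ≤ N) : IsVirtuallySolvable Γ := by
  by_cases heq : ∀ g x y, IsEigenpair (ρ g) x y → x = y
  · have := isSolvable_of_forall_eigenvalues_eq ρ hρ heq
    exact .of_isSolvable
  push Not at heq
  obtain ⟨g, x, y, hg, hxy⟩ := heq
  obtain ⟨P, h00, h01, h10, h11⟩ := hg.exists_conj_diagonal hxy
  rw [← conjHom_apply] at h00 h01 h10 h11
  refine isVirtuallySolvable_of_forall_div_pow_eq_one _ (conjHom_injective hρ P) h01 h10
    (by rwa [h00, h11]) N.factorial_pos fun k x y hk ↦ ?_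
  rw [isEigenpair_conjHom] at hk
  exact orderOf_dvd_iff_pow_eq_one.1 (Nat.dvd_factorial (hfin k x y hk).orderOf_pos (hN k x y hk))

theorem titsAlternative_of_injective [CharZero K] [IsAlgClosed K] (ρ : Γ →* GL (Fin 2) K)
    (hρ : Function.Injective ρ) : TitsAlternative Γ := by
  by_cases hfin : ∀ k x y, IsEigenpair (ρ k) x y → IsOfFinOrder (x / y)
  · by_cases hbdd : ∀ k x y, IsEigenpair (ρ k) x y → orderOf (x / y) ≤ 6
    · exact .inr (isVirtuallySolvable_of_orderOf_le ρ hρ hfin hbdd)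
    · push Not at hbdd
      obtain ⟨g, x, y, hg, hxy⟩ := hbdd
      exact .inr (isVirtuallySolvable_of_six_lt_orderOf ρ hρ hfin hg hxy)
  · push Not at hfin
    obtain ⟨g, x, y, hg, hxy⟩ := hfin
    exact titsAlternative_of_not_isOfFinOrder ρ hρ hg hxy

theorem strongTitsAlternative_generalLinearGroup (k : Type*) [Field k] [CharZero k] :
    StrongTitsAlternative (GL (Fin 2) k) := fun H ↦
  have := charZero_of_injective_algebraMap (algebraMap k (AlgebraicClosure k)).injective
  titsAlternative_of_injective
    ((Matrix.GeneralLinearGroup.map (algebraMap k (AlgebraicClosure k))).comp H.subtype)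
    ((generalLinearGroup_map_injective _).comp H.subtype_injective)

end GeneralLinearGroup

end TitsAlternative

/-- The group `Aut(k²)` of `k`-algebra automorphisms of `k[x,y]`, for `k` of characteristic
zero, satisfies the strong Tits alternative. -/
theorem autK2_strongTitsAlternative (k : Type*) [Field k] [CharZero k] :
    StrongTitsAlternative (MvPolynomial (Fin 2) k ≃ₐ[k] MvPolynomial (Fin 2) k) :=
  TitsAlternative.strongTitsAlternative_planeAut
    (TitsAlternative.strongTitsAlternative_generalLinearGroup k)
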